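/- There exists a constant β ∈ (0,1), independent of the polynomial degree, such that for every integer k ≥ 4 and every q ∈ Q_I(T̂) there exists v ∈ V_I(T̂) with div v = q and ‖v‖_{L²(T̂)} + |v|_{H¹(T̂)} ≤ β⁻¹ ‖q‖_{L²(T̂)}. -/

import Mathlib

/-!
The right inverse of the divergence is built one edge at a time, every constant being independent
of the polynomial degree `k`. Throughout, `T` is the open triangle, `L2T` the squared `L²(T)` norm
with values in `ℝ≥0∞`, and `Sol k q C u1 u2` says that `(u1, u2)` has degree at most `k`, divergence
`q`, and first derivatives of squared norm at most `C * L2T q`.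

**One edge** (`exists_sol_one_edge`). Let `θ r = 6 r (1 - r)` and, for a weight `κ`, let
`UU κ q (x, y) = ∫_0^y ∫_0^1 κ r * q (x + r σ, y - σ) dr dσ`, a polynomial of degree `k` that
vanishes for `y = 0`. Since `∂_y (UU κ q) = (∫ κ) q + ∂_x (UU (r κ) q)`, the field
`(-UU (r θ) q, UU θ q)` has divergence `q`. After an integration by parts in `r`, `∂_x (UU κ q)` is a
singular integral with the mean free kernel `κ'`; its `L²` bound follows from Parseval's identity in
`x` and Young's inequality in `y`, because the Fourier multiplier divided by the scale `s` is
integrable on `0 < s ≤ 1` uniformly in the frequency (`lintegral_mult_le`).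

**Adding an edge.** Two fields with the same divergence differ by the curl of a polynomial `φ`
(`Sol.potential`). Suppose `u` already vanishes on the other edges, on which `ω` vanishes doubly, and
`w` vanishes on the edge `y = 0`. If `Φ` vanishes doubly on the former edges and has the same
gradient as `φ` on the latter, then `u - curl Φ` vanishes on all of them. Such a polynomial is
`Φ = ω * Lf a b`, where `Lf a b` lifts the traces `a`, `b` of `φ / ω` and of its normal derivative by
averages over edge segments of length comparable with `y`. That `a` and `b` are polynomials, as
`deg Φ ≤ k + 1` requires, depends on `q` vanishing at the vertices; for the last edge one also needs
`φ (1, 0) = 0`, which is the zero mean of `q` by the divergence theorem (`flux_eq`).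

**Stability** (`lift_bound`, `sol_correct`). The second derivatives of `Φ` at `z` are bounded by
averages over segments, each pointing into the triangle from the edge `y = 0` and contained in the set
`cone z`, of the second derivatives of `φ` together with its first derivatives and values weighted by
inverse powers of the distance to the vertices. Hardy's inequality at a vertex
(`hardy_O`, `hardy_A`) reduces the values to the first derivatives, and these are the components of
`u - w`, for which Hardy's inequality on lines (`hardy_x`, `hardy_y`, `hardy_z`) applies because `u`
and `w` each vanish on an edge through the vertex.

The affine symmetries of the triangle (`Sol.of_swap`, `Sol.of_flip`) move the edges, which gives
`exists_sol_two_edges` and `exists_sol_three_edges`. The `L²` norm of the field itself is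
controlled by `poincare`.
-/

open MeasureTheory Matrix

noncomputable section

/-- The reference triangle `T̂ = {(x,y) : 0 ≤ x, 0 ≤ y, x + y ≤ 1}`. -/
def Tref : Set (ℝ × ℝ) := {z : ℝ × ℝ | 0 ≤ z.1 ∧ 0 ≤ z.2 ∧ z.1 + z.2 ≤ 1}

/-- Real polynomial functions on `ℝ²` of total degree at most `k`. -/
def PolyFun (k : ℕ) : Set ((ℝ × ℝ) → ℝ) :=
  {f | ∃ P : MvPolynomial (Fin 2) ℝ, P.totalDegree ≤ k ∧
    ∀ z : ℝ × ℝ, f z = MvPolynomial.eval ![z.1, z.2] P}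

/-- `curl φ = (∂φ/∂y, −∂φ/∂x)`. -/
def pcurl (φ : (ℝ × ℝ) → ℝ) : (ℝ × ℝ) → ℝ × ℝ :=
  fun z => (fderiv ℝ φ z (0, 1), -(fderiv ℝ φ z (1, 0)))

/-- `div v = ∂v₁/∂x + ∂v₂/∂y`. -/
def pdiv (v : (ℝ × ℝ) → ℝ × ℝ) : (ℝ × ℝ) → ℝ :=
  fun z => fderiv ℝ (fun w => (v w).1) z (1, 0) + fderiv ℝ (fun w => (v w).2) z (0, 1)

/-- `Σ_I(T̂)`: polynomials of degree at most `k+1` with vanishing value and gradient on `∂T̂`. -/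
def SigmaI (k : ℕ) : Set ((ℝ × ℝ) → ℝ) :=
  {φ | φ ∈ PolyFun (k + 1) ∧ ∀ z ∈ frontier Tref, φ z = 0 ∧ fderiv ℝ φ z = 0}

/-- `V_I(T̂)`: pairs of polynomials of degree at most `k` vanishing on `∂T̂`. -/
def VI (k : ℕ) : Set ((ℝ × ℝ) → ℝ × ℝ) :=
  {v | (fun z => (v z).1) ∈ PolyFun k ∧ (fun z => (v z).2) ∈ PolyFun k ∧
    ∀ z ∈ frontier Tref, v z = 0}

/-- `Q_I(T̂)`: polynomials of degree at most `k−1` with vanishing mean over `T̂` and vanishing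
value at the three vertices. -/
def QI (k : ℕ) : Set ((ℝ × ℝ) → ℝ) :=
  {q | q ∈ PolyFun (k - 1) ∧ (∫ z in Tref, q z) = 0 ∧
    q (0, 0) = 0 ∧ q (1, 0) = 0 ∧ q (0, 1) = 0}
/-- Squared Euclidean norm of the gradient of a scalar function at a point. -/
def gradNormSq (f : (ℝ × ℝ) → ℝ) (z : ℝ × ℝ) : ℝ :=
  (fderiv ℝ f z (1, 0)) ^ 2 + (fderiv ℝ f z (0, 1)) ^ 2

namespace Tri

/-! ### Polynomial functions and directional derivatives -/

/-- The derivative of `F` in the direction `v`. -/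
def D (v : ℝ × ℝ) (F : ℝ × ℝ → ℝ) : ℝ × ℝ → ℝ := fun z => fderiv ℝ F z v

/-- The first coordinate direction. -/
abbrev e1 : ℝ × ℝ := (1, 0)
/-- The second coordinate direction. -/
abbrev e2 : ℝ × ℝ := (0, 1)

/-- `F` is a polynomial function of total degree at most `n`. -/
def IsPoly (n : ℕ) (F : ℝ × ℝ → ℝ) : Prop := F ∈ PolyFun n

theorem IsPoly.mono {m n : ℕ} (h : m ≤ n) {F : ℝ × ℝ → ℝ} (hF : IsPoly m F) :
    IsPoly n F := by
  obtain ⟨P, hP, hE⟩ := hF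
  exact ⟨P, hP.trans h, hE⟩

theorem IsPoly.const (c : ℝ) (n : ℕ) : IsPoly n (fun _ => c) :=
  ⟨MvPolynomial.C c, by simp, by simp⟩

theorem IsPoly.fst : IsPoly 1 (fun z : ℝ × ℝ => z.1) :=
  ⟨MvPolynomial.X 0, by simp, by simp⟩

theorem IsPoly.snd : IsPoly 1 (fun z : ℝ × ℝ => z.2) :=
  ⟨MvPolynomial.X 1, by simp, by simp⟩

theorem IsPoly.add {n : ℕ} {F G : ℝ × ℝ → ℝ} (hF : IsPoly n F) (hG : IsPoly n G) :
    IsPoly n (fun z => F z + G z) := by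
  obtain ⟨P, hP, hE⟩ := hF
  obtain ⟨P', hP', hE'⟩ := hG
  exact ⟨P + P', (MvPolynomial.totalDegree_add _ _).trans (max_le hP hP'), by simp [hE, hE']⟩

theorem IsPoly.mul {m n : ℕ} {F G : ℝ × ℝ → ℝ} (hF : IsPoly m F) (hG : IsPoly n G) :
    IsPoly (m + n) (fun z => F z * G z) := by
  obtain ⟨P, hP, hE⟩ := hF
  obtain ⟨P', hP', hE'⟩ := hG
  exact ⟨P * P', (MvPolynomial.totalDegree_mul _ _).trans (add_le_add hP hP'), by simp [hE, hE']⟩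

theorem IsPoly.smul {n : ℕ} {F : ℝ × ℝ → ℝ} (c : ℝ) (hF : IsPoly n F) :
    IsPoly n (fun z => c * F z) := by
  simpa using (IsPoly.const c 0).mul hF

theorem IsPoly.neg {n : ℕ} {F : ℝ × ℝ → ℝ} (hF : IsPoly n F) :
    IsPoly n (fun z => - F z) := by
  simpa using hF.smul (-1)

theorem IsPoly.sub {n : ℕ} {F G : ℝ × ℝ → ℝ} (hF : IsPoly n F) (hG : IsPoly n G) :
    IsPoly n (fun z => F z - G z) := by
  simpa [sub_eq_add_neg] using hF.add hG.neg

theorem IsPoly.pow {n : ℕ} {F : ℝ × ℝ → ℝ} (hF : IsPoly n F) (i : ℕ) :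
    IsPoly (i * n) (fun z => F z ^ i) := by
  induction i with
  | zero => simpa using IsPoly.const 1 0
  | succ i ih =>
    have := ih.mul hF
    simpa [pow_succ, Nat.succ_mul] using this

theorem IsPoly.sum {ι : Type*} {n : ℕ} (s : Finset ι) {F : ι → ℝ × ℝ → ℝ}
    (hF : ∀ i ∈ s, IsPoly n (F i)) : IsPoly n (fun z => ∑ i ∈ s, F i z) := by
  classical
  induction s using Finset.induction_on with
  | empty => simpa using IsPoly.const 0 n
  | insert a s ha ih =>
    simp only [Finset.sum_insert ha]
    exact (hF a (by simp)).add (ih fun i hi => hF i (by simp [hi]))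

/-- Expansion of a polynomial function in the monomials `x ^ i * y ^ j`. -/
theorem IsPoly.exists_sum {n : ℕ} {F : ℝ × ℝ → ℝ} (hF : IsPoly n F) :
    ∃ (s : Finset (Fin 2 →₀ ℕ)) (c : (Fin 2 →₀ ℕ) → ℝ), (∀ d ∈ s, d 0 + d 1 ≤ n) ∧
      F = fun z => ∑ d ∈ s, c d * (z.1 ^ d 0 * z.2 ^ d 1) := by
  obtain ⟨P, hP, hE⟩ := hF
  refine ⟨P.support, fun d => P.coeff d, fun d hd => ?_, ?_⟩
  · have := (MvPolynomial.le_totalDegree hd).trans hP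
    simpa [Finsupp.sum_fintype, Fin.sum_univ_two] using this
  · funext z
    rw [hE, MvPolynomial.eval_eq']
    simp [Fin.prod_univ_two]

theorem IsPoly.contDiff {n : ℕ} {F : ℝ × ℝ → ℝ} (hF : IsPoly n F) {m : WithTop ℕ∞} :
    ContDiff ℝ m F := by
  obtain ⟨s, c, -, rfl⟩ := hF.exists_sum
  fun_prop

theorem IsPoly.comp {n : ℕ} {F a b : ℝ × ℝ → ℝ} (hF : IsPoly n F) (ha : IsPoly 1 a)
    (hb : IsPoly 1 b) : IsPoly n (fun z => F (a z, b z)) := by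
  obtain ⟨s, c, hs, rfl⟩ := hF.exists_sum
  refine IsPoly.sum s fun d hd => IsPoly.smul _ ?_
  refine IsPoly.mono (hs d hd) ?_
  simpa using (ha.pow (d 0)).mul (hb.pow (d 1))

theorem hasFDerivAt_monomial (i j : ℕ) (z : ℝ × ℝ) :
    HasFDerivAt (fun z : ℝ × ℝ => z.1 ^ i * z.2 ^ j)
      ((z.1 ^ i * (j * z.2 ^ (j - 1))) • ContinuousLinearMap.snd ℝ ℝ ℝ +
        (z.2 ^ j * (i * z.1 ^ (i - 1))) • ContinuousLinearMap.fst ℝ ℝ ℝ) z := by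
  have h1 : HasFDerivAt (fun z : ℝ × ℝ => z.1 ^ i)
      ((i * z.1 ^ (i - 1)) • ContinuousLinearMap.fst ℝ ℝ ℝ) z :=
    (hasDerivAt_pow i z.1).comp_hasFDerivAt z hasFDerivAt_fst
  have h2 : HasFDerivAt (fun z : ℝ × ℝ => z.2 ^ j)
      ((j * z.2 ^ (j - 1)) • ContinuousLinearMap.snd ℝ ℝ ℝ) z :=
    (hasDerivAt_pow j z.2).comp_hasFDerivAt z hasFDerivAt_snd
  exact (h1.fun_mul h2).congr_fderiv (by simp only [smul_smul])

theorem IsPoly.D {n : ℕ} {F : ℝ × ℝ → ℝ} (hF : IsPoly n F) (v : ℝ × ℝ) :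
    IsPoly (n - 1) (D v F) := by
  obtain ⟨s, c, hs, rfl⟩ := hF.exists_sum
  have key : Tri.D v (fun z : ℝ × ℝ => ∑ d ∈ s, c d * (z.1 ^ d 0 * z.2 ^ d 1)) =
      fun z => ∑ d ∈ s, c d * ((z.1 ^ d 0 * (d 1 * z.2 ^ (d 1 - 1))) * v.2 +
        (z.2 ^ d 1 * (d 0 * z.1 ^ (d 0 - 1))) * v.1) := by
    funext z
    have := HasFDerivAt.fun_sum (u := s) (x := z) (A := fun d (z : ℝ × ℝ) => c d * (z.1 ^ d 0 * z.2 ^ d 1))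
      fun d _ => (hasFDerivAt_monomial (d 0) (d 1) z).const_mul (c d)
    simp only [Tri.D, this.fderiv]
    simp [mul_add]
  rw [key]
  refine IsPoly.sum s fun d hd => IsPoly.smul _ (IsPoly.add ?_ ?_)
  · rcases Nat.eq_zero_or_pos (d 1) with h | h
    · simpa [h] using IsPoly.const 0 (n - 1)
    · have := ((fst.pow (d 0)).mul (snd.pow (d 1 - 1))).smul (d 1 * v.2)
      refine IsPoly.mono (?_ : d 0 * 1 + (d 1 - 1) * 1 ≤ n - 1) ?_
      · have := hs d hd; omega
      · convert this using 2; ring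
  · rcases Nat.eq_zero_or_pos (d 0) with h | h
    · simpa [h] using IsPoly.const 0 (n - 1)
    · have := ((fst.pow (d 0 - 1)).mul (snd.pow (d 1))).smul (d 0 * v.1)
      refine IsPoly.mono (?_ : (d 0 - 1) * 1 + (d 1) * 1 ≤ n - 1) ?_
      · have := hs d hd; omega
      · convert this using 2; ring

/-! ### Polynomial families depending on a parameter, and traces -/

/-- A family of polynomial functions of degree at most `n` whose coefficients depend continuously
on a parameter. -/
inductive PolyFam {Ω : Type} [TopologicalSpace Ω] (n : ℕ) : (Ω → ℝ × ℝ → ℝ) → Prop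
  | monom (c : Ω → ℝ) (hc : Continuous c) (i j : ℕ) (h : i + j ≤ n) :
      PolyFam n (fun p z => c p * (z.1 ^ i * z.2 ^ j))
  | add (G H : Ω → ℝ × ℝ → ℝ) : PolyFam n G → PolyFam n H → PolyFam n (fun p z => G p z + H p z)

namespace PolyFam

variable {Ω : Type} [TopologicalSpace Ω] {m n : ℕ} {G H : Ω → ℝ × ℝ → ℝ}

theorem mono (h : m ≤ n) (hG : PolyFam m G) : PolyFam n G := by
  induction hG with
  | monom c hc i j hij => exact .monom c hc i j (hij.trans h)
  | add G H _ _ ihG ihH => exact .add G H ihG ihH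

theorem coef {c : Ω → ℝ} (hc : Continuous c) : PolyFam n (fun p _ => c p) := by
  simpa using PolyFam.monom (n := n) c hc 0 0 (by simp)

theorem fst : PolyFam (Ω := Ω) 1 (fun _ z => z.1) := by
  simpa using PolyFam.monom (Ω := Ω) (n := 1) (fun _ => 1) continuous_const 1 0 (by simp)

theorem snd : PolyFam (Ω := Ω) 1 (fun _ z => z.2) := by
  simpa using PolyFam.monom (Ω := Ω) (n := 1) (fun _ => 1) continuous_const 0 1 (by simp)

theorem mul (hG : PolyFam m G) (hH : PolyFam n H) : PolyFam (m + n) (fun p z => G p z * H p z) := by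
  induction hG with
  | monom c hc i j hij =>
    induction hH with
    | monom d hd i' j' hij' =>
      convert PolyFam.monom (n := m + n) (fun p => c p * d p) (hc.mul hd) (i + i') (j + j')
        (by omega) using 3
      ring
    | add G H _ _ ihG ihH =>
      convert PolyFam.add _ _ ihG ihH using 3
      ring
  | add G H _ _ ihG ihH =>
    convert PolyFam.add _ _ ihG ihH using 3
    ring

theorem coef_mul {c : Ω → ℝ} (hc : Continuous c) (hG : PolyFam n G) :
    PolyFam n (fun p z => c p * G p z) := by
  simpa using (PolyFam.coef (n := 0) hc).mul hG

theorem pow (hG : PolyFam n G) (i : ℕ) : PolyFam (i * n) (fun p z => G p z ^ i) := by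
  induction i with
  | zero => simpa using PolyFam.coef (n := 0) (Ω := Ω) (c := fun _ => 1) continuous_const
  | succ i ih =>
    have := ih.mul hG
    simpa [pow_succ, Nat.succ_mul] using this

theorem sum {ι : Type*} (s : Finset ι) {F : ι → Ω → ℝ × ℝ → ℝ}
    (hF : ∀ i ∈ s, PolyFam n (F i)) : PolyFam n (fun p z => ∑ i ∈ s, F i p z) := by
  classical
  induction s using Finset.induction_on with
  | empty => simpa using PolyFam.coef (n := n) (Ω := Ω) (c := fun _ => 0) continuous_const
  | insert a s ha ih =>
    simp only [Finset.sum_insert ha]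
    exact .add _ _ (hF a (by simp)) (ih fun i hi => hF i (by simp [hi]))

theorem affine {a b c : Ω → ℝ} (ha : Continuous a) (hb : Continuous b) (hc : Continuous c) :
    PolyFam 1 (fun p z => a p + b p * z.1 + c p * z.2) :=
  .add _ _ (.add _ _ (coef ha) (coef_mul hb fst)) (coef_mul hc snd)

theorem comp {F : ℝ × ℝ → ℝ} (hF : IsPoly n F) (hG : PolyFam 1 G) (hH : PolyFam 1 H) :
    PolyFam n (fun p z => F (G p z, H p z)) := by
  obtain ⟨s, c, hs, rfl⟩ := hF.exists_sum
  refine PolyFam.sum s fun d hd => PolyFam.coef_mul continuous_const ?_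
  refine PolyFam.mono (hs d hd) ?_
  simpa using (hG.pow (d 0)).mul (hH.pow (d 1))

theorem isPoly (hG : PolyFam n G) (p : Ω) : IsPoly n (G p) := by
  induction hG with
  | monom c hc i j h =>
    have := ((IsPoly.fst.pow i).mul (IsPoly.snd.pow j)).smul (c p)
    exact this.mono (by omega)
  | add G H _ _ ihG ihH => exact ihG.add ihH

theorem of_isPoly {F : ℝ × ℝ → ℝ} (hF : IsPoly n F) : PolyFam (Ω := Ω) n (fun _ => F) :=
  comp hF fst snd

theorem continuous (hG : PolyFam n G) : Continuous (fun w : Ω × (ℝ × ℝ) => G w.1 w.2) := by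
  induction hG with
  | monom c hc i j h => fun_prop
  | add G H _ _ ihG ihH => exact ihG.add ihH

theorem continuous_left (hG : PolyFam n G) (z : ℝ × ℝ) : Continuous (fun p => G p z) :=
  hG.continuous.comp (by fun_prop : Continuous fun p : Ω => (p, z))

theorem D (hG : PolyFam n G) (v : ℝ × ℝ) : PolyFam (n - 1) (fun p => D v (G p)) := by
  induction hG with
  | monom c hc i j h =>
    have : (fun p => Tri.D v (fun z : ℝ × ℝ => c p * (z.1 ^ i * z.2 ^ j))) =
      fun p z => (c p * (j * v.2)) * (z.1 ^ i * z.2 ^ (j - 1)) +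
        (c p * (i * v.1)) * (z.1 ^ (i - 1) * z.2 ^ j) := by
      funext p z
      simp only [Tri.D, ((hasFDerivAt_monomial i j z).const_mul (c p)).fderiv]
      simp
      ring
    rw [this]
    refine .add _ _ ?_ ?_
    · rcases Nat.eq_zero_or_pos j with rfl | h'
      · simpa using PolyFam.coef (n := n - 1) (Ω := Ω) (c := fun _ => 0) continuous_const
      · exact .monom _ (by fun_prop) _ _ (by omega)
    · rcases Nat.eq_zero_or_pos i with rfl | h'
      · simpa using PolyFam.coef (n := n - 1) (Ω := Ω) (c := fun _ => 0) continuous_const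
      · exact .monom _ (by fun_prop) _ _ (by omega)
  | add G H hG hH ihG ihH =>
    convert PolyFam.add _ _ ihG ihH using 3 with p z
    have h1 := ((hG.isPoly p).contDiff (m := 1)).differentiable (by norm_num) z
    have h2 := ((hH.isPoly p).contDiff (m := 1)).differentiable (by norm_num) z
    simp only [Tri.D, fderiv_fun_add h1 h2]
    rfl

variable [MeasurableSpace Ω] {μ : Measure Ω}

/-- Integrating out the parameter yields a polynomial of the same degree. -/
theorem integral (hμ : ∀ c : Ω → ℝ, Continuous c → Integrable c μ) (hG : PolyFam n G) :
    IsPoly n (fun z => ∫ p, G p z ∂μ) := by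
  induction hG with
  | monom c hc i j h =>
    simp only [integral_mul_const]
    have := ((IsPoly.fst.pow i).mul (IsPoly.snd.pow j)).smul (∫ p, c p ∂μ)
    exact this.mono (by omega)
  | add G H hG hH ihG ihH =>
    have : (fun z => ∫ p, G p z + H p z ∂μ) = fun z => (∫ p, G p z ∂μ) + ∫ p, H p z ∂μ := by
      funext z
      exact integral_add (hμ _ (hG.continuous_left z)) (hμ _ (hH.continuous_left z))
    rw [this]
    exact ihG.add ihH

/-- Differentiation commutes with integrating out the parameter. -/
theorem D_integral (hμ : ∀ c : Ω → ℝ, Continuous c → Integrable c μ) (hG : PolyFam n G)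
    (v z : ℝ × ℝ) : Tri.D v (fun z => ∫ p, G p z ∂μ) z = ∫ p, Tri.D v (G p) z ∂μ := by
  induction hG with
  | monom c hc i j h =>
    simp only [integral_mul_const, Tri.D]
    have (p : Ω) := ((hasFDerivAt_monomial i j z).const_mul (c p)).fderiv
    simp only [this, ((hasFDerivAt_monomial i j z).const_mul (∫ p, c p ∂μ)).fderiv]
    simp [← mul_add, integral_mul_const]
  | add G H hG hH ihG ihH =>
    have h1 (p) := ((hG.isPoly p).contDiff (m := 1)).differentiable (by norm_num) z
    have h2 (p) := ((hH.isPoly p).contDiff (m := 1)).differentiable (by norm_num) z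
    have : (fun z => ∫ p, G p z + H p z ∂μ) = fun z => (∫ p, G p z ∂μ) + ∫ p, H p z ∂μ := by
      funext z
      exact integral_add (hμ _ (hG.continuous_left z)) (hμ _ (hH.continuous_left z))
    have h3 := ((hG.integral hμ).contDiff (m := 1)).differentiable (by norm_num) z
    have h4 := ((hH.integral hμ).contDiff (m := 1)).differentiable (by norm_num) z
    have e1 : Tri.D v (fun z => ∫ p, G p z + H p z ∂μ) z =
        Tri.D v (fun z => ∫ p, G p z ∂μ) z + Tri.D v (fun z => ∫ p, H p z ∂μ) z := by
      rw [this]; simp only [Tri.D, fderiv_fun_add h3 h4]; rfl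
    have e2 (p) : Tri.D v (fun z => G p z + H p z) z = Tri.D v (G p) z + Tri.D v (H p) z := by
      simp only [Tri.D, fderiv_fun_add (h1 p) (h2 p)]; rfl
    simp only [e1, e2, ihG, ihH]
    exact (integral_add (hμ _ ((hG.D v).continuous_left z))
      (hμ _ ((hH.D v).continuous_left z))).symm

end PolyFam

/-- Continuous functions are integrable on compact sets. -/
theorem integrable_restrict {Ω : Type} [TopologicalSpace Ω] [MeasurableSpace Ω]
    [OpensMeasurableSpace Ω] [SecondCountableTopology Ω] [T2Space Ω] [R1Space Ω] {μ : Measure Ω} [IsFiniteMeasureOnCompacts μ]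
    {S : Set Ω} (hS : IsCompact S) (c : Ω → ℝ) (hc : Continuous c) : Integrable c (μ.restrict S) :=
  hc.continuousOn.integrableOn_compact hS

theorem integrable_Ioc {a b : ℝ} (c : ℝ → ℝ) (hc : Continuous c) :
    Integrable c (volume.restrict (Set.Ioc a b)) :=
  hc.integrableOn_Ioc

/-- Restriction to the line `y = 0` as a polynomial in one variable. -/
theorem IsPoly.exists_trace {n : ℕ} {F : ℝ × ℝ → ℝ} (hF : IsPoly n F) :
    ∃ p : Polynomial ℝ, p.natDegree ≤ n ∧ ∀ t, F (t, 0) = p.eval t := by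
  obtain ⟨s, c, hs, rfl⟩ := hF.exists_sum
  refine ⟨∑ d ∈ s, Polynomial.C (c d * 0 ^ d 1) * Polynomial.X ^ d 0, ?_, fun t => ?_⟩
  · refine Polynomial.natDegree_sum_le_of_forall_le s _ fun d hd => ?_
    refine (Polynomial.natDegree_C_mul_X_pow_le _ _).trans ?_
    have := hs d hd; omega
  · simp only [Polynomial.eval_finsetSum]
    refine Finset.sum_congr rfl fun d _ => ?_
    simp; ring

theorem IsPoly.of_polynomial (p : Polynomial ℝ) {n : ℕ} (h : p.natDegree ≤ n) :
    IsPoly n (fun z => p.eval z.1) := by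
  have : (fun z : ℝ × ℝ => p.eval z.1) =
      fun z => ∑ i ∈ Finset.range (p.natDegree + 1), p.coeff i * z.1 ^ i := by
    funext z; exact Polynomial.eval_eq_sum_range _
  rw [this]
  refine IsPoly.sum _ fun i hi => IsPoly.smul _ ?_
  have := IsPoly.fst.pow i
  exact this.mono (by simp at hi; omega)

open scoped ENNReal NNReal

/-! ### Squared `L²` norms on the triangle -/

/-- The open reference triangle. -/
def T : Set (ℝ × ℝ) := {z | 0 < z.1 ∧ 0 < z.2 ∧ z.1 + z.2 < 1}

theorem measurableSet_T : MeasurableSet T := by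
  have h1 : IsOpen {z : ℝ × ℝ | 0 < z.1} := isOpen_lt continuous_const continuous_fst
  have h2 : IsOpen {z : ℝ × ℝ | 0 < z.2} := isOpen_lt continuous_const continuous_snd
  have h3 : IsOpen {z : ℝ × ℝ | z.1 + z.2 < 1} :=
    isOpen_lt (continuous_fst.add continuous_snd) continuous_const
  exact (h1.inter (h2.inter h3)).measurableSet

/-- The squared `L²(T)` norm of a nonnegative extended real valued function. -/
def N2 (m : ℝ × ℝ → ℝ≥0∞) : ℝ≥0∞ := ∫⁻ z in T, m z ^ 2

/-- The squared `L²(T)` norm of a real function, as an extended nonnegative real. -/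
def L2T (f : ℝ × ℝ → ℝ) : ℝ≥0∞ := N2 fun z => ‖f z‖ₑ

theorem N2_mono {m m' : ℝ × ℝ → ℝ≥0∞} (h : ∀ z ∈ T, m z ≤ m' z) : N2 m ≤ N2 m' :=
  setLIntegral_mono' measurableSet_T fun z hz => by gcongr; exact h z hz

theorem N2_const_mul (c : ℝ≥0) (m : ℝ × ℝ → ℝ≥0∞) :
    N2 (fun z => c * m z) = (c : ℝ≥0∞) ^ 2 * N2 m := by
  simp only [N2, mul_pow]
  exact lintegral_const_mul' _ _ (by simp)

/-- A form of `(a + b) ^ 2 ≤ 2 * (a ^ 2 + b ^ 2)` valid for extended nonnegative reals. -/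
theorem sq_add_le (a b : ℝ≥0∞) : (a + b) ^ 2 ≤ 2 * (a ^ 2 + b ^ 2) := by
  have := ENNReal.inner_le_Lp_mul_Lq (Finset.univ : Finset (Fin 2)) ![a, b] ![1, 1]
    (p := 2) (q := 2) (by constructor <;> norm_num)
  simp [Fin.sum_univ_two] at this
  calc (a + b) ^ 2 ≤ ((a ^ 2 + b ^ 2) ^ (2 : ℝ)⁻¹ * (1 + 1) ^ (2 : ℝ)⁻¹) ^ 2 := by gcongr
    _ = 2 * (a ^ 2 + b ^ 2) := by
      have h2 (c : ℝ≥0∞) : (c ^ (2 : ℝ)⁻¹) ^ 2 = c := by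
        rw [← ENNReal.rpow_natCast, ← ENNReal.rpow_mul]; norm_num
      rw [mul_pow, h2, h2]
      norm_num
      ring

theorem N2_add {m m' : ℝ × ℝ → ℝ≥0∞} (hm : Measurable m) :
    N2 (fun z => m z + m' z) ≤ 2 * (N2 m + N2 m') := by
  simp only [N2]
  rw [← lintegral_add_left (hm.pow_const 2), ← lintegral_const_mul' _ _ (by simp)]
  exact lintegral_mono fun z => sq_add_le _ _

/-- Weighted Cauchy–Schwarz inequality. -/
theorem sq_lintegral_mul_le {α : Type*} [MeasurableSpace α] (μ : Measure α) {w h : α → ℝ≥0∞}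
    (hw : AEMeasurable w μ) (hh : AEMeasurable h μ) :
    (∫⁻ a, w a * h a ∂μ) ^ 2 ≤ (∫⁻ a, w a ∂μ) * ∫⁻ a, w a * h a ^ 2 ∂μ := by
  have key := ENNReal.lintegral_mul_le_Lp_mul_Lq μ (p := 2) (q := 2)
    (by constructor <;> norm_num) (f := fun a => w a ^ (2⁻¹ : ℝ))
    (g := fun a => w a ^ (2⁻¹ : ℝ) * h a) (hw.pow_const _) ((hw.pow_const _).mul hh)
  have e1 (a) : ((fun a => w a ^ (2⁻¹ : ℝ)) * fun a => w a ^ (2⁻¹ : ℝ) * h a) a = w a * h a := by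
    simp only [Pi.mul_apply, ← mul_assoc]
    rw [← ENNReal.rpow_add_of_nonneg _ _ (by norm_num) (by norm_num)]
    norm_num
  have e2 (a) : (w a ^ (2⁻¹ : ℝ)) ^ (2 : ℝ) = w a := by
    rw [← ENNReal.rpow_mul]; norm_num
  have e3 (a) : (w a ^ (2⁻¹ : ℝ) * h a) ^ (2 : ℝ) = w a * h a ^ 2 := by
    rw [ENNReal.mul_rpow_of_nonneg _ _ (by norm_num), e2]; norm_cast
  simp only [e1, e2, e3] at key
  calc (∫⁻ a, w a * h a ∂μ) ^ 2
      ≤ ((∫⁻ a, w a ∂μ) ^ (1 / 2 : ℝ) * (∫⁻ a, w a * h a ^ 2 ∂μ) ^ (1 / 2 : ℝ)) ^ 2 := by gcongr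
    _ = _ := by
      rw [mul_pow, ← ENNReal.rpow_natCast, ← ENNReal.rpow_natCast, ← ENNReal.rpow_mul,
        ← ENNReal.rpow_mul]
      norm_num

/-- Minkowski's integral inequality, with a bound `e p ^ 2 * N` on the squared norm of the
slice at the parameter `p`. -/
theorem N2_lintegral_le {Ω : Type} [MeasurableSpace Ω] {μ : Measure Ω} [SFinite μ]
    {F : Ω → ℝ × ℝ → ℝ≥0∞} (hF : Measurable (Function.uncurry F)) {e : Ω → ℝ≥0∞}
    (he : Measurable e) (he0 : ∀ᵐ p ∂μ, e p ≠ 0 ∧ e p ≠ ∞) {N : ℝ≥0∞}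
    (h : ∀ᵐ p ∂μ, N2 (F p) ≤ e p ^ 2 * N) :
    N2 (fun z => ∫⁻ p, F p z ∂μ) ≤ (∫⁻ p, e p ∂μ) ^ 2 * N := by
  have hF' : Measurable (Function.uncurry fun p z => e p * ((e p)⁻¹ * F p z) ^ 2) := by
    have : Measurable fun w : Ω × (ℝ × ℝ) => F w.1 w.2 := hF
    simp only [Function.uncurry_def]
    fun_prop
  have step (z : ℝ × ℝ) : (∫⁻ p, F p z ∂μ) ^ 2 ≤
      (∫⁻ p, e p ∂μ) * ∫⁻ p, e p * ((e p)⁻¹ * F p z) ^ 2 ∂μ := by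
    have hz : Measurable fun p => F p z := hF.comp (by fun_prop : Measurable fun p => (p, z))
    refine le_trans ?_ (sq_lintegral_mul_le μ he.aemeasurable
      (by fun_prop : Measurable fun p => (e p)⁻¹ * F p z).aemeasurable)
    gcongr 1
    refine (lintegral_congr_ae ?_).le
    filter_upwards [he0] with p hp
    rw [← mul_assoc, ENNReal.mul_inv_cancel hp.1 hp.2, one_mul]
  calc N2 (fun z => ∫⁻ p, F p z ∂μ)
      ≤ ∫⁻ z in T, (∫⁻ p, e p ∂μ) * ∫⁻ p, e p * ((e p)⁻¹ * F p z) ^ 2 ∂μ :=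
        lintegral_mono fun z => step z
    _ = (∫⁻ p, e p ∂μ) * ∫⁻ z in T, ∫⁻ p, e p * ((e p)⁻¹ * F p z) ^ 2 ∂μ := by
        refine lintegral_const_mul _ ?_
        exact hF'.lintegral_prod_left
    _ = (∫⁻ p, e p ∂μ) * ∫⁻ p, (∫⁻ z in T, e p * ((e p)⁻¹ * F p z) ^ 2) ∂μ := by
        rw [lintegral_lintegral_swap]
        exact (hF'.comp measurable_swap).aemeasurable
    _ ≤ (∫⁻ p, e p ∂μ) * ∫⁻ p, e p * N ∂μ := by
        gcongr 1
        refine lintegral_mono_ae ?_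
        filter_upwards [he0, h] with p hp hN
        have hpt : (e p)⁻¹ ≠ ∞ := by simpa using hp.1
        have : (e p * (e p)⁻¹) = 1 := ENNReal.mul_inv_cancel hp.1 hp.2
        calc ∫⁻ z in T, e p * ((e p)⁻¹ * F p z) ^ 2
            = ∫⁻ z in T, (e p)⁻¹ * F p z ^ 2 := by
              refine lintegral_congr fun z => ?_
              calc _ = (e p * (e p)⁻¹) * ((e p)⁻¹ * F p z ^ 2) := by ring
                _ = _ := by rw [this, one_mul]
          _ = (e p)⁻¹ * N2 (F p) := lintegral_const_mul' _ _ hpt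
          _ ≤ (e p)⁻¹ * (e p ^ 2 * N) := by gcongr
          _ = (e p * (e p)⁻¹) * (e p * N) := by ring
          _ = e p * N := by rw [this, one_mul]
    _ = (∫⁻ p, e p ∂μ) ^ 2 * N := by
        rw [lintegral_mul_const _ he]; ring

theorem lintegral_comp_affine {f : ℝ → ℝ≥0∞} (hf : Measurable f) {a : ℝ} (ha : a ≠ 0) (b : ℝ) :
    ∫⁻ x, f (a * x + b) = ENNReal.ofReal |a⁻¹| * ∫⁻ x, f x := by
  have h1 : ∫⁻ x, f (a * x + b) = ∫⁻ x, f (x + b) ∂(Measure.map (a * ·) volume) := by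
    rw [lintegral_map (f := fun x => f (x + b)) (hf.comp (measurable_add_const b))
      (measurable_const_mul a)]
  rw [h1, Real.map_volume_mul_left ha, lintegral_smul_measure, lintegral_add_right_eq_self f b]
  rfl

theorem lintegral_comp_tri {F : ℝ × ℝ → ℝ≥0∞} (hF : Measurable F) {a d : ℝ} (ha : a ≠ 0)
    (hd : d ≠ 0) (b c e : ℝ) :
    ∫⁻ z : ℝ × ℝ, F (a * z.1 + b * z.2 + c, d * z.2 + e) =
      ENNReal.ofReal |a⁻¹| * ENNReal.ofReal |d⁻¹| * ∫⁻ z, F z := by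
  rw [Measure.volume_eq_prod, lintegral_prod_symm' _ (by fun_prop), lintegral_prod_symm' _ hF]
  have h1 (y : ℝ) : ∫⁻ x, F (a * x + b * y + c, d * y + e) =
      ENNReal.ofReal |a⁻¹| * ∫⁻ x, F (x, d * y + e) := by
    rw [← lintegral_comp_affine (f := fun x => F (x, d * y + e)) (by fun_prop) ha (b * y + c)]
    simp only [add_assoc]
  have hm : Measurable fun y => ∫⁻ x, F (x, y) :=
    Measurable.lintegral_prod_left (f := fun x y => F (x, y)) (by simpa [Function.uncurry_def] using hF)
  simp only [h1]
  rw [lintegral_const_mul _ (by fun_prop), lintegral_comp_affine hm hd, mul_assoc]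

/-- Change of variables for triangular affine maps of the triangle into itself. -/
theorem N2_comp_tri {m : ℝ × ℝ → ℝ≥0∞} (hm : Measurable m) {a d : ℝ} (ha : a ≠ 0)
    (hd : d ≠ 0) (b c e : ℝ)
    (hT : ∀ z ∈ T, (a * z.1 + b * z.2 + c, d * z.2 + e) ∈ T) :
    N2 (fun z => m (a * z.1 + b * z.2 + c, d * z.2 + e)) ≤
      ENNReal.ofReal |a⁻¹| * ENNReal.ofReal |d⁻¹| * N2 m := by
  have h1 : N2 m = ∫⁻ z, T.indicator (fun z => m z ^ 2) z :=
    (lintegral_indicator measurableSet_T _).symm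
  rw [h1, ← lintegral_comp_tri ((hm.pow_const 2).indicator measurableSet_T) ha hd b c e, N2,
    ← lintegral_indicator measurableSet_T]
  refine lintegral_mono fun z => ?_
  by_cases hz : z ∈ T
  · rw [Set.indicator_of_mem hz, Set.indicator_of_mem (hT z hz)]
  · rw [Set.indicator_of_notMem hz]; exact zero_le

theorem N2_comp_swap {m : ℝ × ℝ → ℝ≥0∞} (hm : Measurable m) :
    N2 (fun z => m z.swap) ≤ N2 m := by
  have h1 : N2 m = ∫⁻ z, T.indicator (fun z => m z ^ 2) z :=
    (lintegral_indicator measurableSet_T _).symm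
  have h2 : ∫⁻ z, T.indicator (fun z => m z ^ 2) z =
      ∫⁻ z : ℝ × ℝ, T.indicator (fun z => m z ^ 2) z.swap := by
    rw [Measure.volume_eq_prod]
    exact ((Measure.measurePreserving_swap (μ := (volume : Measure ℝ))
      (ν := (volume : Measure ℝ))).lintegral_comp
      ((hm.pow_const 2).indicator measurableSet_T)).symm
  rw [h1, h2, N2, ← lintegral_indicator measurableSet_T]
  refine lintegral_mono fun z => ?_
  by_cases hz : z ∈ T
  · have : z.swap ∈ T := ⟨hz.2.1, hz.1, by have := hz.2.2; simp; linarith⟩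
    rw [Set.indicator_of_mem hz, Set.indicator_of_mem this]
  · rw [Set.indicator_of_notMem hz]; exact zero_le

/-! ### Hardy inequalities -/

theorem lintegral_rpow_neg_half :
    ∫⁻ s in Set.Ioc (0 : ℝ) 1, ENNReal.ofReal (s ^ (-(1 / 2) : ℝ)) = 2 := by
  have h1 : IntegrableOn (fun s : ℝ => s ^ (-(1 / 2) : ℝ)) (Set.Ioc 0 1) :=
    (intervalIntegrable_iff_integrableOn_Ioc_of_le zero_le_one).1
      (intervalIntegral.intervalIntegrable_rpow' (by norm_num))
  rw [← ofReal_integral_eq_lintegral_ofReal h1, ← intervalIntegral.integral_of_le zero_le_one,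
    integral_rpow (Or.inl (by norm_num))]
  · norm_num
  · filter_upwards [ae_restrict_mem measurableSet_Ioc] with s hs
    exact Real.rpow_nonneg hs.1.le _

theorem IsPoly.hasFDerivAt {n : ℕ} {F : ℝ × ℝ → ℝ} (hF : IsPoly n F) (z : ℝ × ℝ) :
    HasFDerivAt F (fderiv ℝ F z) z :=
  ((hF.contDiff (m := 1)).differentiable (by norm_num) z).hasFDerivAt

theorem IsPoly.cont {n : ℕ} {F : ℝ × ℝ → ℝ} (hF : IsPoly n F) : Continuous F :=
  (hF.contDiff (m := 0)).continuous

theorem IsPoly.meas {n : ℕ} {F : ℝ × ℝ → ℝ} (hF : IsPoly n F) : Measurable F :=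
  hF.cont.measurable

theorem fderiv_apply_eq (F : ℝ × ℝ → ℝ) (z w : ℝ × ℝ) :
    fderiv ℝ F z w = w.1 * D e1 F z + w.2 * D e2 F z := by
  have : w = w.1 • e1 + w.2 • e2 := by ext <;> simp
  conv_lhs => rw [this]
  rw [map_add, map_smul, map_smul]
  simp [D]

/-- Fundamental theorem of calculus along the segment from `p` to `p + w`, for a function
differentiable at every point of the segment. -/
theorem ftc_segment {F : ℝ × ℝ → ℝ} {p w : ℝ × ℝ}
    (hF : ∀ s ∈ Set.Icc (0 : ℝ) 1, ContDiffAt ℝ 1 F (p + s • w)) :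
    F (p + w) - F p = ∫ s in (0 : ℝ)..1, fderiv ℝ F (p + s • w) w := by
  have hd (s : ℝ) (hs : s ∈ Set.uIcc (0 : ℝ) 1) :
      HasDerivAt (fun s : ℝ => F (p + s • w)) (fderiv ℝ F (p + s • w) w) s := by
    rw [Set.uIcc_of_le zero_le_one] at hs
    have h1 := ((hF s hs).differentiableAt (by norm_num)).hasFDerivAt
    have h2 : HasDerivAt (fun s : ℝ => p + s • w) w s := by
      simpa using ((hasDerivAt_id s).smul_const w).const_add p
    exact h1.comp_hasDerivAt s h2
  have hc : ContinuousOn (fun s : ℝ => fderiv ℝ F (p + s • w) w) (Set.uIcc 0 1) := by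
    intro s hs
    rw [Set.uIcc_of_le zero_le_one] at hs
    have h1 : ContinuousAt (fderiv ℝ F) (p + s • w) :=
      ((hF s hs).fderiv_right (m := 0) (by norm_num)).continuousAt
    have h2 : ContinuousAt (fun s : ℝ => p + s • w) s := by fun_prop
    have h3 : ContinuousAt (fun s : ℝ => fderiv ℝ F (p + s • w)) s :=
      ContinuousAt.comp (f := fun s : ℝ => p + s • w) h1 h2
    exact (h3.clm_apply continuousAt_const).continuousWithinAt
  rw [intervalIntegral.integral_eq_sub_of_hasDerivAt hd hc.intervalIntegrable]
  simp

theorem enorm_intervalIntegral_le (f : ℝ → ℝ) :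
    ‖∫ s in (0 : ℝ)..1, f s‖ₑ ≤ ∫⁻ s in Set.Ioc (0 : ℝ) 1, ‖f s‖ₑ := by
  rw [intervalIntegral.integral_of_le zero_le_one]
  exact enorm_integral_le_lintegral_enorm _

/-- A polynomial that vanishes at `p` is controlled at `p + w` by its derivative on the segment. -/
theorem IsPoly.enorm_le {n : ℕ} {F : ℝ × ℝ → ℝ} (hF : IsPoly n F) {p : ℝ × ℝ} (w : ℝ × ℝ)
    (h0 : F p = 0) :
    ‖F (p + w)‖ₑ ≤ ∫⁻ s in Set.Ioc (0 : ℝ) 1, ‖fderiv ℝ F (p + s • w) w‖ₑ := by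
  have := ftc_segment (F := F) (p := p) (w := w) fun s _ => hF.contDiff.contDiffAt
  rw [h0, sub_zero] at this
  rw [this]
  exact enorm_intervalIntegral_le _

/-- The average over a family of maps `g s`, where composition with `g s` costs the inverse of the
Jacobian `s`, is bounded on `L²(T)`: `∫ s ^ (-1/2) = 2` over `0 < s ≤ 1`, whence the constant `4`. -/
theorem N2_avg_contraction {m : ℝ × ℝ → ℝ≥0∞} (hm : Measurable m) {g : ℝ → ℝ × ℝ → ℝ × ℝ}
    (hg : Measurable (Function.uncurry g))
    (h : ∀ s, 0 < s → s ≤ 1 → N2 (fun z => m (g s z)) ≤ ENNReal.ofReal s⁻¹ * N2 m) :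
    N2 (fun z => ∫⁻ s in Set.Ioc (0 : ℝ) 1, m (g s z)) ≤ 4 * N2 m := by
  have := N2_lintegral_le (μ := volume.restrict (Set.Ioc (0 : ℝ) 1))
    (F := fun s z => m (g s z)) (e := fun s => ENNReal.ofReal (s ^ (-(1 / 2) : ℝ))) (N := N2 m)
    (hm.comp hg) (by fun_prop) ?_ ?_
  · rw [lintegral_rpow_neg_half] at this
    convert this using 2; norm_num
  · filter_upwards [ae_restrict_mem measurableSet_Ioc] with s hs
    have := Real.rpow_pos_of_pos hs.1 (-(1 / 2) : ℝ)
    exact ⟨(ENNReal.ofReal_pos.2 this).ne', by simp⟩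
  · filter_upwards [ae_restrict_mem measurableSet_Ioc] with s hs
    convert h s hs.1 hs.2 using 2
    rw [← ENNReal.ofReal_pow (Real.rpow_nonneg hs.1.le _), ← Real.rpow_natCast,
      ← Real.rpow_mul hs.1.le]
    norm_num
    rw [Real.rpow_neg_one]

theorem enorm_div_le_of {a r : ℝ} (hr : 0 < r) {N : ℝ≥0∞} (h : ‖a‖ₑ ≤ ENNReal.ofReal r * N) :
    ‖a / r‖ₑ ≤ N := by
  rw [div_eq_mul_inv, enorm_mul, Real.enorm_of_nonneg (inv_nonneg.2 hr.le),
    ENNReal.ofReal_inv_of_pos hr]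
  calc ‖a‖ₑ * (ENNReal.ofReal r)⁻¹ ≤ ENNReal.ofReal r * N * (ENNReal.ofReal r)⁻¹ := by gcongr
    _ = (ENNReal.ofReal r * (ENNReal.ofReal r)⁻¹) * N := by ring
    _ = N := by
      rw [ENNReal.mul_inv_cancel (by simpa using hr) (by simp), one_mul]

/-- Hardy's inequality on the lines parallel to the `x` axis. -/
theorem hardy_x {n : ℕ} {u : ℝ × ℝ → ℝ} (hu : IsPoly n u) (h0 : ∀ y, u (0, y) = 0) :
    L2T (fun z => u z / z.1) ≤ 4 * L2T (D e1 u) := by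
  have hD : Measurable fun z => ‖D e1 u z‖ₑ := (hu.D e1).meas.enorm
  refine le_trans (N2_mono (m' := fun z => ∫⁻ s in Set.Ioc (0 : ℝ) 1, ‖D e1 u (s * z.1, z.2)‖ₑ)
    fun z hz => ?_) (N2_avg_contraction (g := fun s z => (s * z.1, z.2)) hD (by fun_prop) ?_)
  · refine enorm_div_le_of hz.1 ?_
    have := hu.enorm_le (p := (0, z.2)) (z.1, 0) (h0 _)
    rw [← lintegral_const_mul' _ _ (by simp)]
    simpa [fderiv_apply_eq, enorm_mul, Real.enorm_of_nonneg hz.1.le] using this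
  · intro s hs hs1
    have := N2_comp_tri hD hs.ne' one_ne_zero 0 0 0 fun z hz => ?_
    · simpa [abs_of_pos hs] using this
    · have := hz.1; have := hz.2.1; have := hz.2.2
      refine ⟨by simp; positivity, by simpa, ?_⟩
      simp; nlinarith

/-- Hardy's inequality on the lines parallel to the `y` axis. -/
theorem hardy_y {n : ℕ} {u : ℝ × ℝ → ℝ} (hu : IsPoly n u) (h0 : ∀ x, u (x, 0) = 0) :
    L2T (fun z => u z / z.2) ≤ 4 * L2T (D e2 u) := by
  have hD : Measurable fun z => ‖D e2 u z‖ₑ := (hu.D e2).meas.enorm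
  refine le_trans (N2_mono (m' := fun z => ∫⁻ s in Set.Ioc (0 : ℝ) 1, ‖D e2 u (z.1, s * z.2)‖ₑ)
    fun z hz => ?_) (N2_avg_contraction (g := fun s z => (z.1, s * z.2)) hD (by fun_prop) ?_)
  · refine enorm_div_le_of hz.2.1 ?_
    have := hu.enorm_le (p := (z.1, 0)) (0, z.2) (h0 _)
    rw [← lintegral_const_mul' _ _ (by simp)]
    simpa [fderiv_apply_eq, enorm_mul, Real.enorm_of_nonneg hz.2.1.le] using this
  · intro s hs hs1
    have := N2_comp_tri hD one_ne_zero hs.ne' 0 0 0 fun z hz => ?_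
    · simpa [abs_of_pos hs] using this
    · have := hz.1; have := hz.2.1; have := hz.2.2
      refine ⟨by simpa, by simp; positivity, ?_⟩
      simp; nlinarith

/-- Hardy's inequality with respect to the distance to the hypotenuse. -/
theorem hardy_z {n : ℕ} {u : ℝ × ℝ → ℝ} (hu : IsPoly n u) (h0 : ∀ y, u (1 - y, y) = 0) :
    L2T (fun z => u z / (1 - z.1 - z.2)) ≤ 4 * L2T (D e1 u) := by
  have hD : Measurable fun z => ‖D e1 u z‖ₑ := (hu.D e1).meas.enorm
  refine le_trans (N2_mono (m' := fun z => ∫⁻ s in Set.Ioc (0 : ℝ) 1,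
      ‖D e1 u (s * z.1 + -(1 - s) * z.2 + (1 - s), z.2)‖ₑ)
    fun z hz => ?_) (N2_avg_contraction
      (g := fun s z => (s * z.1 + -(1 - s) * z.2 + (1 - s), z.2)) hD (by fun_prop) ?_)
  · have hz' : 0 < 1 - z.1 - z.2 := by have := hz.2.2; linarith
    refine enorm_div_le_of hz' ?_
    have := hu.enorm_le (p := (1 - z.2, z.2)) (-(1 - z.1 - z.2), 0) (h0 _)
    rw [← lintegral_const_mul' _ _ (by simp)]
    have e (s : ℝ) : 1 - z.2 + s * (-(1 - z.1 - z.2)) = s * z.1 + -(1 - s) * z.2 + (1 - s) := by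
      ring
    have e' : 1 - z.2 + -(1 - z.1 - z.2) = z.1 := by ring
    simpa only [fderiv_apply_eq, enorm_mul, enorm_neg, Real.enorm_of_nonneg hz'.le, Prod.mk_add_mk,
      Prod.smul_mk, smul_eq_mul, mul_zero, add_zero, zero_mul, e, e'] using this
  · intro s hs hs1
    have := N2_comp_tri hD hs.ne' one_ne_zero (-(1 - s)) (1 - s) 0 fun z hz => ?_
    · simpa [abs_of_pos hs] using this
    · have := hz.1; have := hz.2.1; have := hz.2.2
      refine ⟨?_, by simpa, ?_⟩
      · simp; nlinarith
      · simp; nlinarith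

/-- Hardy's inequality at a vertex `P`. The function `ρ` dominates the coordinates of `z - P` and is
homogeneous of degree one about `P`, so that the radial average of `ρ⁻¹ ∇φ` is not amplified: the
factor `s` gained from `ρ` balances the Jacobian `s ^ 2` of the dilation by `s`. -/
theorem hardy_vertex {n : ℕ} {φ : ℝ × ℝ → ℝ} (hφ : IsPoly n φ) {P : ℝ × ℝ} (h0 : φ P = 0)
    {ρ : ℝ × ℝ → ℝ} (hρm : Measurable ρ) (hρ : ∀ z ∈ T, 0 < ρ z)
    (hρs : ∀ z s, ρ (s * z.1 + (1 - s) * P.1, s * z.2 + (1 - s) * P.2) = s * ρ z)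
    (hρ1 : ∀ z ∈ T, |z.1 - P.1| ≤ ρ z) (hρ2 : ∀ z ∈ T, |z.2 - P.2| ≤ ρ z)
    (hT : ∀ z ∈ T, ∀ s, 0 < s → s ≤ 1 →
      (s * z.1 + (1 - s) * P.1, s * z.2 + (1 - s) * P.2) ∈ T) :
    L2T (fun z => φ z / ρ z ^ 2) ≤ L2T (fun z => (|D e1 φ z| + |D e2 φ z|) / ρ z) := by
  set m : ℝ × ℝ → ℝ≥0∞ := fun z => ‖(|D e1 φ z| + |D e2 φ z|) / ρ z‖ₑ with hm
  have hmm : Measurable m := by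
    have := (hφ.D e1).meas; have := (hφ.D e2).meas
    fun_prop
  set g : ℝ → ℝ × ℝ → ℝ × ℝ := fun s z => (s * z.1 + (1 - s) * P.1, s * z.2 + (1 - s) * P.2)
    with hg
  have key := N2_lintegral_le (μ := volume.restrict (Set.Ioc (0 : ℝ) 1))
    (F := fun s z => ENNReal.ofReal s * m (g s z)) (e := fun _ => 1) (N := N2 m)
    (by simp only [Function.uncurry_def]; fun_prop) (by fun_prop) (by simp) ?_
  · refine le_trans (N2_mono fun z hz => ?_) (key.trans (by simp [L2T, hm]))
    have h1 := hρ z hz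
    refine enorm_div_le_of (by positivity) ?_
    have := hφ.enorm_le (p := P) (z - P) h0
    rw [add_sub_cancel] at this
    refine this.trans ?_
    rw [← lintegral_const_mul' _ _ (by simp)]
    refine setLIntegral_mono' measurableSet_Ioc fun s hs => ?_
    have hs1 := hs.1
    have hgs : P + s • (z - P) = g s z := by
      ext <;> simp [hg] <;> ring
    rw [hm, fderiv_apply_eq, hgs]
    simp only
    rw [← Real.enorm_of_nonneg hs.1.le, ← Real.enorm_of_nonneg (by positivity), ← enorm_mul,
      ← enorm_mul, Real.enorm_eq_ofReal_abs, Real.enorm_eq_ofReal_abs]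
    refine ENNReal.ofReal_le_ofReal ?_
    have : ρ z ^ 2 * (s * ((|D e1 φ (g s z)| + |D e2 φ (g s z)|) / ρ (g s z))) =
        ρ z * (|D e1 φ (g s z)| + |D e2 φ (g s z)|) := by
      rw [hg, hρs]
      field_simp
    rw [this, abs_of_nonneg (by positivity : 0 ≤ ρ z * (|D e1 φ (g s z)| + |D e2 φ (g s z)|))]
    refine (abs_add_le _ _).trans ?_
    rw [abs_mul, abs_mul]
    have h2 := hρ1 z hz
    have h3 := hρ2 z hz
    simp only [Prod.fst_sub, Prod.snd_sub]
    nlinarith [abs_nonneg (D e1 φ (g s z)), abs_nonneg (D e2 φ (g s z))]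
  · filter_upwards [ae_restrict_mem measurableSet_Ioc] with s hs
    have hs1 := hs.1
    have e1 : ENNReal.ofReal s = ((ENNReal.ofReal s).toNNReal : ℝ≥0∞) := by simp
    rw [e1, N2_const_mul, ← e1]
    have := N2_comp_tri hmm hs.1.ne' hs.1.ne' 0 ((1 - s) * P.1) ((1 - s) * P.2) fun z hz => ?_
    · simp only [zero_mul, add_zero, abs_inv, abs_of_pos hs1] at this
      refine (mul_le_mul_right this _).trans (le_of_eq ?_)
      rw [← mul_assoc, ← ENNReal.ofReal_pow hs1.le,
        ← ENNReal.ofReal_mul (by positivity), ← ENNReal.ofReal_mul (by positivity)]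
      field_simp
      simp
    · simpa using hT z hz s hs.1 hs.2

/-- Hardy's inequality at the vertex `(0, 0)`. -/
theorem hardy_O {n : ℕ} {φ : ℝ × ℝ → ℝ} (hφ : IsPoly n φ) (h0 : φ (0, 0) = 0) :
    L2T (fun z => φ z / (z.1 + z.2) ^ 2) ≤
      L2T (fun z => (|D e1 φ z| + |D e2 φ z|) / (z.1 + z.2)) := by
  refine hardy_vertex hφ h0 (ρ := fun z => z.1 + z.2) (by fun_prop) ?_ ?_ ?_ ?_ ?_
  · intro z hz; have := hz.1; have := hz.2.1; positivity
  · intro z s; simp; ring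
  · intro z hz; have h := hz.1; have := hz.2.1
    simp only [sub_zero, abs_of_pos h]; linarith
  · intro z hz; have h := hz.1; have h' := hz.2.1
    simp only [sub_zero, abs_of_pos h']; linarith
  · intro z hz s hs hs1
    have := hz.1; have := hz.2.1; have := hz.2.2
    refine ⟨by simp; positivity, by simp; positivity, ?_⟩
    simp; nlinarith

/-- Hardy's inequality at the vertex `(1, 0)`. -/
theorem hardy_A {n : ℕ} {φ : ℝ × ℝ → ℝ} (hφ : IsPoly n φ) (h0 : φ (1, 0) = 0) :
    L2T (fun z => φ z / (1 - z.1) ^ 2) ≤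
      L2T (fun z => (|D e1 φ z| + |D e2 φ z|) / (1 - z.1)) := by
  refine hardy_vertex hφ h0 (ρ := fun z => 1 - z.1) (by fun_prop) ?_ ?_ ?_ ?_ ?_
  · intro z hz; have := hz.2.1; have := hz.2.2; simp; linarith
  · intro z s; simp; ring
  · intro z hz; have := hz.2.1; have := hz.2.2
    rw [abs_of_neg (by simp; linarith)]; simp
  · intro z hz; have h := hz.2.1; have := hz.2.2
    simp only [sub_zero, abs_of_pos h]; linarith
  · intro z hz s hs hs1
    have := hz.1; have := hz.2.1; have := hz.2.2
    refine ⟨?_, by simp; positivity, ?_⟩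
    · simp; nlinarith
    · simp; nlinarith

/-! ### Fourier coefficients and multipliers -/

/-- The frequency `π n / 2`, for period `4`. -/
def freq (n : ℤ) : ℝ := Real.pi * n / 2

/-- The Fourier coefficient (over the whole line) at frequency `freq n`. -/
def fc (n : ℤ) (f : ℝ → ℂ) : ℂ := ∫ x, Complex.exp (-(freq n * x : ℝ) * Complex.I) * f x

/-- Parseval's identity for a bounded function supported in `[-1, 1]`. -/
theorem parseval {f : ℝ → ℂ} (hf : Measurable f) {M : ℝ} (hM : ∀ x, ‖f x‖ ≤ M)
    (hs : ∀ x, x ∉ Set.Icc (-1 : ℝ) 1 → f x = 0) :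
    ∑' n, ‖fc n f‖ₑ ^ 2 = 4 * ∫⁻ x, ‖f x‖ₑ ^ 2 := by
  have hab : (-2 : ℝ) < 2 := by norm_num
  have hL2 : MemLp f 2 (volume.restrict (Set.Ioc (-2) 2)) :=
    MemLp.of_bound hf.aestronglyMeasurable M (Filter.Eventually.of_forall hM)
  have hS := hasSum_sq_fourierCoeffOn hab hL2
  have hsupp : Function.support f ⊆ Set.Ioc (-2) 2 := by
    intro x hx
    by_contra h
    exact hx (hs x fun h' => h ⟨by linarith [h'.1], by linarith [h'.2]⟩)
  have hc (n : ℤ) : fourierCoeffOn hab f n = (1 / 4 : ℂ) * fc n f := by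
    rw [fourierCoeffOn_eq_integral, fc]
    have h4 : (2 - -2 : ℝ) = 4 := by norm_num
    rw [h4, intervalIntegral.integral_of_le hab.le]
    rw [setIntegral_eq_integral_of_forall_compl_eq_zero]
    · simp only [fourier_coe_apply, smul_eq_mul, Complex.real_smul]
      congr 1
      · norm_num
      · refine integral_congr_ae (Filter.Eventually.of_forall fun x => ?_)
        simp only [freq]
        congr 2
        push_cast
        ring
    · intro x hx
      have : f x = 0 := by
        by_contra h; exact hx (hsupp h)
      simp [this]
  have hint : ∫ x in (-2 : ℝ)..2, ‖f x‖ ^ 2 = ∫ x, ‖f x‖ ^ 2 := by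
    rw [intervalIntegral.integral_of_le hab.le,
      setIntegral_eq_integral_of_forall_compl_eq_zero]
    intro x hx
    have : f x = 0 := by
      by_contra h; exact hx (hsupp h)
    simp [this]
  have hInt : Integrable (fun x => ‖f x‖ ^ 2) := by
    have : IntegrableOn (fun x => ‖f x‖ ^ 2) (Set.Ioc (-2) 2) := by
      have := hL2.integrable_norm_pow (by norm_num)
      simpa [IntegrableOn] using this
    rwa [integrableOn_iff_integrable_of_support_subset] at this
    intro x hx
    refine hsupp fun h => hx ?_
    simp [h]
  have e1 : ∫⁻ x, ‖f x‖ₑ ^ 2 = ENNReal.ofReal (∫ x, ‖f x‖ ^ 2) := by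
    rw [ofReal_integral_eq_lintegral_ofReal hInt (Filter.Eventually.of_forall fun x => by positivity)]
    refine lintegral_congr fun x => ?_
    rw [ENNReal.ofReal_pow (norm_nonneg _), ofReal_norm]
  have e2 (n : ℤ) : ‖fc n f‖ₑ ^ 2 = ENNReal.ofReal (16 * ‖fourierCoeffOn hab f n‖ ^ 2) := by
    rw [hc, norm_mul, mul_pow, ← ofReal_norm, ← ENNReal.ofReal_pow (norm_nonneg _)]
    congr 1
    norm_num
    ring
  simp only [e2]
  rw [← ENNReal.ofReal_tsum_of_nonneg (fun n => by positivity) (hS.summable.mul_left 16),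
    tsum_mul_left, hS.tsum_eq, hint, e1, ← ENNReal.ofReal_ofNat 4,
    ← ENNReal.ofReal_mul (by norm_num)]
  congr 1
  simp
  ring

/-- A translation of the function multiplies its Fourier coefficients by a phase. -/
theorem fc_shift (n : ℤ) (f : ℝ → ℂ) (a : ℝ) :
    fc n (fun x => f (x + a)) = Complex.exp ((freq n * a : ℝ) * Complex.I) * fc n f := by
  simp only [fc]
  rw [← integral_const_mul, ← integral_sub_right_eq_self _ a]
  refine integral_congr_ae (Filter.Eventually.of_forall fun x => ?_)
  simp only [sub_add_cancel, ← mul_assoc, ← Complex.exp_add]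
  congr 2
  push_cast
  ring

/-- The Fourier multiplier of the averaging kernel `k`. -/
def mult (k : ℝ → ℝ) (ξ : ℝ) : ℂ :=
  ∫ r in (0 : ℝ)..1, Complex.exp ((ξ * r : ℝ) * Complex.I) * k r

/-- The multiplier of a mean free `C¹` kernel is at most a multiple of `min |ξ| (1 / |ξ|)`: the mean
gives the decay at `0`, an integration by parts the decay at infinity. -/
theorem mult_bound {k : ℝ → ℝ} (hk : ContDiff ℝ 1 k) (h0 : ∫ r in (0 : ℝ)..1, k r = 0) :
    ∃ C : ℝ, 0 ≤ C ∧ ∀ ξ, ‖mult k ξ‖ ≤ C * (2 * |ξ| * (1 + ξ ^ 2)⁻¹) := by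
  have hk' : Continuous (deriv k) := hk.continuous_deriv (by norm_num)
  obtain ⟨A, hA⟩ := isCompact_Icc.exists_bound_of_continuousOn (s := Set.Icc (0 : ℝ) 1)
    hk.continuous.continuousOn
  obtain ⟨B, hB⟩ := isCompact_Icc.exists_bound_of_continuousOn (s := Set.Icc (0 : ℝ) 1)
    hk'.continuousOn
  have hA0 : 0 ≤ A := (norm_nonneg _).trans (hA 0 (by simp))
  have hB0 : 0 ≤ B := (norm_nonneg _).trans (hB 0 (by simp))
  have hnorm (θ : ℝ) : ‖Complex.exp (θ * Complex.I)‖ = 1 := Complex.norm_exp_ofReal_mul_I θ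
  have small (ξ : ℝ) : ‖mult k ξ‖ ≤ A * |ξ| := by
    have e : mult k ξ = ∫ r in (0 : ℝ)..1, (Complex.exp ((ξ * r : ℝ) * Complex.I) - 1) * k r := by
      simp only [sub_mul, one_mul]
      rw [intervalIntegral.integral_sub, mult, intervalIntegral.integral_ofReal, h0]
      · simp
      · apply Continuous.intervalIntegrable; have := hk.continuous; fun_prop
      · apply Continuous.intervalIntegrable; have := hk.continuous; fun_prop
    rw [e]
    have := intervalIntegral.norm_integral_le_of_norm_le_const (a := 0) (b := 1) (C := A * |ξ|)
      (f := fun r : ℝ => (Complex.exp ((ξ * r : ℝ) * Complex.I) - 1) * k r) ?_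
    · simpa using this
    · intro r hr
      rw [Set.uIoc_of_le zero_le_one] at hr
      have h1 : ‖Complex.exp ((ξ * r : ℝ) * Complex.I) - 1‖ ≤ |ξ| := by
        have := Real.norm_exp_I_mul_ofReal_sub_one_le (x := ξ * r)
        rw [mul_comm Complex.I] at this
        refine this.trans ?_
        rw [Real.norm_eq_abs, abs_mul, abs_of_pos hr.1]
        exact mul_le_of_le_one_right (abs_nonneg _) hr.2
      have h2 := hA r ⟨hr.1.le, hr.2⟩
      rw [norm_mul, Complex.norm_real, mul_comm]
      exact mul_le_mul h2 h1 (norm_nonneg _) hA0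
  have large (ξ : ℝ) : |ξ| * ‖mult k ξ‖ ≤ 2 * A + B := by
    by_cases hξ : ξ = 0
    · subst hξ; simp; positivity
    have hv (r : ℝ) : HasDerivAt (fun r : ℝ => Complex.exp ((ξ * r : ℝ) * Complex.I))
        (Complex.exp ((ξ * r : ℝ) * Complex.I) * (ξ * Complex.I)) r := by
      have h1 : HasDerivAt (fun r : ℝ => ((ξ * r : ℝ) : ℂ) * Complex.I) (ξ * Complex.I) r := by
        have : HasDerivAt (fun r : ℝ => ξ * r) ξ r := by simpa using (hasDerivAt_id r).const_mul ξ
        exact this.ofReal_comp.mul_const Complex.I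
      exact h1.cexp
    have hu (r : ℝ) : HasDerivAt (fun r : ℝ => (k r : ℂ)) ((deriv k r : ℝ) : ℂ) r :=
      ((hk.differentiable (by norm_num) r).hasDerivAt).ofReal_comp
    have ibp := intervalIntegral.integral_mul_deriv_eq_deriv_mul (a := 0) (b := 1)
      (u := fun r : ℝ => (k r : ℂ)) (v := fun r : ℝ => Complex.exp ((ξ * r : ℝ) * Complex.I))
      (fun r _ => hu r) (fun r _ => hv r)
      (by apply Continuous.intervalIntegrable; fun_prop)
      (by apply Continuous.intervalIntegrable; fun_prop)
    have e : ∫ r in (0 : ℝ)..1, (k r : ℂ) * (Complex.exp ((ξ * r : ℝ) * Complex.I) *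
        (ξ * Complex.I)) = (ξ * Complex.I) * mult k ξ := by
      rw [mult, ← intervalIntegral.integral_const_mul]
      congr 1; funext r; ring
    have hn : |ξ| * ‖mult k ξ‖ = ‖(ξ * Complex.I) * mult k ξ‖ := by simp
    rw [hn, ← e, ibp]
    have b1 : ‖∫ r in (0 : ℝ)..1, ((deriv k r : ℝ) : ℂ) * Complex.exp ((ξ * r : ℝ) * Complex.I)‖ ≤ B := by
      have := intervalIntegral.norm_integral_le_of_norm_le_const (a := 0) (b := 1) (C := B)
        (f := fun r : ℝ => ((deriv k r : ℝ) : ℂ) * Complex.exp ((ξ * r : ℝ) * Complex.I)) ?_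
      · simpa using this
      · intro r hr
        rw [Set.uIoc_of_le zero_le_one] at hr
        rw [norm_mul, hnorm, mul_one, Complex.norm_real]
        exact hB r ⟨hr.1.le, hr.2⟩
    have b2 : ‖(k 1 : ℂ) * Complex.exp ((ξ * 1 : ℝ) * Complex.I)‖ ≤ A := by
      rw [norm_mul, hnorm, mul_one, Complex.norm_real]; exact hA 1 (by simp)
    have b3 : ‖(k 0 : ℂ) * Complex.exp ((ξ * 0 : ℝ) * Complex.I)‖ ≤ A := by
      rw [norm_mul, hnorm, mul_one, Complex.norm_real]; exact hA 0 (by simp)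
    refine (norm_sub_le _ _).trans ?_
    have := norm_sub_le ((k 1 : ℂ) * Complex.exp ((ξ * 1 : ℝ) * Complex.I))
      ((k 0 : ℂ) * Complex.exp ((ξ * 0 : ℝ) * Complex.I))
    linarith
  refine ⟨2 * A + B, by positivity, fun ξ => ?_⟩
  have h1 := small ξ
  have h2 := large ξ
  have h3 : |ξ| ^ 2 = ξ ^ 2 := sq_abs ξ
  rw [← mul_assoc, ← div_eq_mul_inv, le_div_iff₀ (by positivity), ← h3]
  have := abs_nonneg ξ
  have : ‖mult k ξ‖ ≤ (2 * A + B) * |ξ| := h1.trans (by gcongr; linarith)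
  nlinarith

/-- The multiplier, divided by the scale, is integrable uniformly in the frequency. -/
theorem lintegral_mult_le {k : ℝ → ℝ} (hk : ContDiff ℝ 1 k) (h0 : ∫ r in (0 : ℝ)..1, k r = 0) :
    ∃ B : ℝ≥0, ∀ ω : ℝ, ∫⁻ s in Set.Ioc (0 : ℝ) 1,
      ENNReal.ofReal s⁻¹ * ‖mult k (ω * s)‖ₑ ≤ B := by
  obtain ⟨C, hC0, hC⟩ := mult_bound hk h0
  refine ⟨(2 * C * Real.pi).toNNReal, fun ω => ?_⟩
  by_cases hω : ω = 0
  · have : mult k 0 = 0 := by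
      have := hC 0
      simp at this
      exact this
    simp [hω, this]
  have hω' : 0 < |ω| := abs_pos.2 hω
  calc ∫⁻ s in Set.Ioc (0 : ℝ) 1, ENNReal.ofReal s⁻¹ * ‖mult k (ω * s)‖ₑ
      ≤ ∫⁻ s in Set.Ioc (0 : ℝ) 1,
          ENNReal.ofReal (2 * C * |ω|) * ENNReal.ofReal ((1 + (ω * s + 0) ^ 2)⁻¹) := by
        refine setLIntegral_mono' measurableSet_Ioc fun s hs => ?_
        have hs0 := hs.1
        rw [← ofReal_norm, ← ENNReal.ofReal_mul (by positivity),
          ← ENNReal.ofReal_mul (by positivity)]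
        refine ENNReal.ofReal_le_ofReal ?_
        calc s⁻¹ * ‖mult k (ω * s)‖
            ≤ s⁻¹ * (C * (2 * |ω * s| * (1 + (ω * s) ^ 2)⁻¹)) := by gcongr; exact hC _
          _ = 2 * C * |ω| * (1 + (ω * s + 0) ^ 2)⁻¹ := by
            rw [abs_mul, abs_of_pos hs0, add_zero]; field_simp
    _ ≤ ∫⁻ s, ENNReal.ofReal (2 * C * |ω|) * ENNReal.ofReal ((1 + (ω * s + 0) ^ 2)⁻¹) :=
        setLIntegral_le_lintegral _ _
    _ = ENNReal.ofReal (2 * C * |ω|) * (ENNReal.ofReal |ω⁻¹| * ENNReal.ofReal Real.pi) := by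
        rw [lintegral_const_mul' _ _ (by simp),
          lintegral_comp_affine (f := fun x => ENNReal.ofReal ((1 + x ^ 2)⁻¹)) (by fun_prop) hω 0,
          ← ofReal_integral_eq_lintegral_ofReal integrable_inv_one_add_sq
            (Filter.Eventually.of_forall fun x => by positivity), integral_univ_inv_one_add_sq]
    _ = _ := by
        rw [← ENNReal.ofReal_mul (by positivity), ← ENNReal.ofReal_mul (by positivity), abs_inv]
        change _ = ENNReal.ofReal _
        congr 1
        field_simp

/-! ### A truncated singular integral -/

/-- The truncated singular integral `∫_ε^1 s⁻¹ ∫_0^1 k(r) Q(x + r s, y - s) dr ds`;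
the parameter is `p = (s, r)`. -/
def Kt (k : ℝ → ℝ) (Q : ℝ × ℝ → ℝ) (ε : ℝ) (z : ℝ × ℝ) : ℝ :=
  ∫ p in Set.Ioc ε 1 ×ˢ Set.Ioc (0 : ℝ) 1, p.1⁻¹ * k p.2 * Q (z.1 + p.2 * p.1, z.2 - p.1)

theorem Kt_measurable {k : ℝ → ℝ} (hk : Continuous k) {Q : ℝ × ℝ → ℝ} (hQ : Measurable Q) (ε : ℝ) :
    Measurable (Kt k Q ε) := by
  have hk' := hk.measurable
  have : Measurable fun w : (ℝ × ℝ) × (ℝ × ℝ) =>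
      w.2.1⁻¹ * k w.2.2 * Q (w.1.1 + w.2.2 * w.2.1, w.1.2 - w.2.1) := by fun_prop
  exact (this.stronglyMeasurable.integral_prod_right'
    (ν := volume.restrict (Set.Ioc ε 1 ×ˢ Set.Ioc (0 : ℝ) 1))).measurable

theorem mult_continuous {k : ℝ → ℝ} (hk : Continuous k) : Continuous (mult k) := by
  refine intervalIntegral.continuous_parametric_intervalIntegral_of_continuous' ?_ _ _
  simp only [Function.uncurry_def]
  fun_prop

/-- Data of the singular integral: a bounded measurable function supported in the triangle, and
a continuous kernel bounded on `[0, 1]`. -/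
structure KtData (k : ℝ → ℝ) (Q : ℝ × ℝ → ℝ) (M A : ℝ) : Prop where
  meas : Measurable Q
  bound : ∀ z, |Q z| ≤ M
  supp : ∀ z, z ∉ T → Q z = 0
  cont : Continuous k
  kbound : ∀ r ∈ Set.Icc (0 : ℝ) 1, |k r| ≤ A

theorem KtData.integrand_zero {k : ℝ → ℝ} {Q : ℝ × ℝ → ℝ} {M A : ℝ} (h : KtData k Q M A) {ε : ℝ}
    (hε : 0 < ε) {x y : ℝ} (hx : x ∉ Set.Icc (-1 : ℝ) 1) {p : ℝ × ℝ}
    (hp : p ∈ Set.Ioc ε 1 ×ˢ Set.Ioc (0 : ℝ) 1) : Q (x + p.2 * p.1, y - p.1) = 0 := by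
  refine h.supp _ fun hT => hx ?_
  obtain ⟨⟨h1, h2⟩, h3, h4⟩ := hp
  have a := hT.1; have b := hT.2.1; have c := hT.2.2
  simp only at a b c
  have : 0 < p.2 * p.1 := mul_pos h3 (hε.trans h1)
  have : p.2 * p.1 ≤ 1 := mul_le_one₀ h4 (hε.trans h1).le h2
  exact ⟨by linarith, by linarith⟩

theorem KtData.integrand_bound {k : ℝ → ℝ} {Q : ℝ × ℝ → ℝ} {M A : ℝ} (h : KtData k Q M A) {ε : ℝ}
    (hε : 0 < ε) (z : ℝ × ℝ) {p : ℝ × ℝ} (hp : p ∈ Set.Ioc ε 1 ×ˢ Set.Ioc (0 : ℝ) 1) :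
    |p.1⁻¹ * k p.2 * Q (z.1 + p.2 * p.1, z.2 - p.1)| ≤ ε⁻¹ * A * M := by
  obtain ⟨⟨h1, h2⟩, h3, h4⟩ := hp
  have hA := h.kbound p.2 ⟨h3.le, h4⟩
  have hA0 := (abs_nonneg _).trans hA
  rw [abs_mul, abs_mul, abs_inv, abs_of_pos (hε.trans h1)]
  gcongr
  exact h.bound _

/-- In the variable `x`, the singular integral acts on Fourier coefficients by the multipliers of the
kernel, integrated over the scales `s`. -/
theorem KtData.fc_Kt {k : ℝ → ℝ} {Q : ℝ × ℝ → ℝ} {M A : ℝ} (h : KtData k Q M A) {ε : ℝ}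
    (hε : 0 < ε) (n : ℤ) (y : ℝ) :
    fc n (fun x => (Kt k Q ε (x, y) : ℂ)) =
      ∫ s in Set.Ioc ε 1, ((s⁻¹ : ℝ) : ℂ) * mult k (freq n * s) *
        fc n (fun x => (Q (x, y - s) : ℂ)) := by
  set S := Set.Ioc ε 1 ×ˢ Set.Ioc (0 : ℝ) 1 with hS
  have hSm : MeasurableSet S := measurableSet_Ioc.prod measurableSet_Ioc
  set g : ℝ → ℝ × ℝ → ℂ := fun x p => Complex.exp (-(freq n * x : ℝ) * Complex.I) *
    ((p.1⁻¹ * k p.2 * Q (x + p.2 * p.1, y - p.1) : ℝ) : ℂ) with hg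
  have hgm : Measurable (Function.uncurry g) := by
    have := h.cont.measurable; have := h.meas
    simp only [hg, Function.uncurry_def]
    fun_prop
  have hfin : IsFiniteMeasure ((volume : Measure (ℝ × ℝ)).restrict S) := by
    refine ⟨?_⟩
    rw [Measure.restrict_apply_univ, hS, Measure.volume_eq_prod, Measure.prod_prod]
    exact ENNReal.mul_lt_top (by simp) (by simp)
  have hgi : Integrable (Function.uncurry g) (volume.prod (volume.restrict S)) := by
    have hI : Integrable (fun w : ℝ × (ℝ × ℝ) =>
        Set.indicator (Set.Icc (-1 : ℝ) 1) (fun _ => ε⁻¹ * A * M) w.1)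
        (volume.prod (volume.restrict S)) :=
      Integrable.comp_fst ((integrable_indicator_iff measurableSet_Icc).2
        (continuous_const.integrableOn_Icc)) _
    refine hI.mono' hgm.aestronglyMeasurable ?_
    have : (volume : Measure ℝ).prod ((volume : Measure (ℝ × ℝ)).restrict S) =
        (volume.prod volume).restrict (Set.univ ×ˢ S) := by
      rw [← Measure.prod_restrict, Measure.restrict_univ]
    rw [this]
    filter_upwards [ae_restrict_mem (MeasurableSet.univ.prod hSm)] with w hw
    have hn : ‖Function.uncurry g w‖ = |w.2.1⁻¹ * k w.2.2 * Q (w.1 + w.2.2 * w.2.1, y - w.2.1)| := by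
      have := Complex.norm_exp_ofReal_mul_I (-(freq n * w.1))
      push_cast at this
      simp only [hg, Function.uncurry_def, norm_mul, Complex.norm_real, Real.norm_eq_abs]
      push_cast
      rw [this, one_mul, abs_mul, abs_mul]
    rw [hn]
    by_cases hx : w.1 ∈ Set.Icc (-1 : ℝ) 1
    · rw [Set.indicator_of_mem hx]
      exact h.integrand_bound hε (w.1, y) hw.2
    · rw [Set.indicator_of_notMem hx, h.integrand_zero hε hx hw.2]
      simp
  have hinner (p : ℝ × ℝ) : ∫ x, g x p = ((p.1⁻¹ : ℝ) : ℂ) *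
      (Complex.exp ((freq n * p.1 * p.2 : ℝ) * Complex.I) * k p.2) *
      fc n (fun x => (Q (x, y - p.1) : ℂ)) := by
    have := fc_shift n (fun x => (Q (x, y - p.1) : ℂ)) (p.2 * p.1)
    rw [show freq n * (p.2 * p.1) = freq n * p.1 * p.2 by ring] at this
    calc ∫ x, g x p = (((p.1⁻¹ : ℝ) : ℂ) * k p.2) *
        fc n (fun x => (Q (x + p.2 * p.1, y - p.1) : ℂ)) := by
          rw [fc, ← integral_const_mul]
          refine integral_congr_ae (Filter.Eventually.of_forall fun x => ?_)
          simp only [hg]; push_cast; ring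
      _ = _ := by rw [this]; ring
  calc fc n (fun x => (Kt k Q ε (x, y) : ℂ)) = ∫ x, ∫ p in S, g x p := by
        refine integral_congr_ae (Filter.Eventually.of_forall fun x => ?_)
        simp only [hg, Kt]
        rw [integral_const_mul]
        congr 1
        exact integral_complex_ofReal.symm
    _ = ∫ p in S, ∫ x, g x p := integral_integral_swap hgi
    _ = ∫ s in Set.Ioc ε 1, ∫ r in Set.Ioc (0 : ℝ) 1, ((s⁻¹ : ℝ) : ℂ) *
          (Complex.exp ((freq n * s * r : ℝ) * Complex.I) * k r) *
          fc n (fun x => (Q (x, y - s) : ℂ)) := by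
        have hi : Integrable (fun p : ℝ × ℝ => ∫ x, g x p) (volume.restrict S) :=
          hgi.integral_prod_right
        simp only [hinner] at hi ⊢
        rw [hS, Measure.volume_eq_prod] at hi ⊢
        exact setIntegral_prod _ hi
    _ = _ := by
        refine integral_congr_ae (Filter.Eventually.of_forall fun s => ?_)
        simp only
        rw [integral_mul_const, integral_const_mul, mult, intervalIntegral.integral_of_le zero_le_one]

/-- The truncated singular integral is bounded on `L²`, uniformly in the truncation. -/
theorem KtData.bound_L2 {k : ℝ → ℝ} {Q : ℝ × ℝ → ℝ} {M A : ℝ} (h : KtData k Q M A) {B : ℝ≥0}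
    (hB : ∀ ω : ℝ, ∫⁻ s in Set.Ioc (0 : ℝ) 1, ENNReal.ofReal s⁻¹ * ‖mult k (ω * s)‖ₑ ≤ B)
    {ε : ℝ} (hε : 0 < ε) :
    ∫⁻ z, ‖Kt k Q ε z‖ₑ ^ 2 ≤ (B : ℝ≥0∞) ^ 2 * ∫⁻ z, ‖Q z‖ₑ ^ 2 := by
  have hKm := Kt_measurable h.cont h.meas ε
  have hQm := h.meas
  set S := Set.Ioc ε 1 ×ˢ Set.Ioc (0 : ℝ) 1 with hS
  have hSm : MeasurableSet S := measurableSet_Ioc.prod measurableSet_Ioc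
  have hSfin : volume S < ∞ := by
    rw [hS, Measure.volume_eq_prod, Measure.prod_prod]
    exact ENNReal.mul_lt_top (by simp) (by simp)
  have hKb (z : ℝ × ℝ) : ‖Kt k Q ε z‖ ≤ ε⁻¹ * A * M * volume.real S :=
    norm_setIntegral_le_of_norm_le_const hSfin fun p hp => h.integrand_bound hε z hp
  have hK0 (x y : ℝ) (hx : x ∉ Set.Icc (-1 : ℝ) 1) : Kt k Q ε (x, y) = 0 := by
    refine setIntegral_eq_zero_of_forall_eq_zero fun p hp => ?_
    simp [h.integrand_zero hε (y := y) hx hp]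
  have parsK (y : ℝ) : ∑' n, ‖fc n (fun x => (Kt k Q ε (x, y) : ℂ))‖ₑ ^ 2 =
      4 * ∫⁻ x, ‖Kt k Q ε (x, y)‖ₑ ^ 2 := by
    rw [parseval (f := fun x => (Kt k Q ε (x, y) : ℂ)) (by fun_prop)
      (M := ε⁻¹ * A * M * volume.real S)]
    · simp [← ofReal_norm]
    · intro x; simpa using hKb (x, y)
    · intro x hx; simp [hK0 x y hx]
  have parsQ (y : ℝ) : ∑' n, ‖fc n (fun x => (Q (x, y) : ℂ))‖ₑ ^ 2 =
      4 * ∫⁻ x, ‖Q (x, y)‖ₑ ^ 2 := by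
    rw [parseval (f := fun x => (Q (x, y) : ℂ)) (by fun_prop) (M := M)]
    · simp [← ofReal_norm]
    · intro x; simpa using h.bound (x, y)
    · intro x hx
      rw [h.supp]
      · simp
      · intro hT
        have a := hT.1; have b := hT.2.1; have c := hT.2.2
        simp only at a b c
        exact hx ⟨by linarith, by linarith⟩
  have hGm (n : ℤ) : Measurable fun σ => ‖fc n (fun x => (Q (x, σ) : ℂ))‖ₑ := by
    have : Measurable fun w : ℝ × ℝ => Complex.exp (-(freq n * w.2 : ℝ) * Complex.I) *
      (Q (w.2, w.1) : ℂ) := by fun_prop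
    exact (this.stronglyMeasurable.integral_prod_right' (ν := volume)).measurable.enorm
  have hcm := (mult_continuous h.cont).measurable
  -- Young's inequality in `y`, one frequency at a time
  have young (n : ℤ) : ∫⁻ y, ‖fc n (fun x => (Kt k Q ε (x, y) : ℂ))‖ₑ ^ 2 ≤
      (B : ℝ≥0∞) ^ 2 * ∫⁻ y, ‖fc n (fun x => (Q (x, y) : ℂ))‖ₑ ^ 2 := by
    set w : ℝ → ℝ≥0∞ := fun s => ENNReal.ofReal s⁻¹ * ‖mult k (freq n * s)‖ₑ with hw
    set G : ℝ → ℝ≥0∞ := fun σ => ‖fc n (fun x => (Q (x, σ) : ℂ))‖ₑ with hG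
    have hwm : Measurable w := by fun_prop
    have hGm' : Measurable G := hGm n
    have hsub : Set.Ioc ε 1 ⊆ Set.Ioc 0 1 := Set.Ioc_subset_Ioc_left hε.le
    have pt (y : ℝ) : ‖fc n (fun x => (Kt k Q ε (x, y) : ℂ))‖ₑ ^ 2 ≤
        B * ∫⁻ s in Set.Ioc (0 : ℝ) 1, w s * G (y - s) ^ 2 := by
      calc ‖fc n (fun x => (Kt k Q ε (x, y) : ℂ))‖ₑ ^ 2
          ≤ (∫⁻ s in Set.Ioc (0 : ℝ) 1, w s * G (y - s)) ^ 2 := by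
            gcongr
            rw [h.fc_Kt hε]
            refine (enorm_integral_le_lintegral_enorm _).trans ?_
            refine le_trans ?_ (lintegral_mono_set hsub)
            refine setLIntegral_mono' measurableSet_Ioc fun s hs => ?_
            rw [enorm_mul, enorm_mul]
            have : ‖((s⁻¹ : ℝ) : ℂ)‖ₑ = ENNReal.ofReal s⁻¹ := by
              rw [← ofReal_norm, Complex.norm_real, Real.norm_of_nonneg]
              exact inv_nonneg.2 (hε.trans hs.1).le
            rw [this]
        _ ≤ (∫⁻ s in Set.Ioc (0 : ℝ) 1, w s) * ∫⁻ s in Set.Ioc (0 : ℝ) 1, w s * G (y - s) ^ 2 :=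
            sq_lintegral_mul_le _ hwm.aemeasurable
              (by fun_prop : Measurable fun s => G (y - s)).aemeasurable
        _ ≤ _ := by gcongr; exact hB _
    calc ∫⁻ y, ‖fc n (fun x => (Kt k Q ε (x, y) : ℂ))‖ₑ ^ 2
        ≤ ∫⁻ y, B * ∫⁻ s in Set.Ioc (0 : ℝ) 1, w s * G (y - s) ^ 2 := lintegral_mono pt
      _ = B * ∫⁻ y, ∫⁻ s in Set.Ioc (0 : ℝ) 1, w s * G (y - s) ^ 2 :=
          lintegral_const_mul' _ _ (by simp)
      _ = B * ∫⁻ s in Set.Ioc (0 : ℝ) 1, ∫⁻ y, w s * G (y - s) ^ 2 := by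
          rw [lintegral_lintegral_swap]
          refine Measurable.aemeasurable ?_
          simp only [Function.uncurry_def]
          fun_prop
      _ = B * ∫⁻ s in Set.Ioc (0 : ℝ) 1, w s * ∫⁻ y, G y ^ 2 := by
          congr 1
          refine lintegral_congr fun s => ?_
          rw [lintegral_const_mul _ (by fun_prop),
            lintegral_sub_right_eq_self (fun y => G y ^ 2) s]
      _ = B * ((∫⁻ s in Set.Ioc (0 : ℝ) 1, w s) * ∫⁻ y, G y ^ 2) := by
          rw [lintegral_mul_const _ hwm]
      _ ≤ B * (B * ∫⁻ y, G y ^ 2) := by gcongr; exact hB _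
      _ = _ := by ring
  have e1 : ∫⁻ z, ‖Kt k Q ε z‖ₑ ^ 2 = ∫⁻ y, ∫⁻ x, ‖Kt k Q ε (x, y)‖ₑ ^ 2 := by
    rw [Measure.volume_eq_prod, lintegral_prod_symm' _ (by fun_prop)]
  have e2 : ∫⁻ z, ‖Q z‖ₑ ^ 2 = ∫⁻ y, ∫⁻ x, ‖Q (x, y)‖ₑ ^ 2 := by
    rw [Measure.volume_eq_prod, lintegral_prod_symm' _ (by fun_prop)]
  have hGKm (n : ℤ) : Measurable fun σ => ‖fc n (fun x => (Kt k Q ε (x, σ) : ℂ))‖ₑ ^ 2 := by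
    have : Measurable fun w : ℝ × ℝ => Complex.exp (-(freq n * w.2 : ℝ) * Complex.I) *
      (Kt k Q ε (w.2, w.1) : ℂ) := by fun_prop
    exact (this.stronglyMeasurable.integral_prod_right' (ν := volume)).measurable.enorm.pow_const 2
  have key : 4 * ∫⁻ z, ‖Kt k Q ε z‖ₑ ^ 2 ≤ 4 * ((B : ℝ≥0∞) ^ 2 * ∫⁻ z, ‖Q z‖ₑ ^ 2) := by
    calc 4 * ∫⁻ z, ‖Kt k Q ε z‖ₑ ^ 2
        = ∫⁻ y, ∑' n, ‖fc n (fun x => (Kt k Q ε (x, y) : ℂ))‖ₑ ^ 2 := by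
          simp only [parsK]
          rw [lintegral_const_mul' _ _ (by simp), e1]
      _ = ∑' n, ∫⁻ y, ‖fc n (fun x => (Kt k Q ε (x, y) : ℂ))‖ₑ ^ 2 :=
          lintegral_tsum fun n => (hGKm n).aemeasurable
      _ ≤ ∑' n, (B : ℝ≥0∞) ^ 2 * ∫⁻ y, ‖fc n (fun x => (Q (x, y) : ℂ))‖ₑ ^ 2 :=
          ENNReal.tsum_le_tsum young
      _ = (B : ℝ≥0∞) ^ 2 * ∫⁻ y, ∑' n, ‖fc n (fun x => (Q (x, y) : ℂ))‖ₑ ^ 2 := by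
          rw [ENNReal.tsum_mul_left, lintegral_tsum fun n => ((hGm n).pow_const 2).aemeasurable]
      _ = _ := by
          simp only [parsQ]
          rw [lintegral_const_mul' _ _ (by simp), e2]
          ring
  exact (ENNReal.mul_le_mul_iff_right (by simp) (by simp)).1 key

/-! ### Cone averages -/

theorem IsPoly.differentiableAt {n : ℕ} {F : ℝ × ℝ → ℝ} (hF : IsPoly n F) (z : ℝ × ℝ) :
    DifferentiableAt ℝ F z := (hF.hasFDerivAt z).differentiableAt

theorem D_add {v z : ℝ × ℝ} {F G : ℝ × ℝ → ℝ} (hF : DifferentiableAt ℝ F z)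
    (hG : DifferentiableAt ℝ G z) : D v (fun z => F z + G z) z = D v F z + D v G z := by
  simp [D, fderiv_fun_add hF hG]

theorem D_sub {v z : ℝ × ℝ} {F G : ℝ × ℝ → ℝ} (hF : DifferentiableAt ℝ F z)
    (hG : DifferentiableAt ℝ G z) : D v (fun z => F z - G z) z = D v F z - D v G z := by
  simp [D, fderiv_fun_sub hF hG]

theorem D_neg {v z : ℝ × ℝ} {F : ℝ × ℝ → ℝ} : D v (fun z => - F z) z = - D v F z := by
  simp [D, fderiv_fun_neg]

theorem D_mul {v z : ℝ × ℝ} {F G : ℝ × ℝ → ℝ} (hF : DifferentiableAt ℝ F z)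
    (hG : DifferentiableAt ℝ G z) :
    D v (fun z => F z * G z) z = D v F z * G z + F z * D v G z := by
  simp [D, fderiv_fun_mul hF hG]; ring

theorem D_const_mul {v z : ℝ × ℝ} {F : ℝ × ℝ → ℝ} (hF : DifferentiableAt ℝ F z) (c : ℝ) :
    D v (fun z => c * F z) z = c * D v F z := by
  simp [D, fderiv_const_mul hF]

@[simp] theorem D_const (v z : ℝ × ℝ) (c : ℝ) : D v (fun _ => c) z = 0 := by
  simp [D]

@[simp] theorem D_fst (v z : ℝ × ℝ) : D v (fun z => z.1) z = v.1 := by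
  simp [D, fderiv_fst]

@[simp] theorem D_snd (v z : ℝ × ℝ) : D v (fun z => z.2) z = v.2 := by
  simp [D, fderiv_snd]

theorem D_comp {v z : ℝ × ℝ} {F a b : ℝ × ℝ → ℝ} (hF : DifferentiableAt ℝ F (a z, b z))
    (ha : DifferentiableAt ℝ a z) (hb : DifferentiableAt ℝ b z) :
    D v (fun z => F (a z, b z)) z = D v a z * D e1 F (a z, b z) + D v b z * D e2 F (a z, b z) := by
  have h := hF.hasFDerivAt.comp (f := fun z => (a z, b z)) z (ha.hasFDerivAt.prodMk hb.hasFDerivAt)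
  have h2 : D v (fun z => F (a z, b z)) z = fderiv ℝ F (a z, b z) (D v a z, D v b z) := by
    rw [D, (show HasFDerivAt (fun z => F (a z, b z)) _ z from h).fderiv]
    simp [D]
  rw [h2, fderiv_apply_eq]

/-- Derivative along a parametrized segment. -/
theorem IsPoly.hasDerivAt_comp {n : ℕ} {F : ℝ × ℝ → ℝ} (hF : IsPoly n F) {a b : ℝ → ℝ} {a' b' t : ℝ}
    (ha : HasDerivAt a a' t) (hb : HasDerivAt b b' t) :
    HasDerivAt (fun t => F (a t, b t)) (a' * Tri.D e1 F (a t, b t) + b' * Tri.D e2 F (a t, b t)) t := by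
  have := (hF.hasFDerivAt (a t, b t)).comp_hasDerivAt (f := fun t => (a t, b t)) t (ha.prodMk hb)
  rwa [fderiv_apply_eq] at this

/-- The averaged integral `∫_0^y ∫_0^1 κ r * q (x + r σ, y - σ) dr dσ` of `q` over the triangle with
vertices `z = (x, y)`, `(x, 0)` and `(x + y, 0)`. The parameter is `p = (r, σ / y)`: with this
scaling the integrand is polynomial in `z` over a fixed domain. -/
def UU (κ : ℝ → ℝ) (q : ℝ × ℝ → ℝ) (z : ℝ × ℝ) : ℝ :=
  ∫ p in Set.Icc (0 : ℝ) 1 ×ˢ Set.Icc (0 : ℝ) 1,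
    κ p.1 * (z.2 * q (z.1 + p.1 * p.2 * z.2, (1 - p.2) * z.2))

theorem isCompact_sq : IsCompact (Set.Icc (0 : ℝ) 1 ×ˢ Set.Icc (0 : ℝ) 1) :=
  isCompact_Icc.prod isCompact_Icc

variable {κ : ℝ → ℝ} {q : ℝ × ℝ → ℝ} {k : ℕ}

theorem UU_fam (hκ : Continuous κ) (hq : IsPoly (k - 1) q) (hk : 1 ≤ k) :
    PolyFam (Ω := ℝ × ℝ) k
      (fun p z => κ p.1 * (z.2 * q (z.1 + p.1 * p.2 * z.2, (1 - p.2) * z.2))) := by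
  have h1 : PolyFam (Ω := ℝ × ℝ) 1 (fun p z => z.1 + p.1 * p.2 * z.2) := by
    simpa using PolyFam.affine (Ω := ℝ × ℝ) (a := fun _ => 0) (b := fun _ => 1)
      (c := fun p => p.1 * p.2) (by fun_prop) (by fun_prop) (by fun_prop)
  have h2 : PolyFam (Ω := ℝ × ℝ) 1 (fun p z => (1 - p.2) * z.2) := by
    simpa using PolyFam.affine (Ω := ℝ × ℝ) (a := fun _ => 0) (b := fun _ => 0)
      (c := fun p => 1 - p.2) (by fun_prop) (by fun_prop) (by fun_prop)
  have := PolyFam.coef_mul (c := fun p : ℝ × ℝ => κ p.1) (by fun_prop)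
    (PolyFam.snd.mul (PolyFam.comp hq h1 h2))
  exact this.mono (by omega)

theorem UU_isPoly (hκ : Continuous κ) (hq : IsPoly (k - 1) q) (hk : 1 ≤ k) : IsPoly k (UU κ q) :=
  (UU_fam hκ hq hk).integral (integrable_restrict isCompact_sq)

theorem UU_zero (x : ℝ) : UU κ q (x, 0) = 0 := by simp [UU]

theorem D_UU (hκ : Continuous κ) (hq : IsPoly (k - 1) q) (hk : 1 ≤ k) (v z : ℝ × ℝ) :
    D v (UU κ q) z = ∫ p in Set.Icc (0 : ℝ) 1 ×ˢ Set.Icc (0 : ℝ) 1,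
      κ p.1 * (v.2 * q (z.1 + p.1 * p.2 * z.2, (1 - p.2) * z.2) +
        z.2 * ((v.1 + p.1 * p.2 * v.2) * D e1 q (z.1 + p.1 * p.2 * z.2, (1 - p.2) * z.2) +
          (1 - p.2) * v.2 * D e2 q (z.1 + p.1 * p.2 * z.2, (1 - p.2) * z.2))) := by
  unfold UU
  rw [(UU_fam hκ hq hk).D_integral (integrable_restrict isCompact_sq)]
  refine integral_congr_ae (Filter.Eventually.of_forall fun p => ?_)
  have hd1 : DifferentiableAt ℝ (fun z : ℝ × ℝ => z.1 + p.1 * p.2 * z.2) z := by fun_prop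
  have hd2 : DifferentiableAt ℝ (fun z : ℝ × ℝ => (1 - p.2) * z.2) z := by fun_prop
  have hq' := hq.differentiableAt (z.1 + p.1 * p.2 * z.2, (1 - p.2) * z.2)
  have hqc : DifferentiableAt ℝ
      (fun z : ℝ × ℝ => q (z.1 + p.1 * p.2 * z.2, (1 - p.2) * z.2)) z :=
    hq'.comp z (f := fun z : ℝ × ℝ => (z.1 + p.1 * p.2 * z.2, (1 - p.2) * z.2)) (hd1.prodMk hd2)
  simp only
  rw [D_const_mul (by fun_prop), D_mul (by fun_prop) hqc, D_comp hq' hd1 hd2,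
    D_add (by fun_prop) (by fun_prop), D_const_mul (by fun_prop), D_const_mul (by fun_prop)]
  simp only [D_fst, D_snd]

theorem integral_sq_eq {f : ℝ × ℝ → ℝ} (hf : Continuous f) :
    ∫ p in Set.Icc (0 : ℝ) 1 ×ˢ Set.Icc (0 : ℝ) 1, f p =
      ∫ r in (0 : ℝ)..1, ∫ s in (0 : ℝ)..1, f (r, s) := by
  have := hf.continuousOn.integrableOn_compact (μ := volume) isCompact_sq
  rw [Measure.volume_eq_prod] at this ⊢
  rw [setIntegral_prod _ this]
  simp [intervalIntegral.integral_of_le, integral_Icc_eq_integral_Ioc]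

/-- The cone average trades a vertical derivative for a horizontal one. -/
theorem D_e2_UU (hκ : Continuous κ) (hq : IsPoly (k - 1) q) (hk : 1 ≤ k) (z : ℝ × ℝ) :
    D e2 (UU κ q) z = (∫ r in (0 : ℝ)..1, κ r) * q z + D e1 (UU (fun r => r * κ r) q) z := by
  have c0 := hq.cont
  have c1 := (hq.D e1).cont
  have c2 := (hq.D e2).cont
  rw [D_UU hκ hq hk, D_UU (by fun_prop) hq hk, ← sub_eq_iff_eq_add,
    ← integral_sub (integrable_restrict isCompact_sq _ (by fun_prop))
      (integrable_restrict isCompact_sq _ (by fun_prop)), integral_sq_eq (by fun_prop),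
    ← intervalIntegral.integral_mul_const]
  refine intervalIntegral.integral_congr fun r _ => ?_
  have key (s : ℝ) : HasDerivAt
      (fun s => κ r * ((s - 1) * q (z.1 + r * s * z.2, (1 - s) * z.2)))
      (κ r * (q (z.1 + r * s * z.2, (1 - s) * z.2) + z.2 *
        (r * (s - 1) * D e1 q (z.1 + r * s * z.2, (1 - s) * z.2) +
          (1 - s) * D e2 q (z.1 + r * s * z.2, (1 - s) * z.2)))) s := by
    have ha : HasDerivAt (fun s : ℝ => z.1 + r * s * z.2) (r * z.2) s := by
      simpa using (((hasDerivAt_id s).const_mul r).mul_const z.2).const_add z.1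
    have hb : HasDerivAt (fun s : ℝ => (1 - s) * z.2) (-z.2) s := by
      simpa using ((hasDerivAt_id s).const_sub 1).mul_const z.2
    have hc : HasDerivAt (fun s : ℝ => s - 1) 1 s := (hasDerivAt_id s).sub_const 1
    exact ((hc.mul (hq.hasDerivAt_comp ha hb)).const_mul (κ r)).congr_deriv (by ring)
  have := intervalIntegral.integral_eq_sub_of_hasDerivAt (a := 0) (b := 1) (fun s _ => key s)
    (Continuous.intervalIntegrable (by fun_prop) _ _)
  calc _ = ∫ s in (0 : ℝ)..1, (κ r * (q (z.1 + r * s * z.2, (1 - s) * z.2) + z.2 *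
        (r * (s - 1) * D e1 q (z.1 + r * s * z.2, (1 - s) * z.2) +
          (1 - s) * D e2 q (z.1 + r * s * z.2, (1 - s) * z.2)))) := by
        refine intervalIntegral.integral_congr fun s _ => ?_
        simp only
        ring
    _ = _ := by rw [this]; simp

/-! ### A right inverse vanishing on one edge -/

variable {κ κ' : ℝ → ℝ} {q : ℝ × ℝ → ℝ} {k : ℕ}

/-- Horizontal average of `q_x` over the segment at depth `σ` below the point `z`. -/
def mm (κ : ℝ → ℝ) (q : ℝ × ℝ → ℝ) (z : ℝ × ℝ) (σ : ℝ) : ℝ :=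
  ∫ r in (0 : ℝ)..1, κ r * D e1 q (z.1 + r * σ, z.2 - σ)

theorem mm_continuous (hκ : Continuous κ) (hq : IsPoly k q) (z : ℝ × ℝ) :
    Continuous (mm κ q z) := by
  have c1 := (hq.D e1).cont
  refine intervalIntegral.continuous_parametric_intervalIntegral_of_continuous' ?_ _ _
  simp only [Function.uncurry_def]
  fun_prop

theorem D_e1_UU (hκ : Continuous κ) (hq : IsPoly (k - 1) q) (hk : 1 ≤ k) (z : ℝ × ℝ) :
    D e1 (UU κ q) z = ∫ σ in (0 : ℝ)..z.2, mm κ q z σ := by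
  have c0 := hq.cont
  have c1 := (hq.D e1).cont
  have c2 := (hq.D e2).cont
  rw [D_UU hκ hq hk, Measure.volume_eq_prod, ← setIntegral_prod_swap, ← Measure.volume_eq_prod,
    integral_sq_eq (by fun_prop)]
  have h := intervalIntegral.mul_integral_comp_mul_right (a := 0) (b := 1) (f := mm κ q z) z.2
  rw [zero_mul, one_mul] at h
  rw [← h, ← intervalIntegral.integral_const_mul]
  refine intervalIntegral.integral_congr fun s _ => ?_
  simp only [mm]
  rw [← intervalIntegral.integral_const_mul]
  refine intervalIntegral.integral_congr fun r _ => ?_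
  simp only [Prod.fst_swap, Prod.snd_swap]
  rw [show z.1 + r * s * z.2 = z.1 + r * (s * z.2) by ring,
    show (1 - s) * z.2 = z.2 - s * z.2 by ring]
  ring

/-- Integration by parts in the horizontal average. -/
theorem mm_eq (hκ : ∀ r, HasDerivAt κ (κ' r) r) (hκ' : Continuous κ') (h0 : κ 0 = 0) (h1 : κ 1 = 0)
    (hq : IsPoly k q) (z : ℝ × ℝ) {σ : ℝ} (hσ : 0 < σ) :
    mm κ q z σ = -∫ r in (0 : ℝ)..1, σ⁻¹ * κ' r * q (z.1 + r * σ, z.2 - σ) := by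
  have c0 := hq.cont
  have c1 := (hq.D e1).cont
  have hκc : Continuous κ := continuous_iff_continuousAt.2 fun r => (hκ r).continuousAt
  have key (r : ℝ) : HasDerivAt (fun r => σ⁻¹ * (κ r * q (z.1 + r * σ, z.2 - σ)))
      (κ r * D e1 q (z.1 + r * σ, z.2 - σ) + σ⁻¹ * κ' r * q (z.1 + r * σ, z.2 - σ)) r := by
    have ha : HasDerivAt (fun r : ℝ => z.1 + r * σ) σ r := by
      simpa using ((hasDerivAt_id r).mul_const σ).const_add z.1
    have hb : HasDerivAt (fun r : ℝ => z.2 - σ) 0 r := hasDerivAt_const _ _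
    refine (((hκ r).mul (hq.hasDerivAt_comp ha hb)).const_mul σ⁻¹).congr_deriv ?_
    field_simp
    ring
  have := intervalIntegral.integral_eq_sub_of_hasDerivAt (a := 0) (b := 1) (fun s _ => key s)
    (Continuous.intervalIntegrable (by fun_prop) _ _)
  rw [intervalIntegral.integral_add (Continuous.intervalIntegrable (by fun_prop) _ _)
    (Continuous.intervalIntegrable (by fun_prop) _ _)] at this
  simp only [h0, h1] at this
  rw [mm]
  linarith

/-- For `z = (x, y)` in the triangle, `(x + r s, y - s)` stays in `T` at the scales `s < y` and leaves it
at the scales `s ≥ y`, so that the indicator only truncates the integral over `s`. -/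
theorem Kt_eq {M A : ℝ} (h : KtData κ' (T.indicator q) M A) {z : ℝ × ℝ}
    (hz : z ∈ T) {ε : ℝ} (hε : 0 < ε) (hεz : ε < z.2) :
    Kt κ' (T.indicator q) ε z = ∫ s in ε..z.2, ∫ r in (0 : ℝ)..1,
      s⁻¹ * κ' r * q (z.1 + r * s, z.2 - s) := by
  obtain ⟨z1, z2, z3⟩ := hz
  have hm : MeasurableSet (Set.Ioc ε 1 ×ˢ Set.Ioc (0 : ℝ) 1) :=
    measurableSet_Ioc.prod measurableSet_Ioc
  have hI : IntegrableOn (fun p : ℝ × ℝ =>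
      p.1⁻¹ * κ' p.2 * T.indicator q (z.1 + p.2 * p.1, z.2 - p.1))
      (Set.Ioc ε 1 ×ˢ Set.Ioc (0 : ℝ) 1) := by
    refine IntegrableOn.of_bound ?_ ?_ (ε⁻¹ * A * M) ?_
    · rw [Measure.volume_eq_prod, Measure.prod_prod]
      exact ENNReal.mul_lt_top (by simp) (by simp)
    · have := h.cont.measurable; have := h.meas
      exact (by fun_prop : Measurable fun p : ℝ × ℝ =>
        p.1⁻¹ * κ' p.2 * T.indicator q (z.1 + p.2 * p.1, z.2 - p.1)).aestronglyMeasurable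
    · filter_upwards [ae_restrict_mem hm] with p hp
      exact h.integrand_bound hε z hp
  rw [Kt]
  rw [Measure.volume_eq_prod] at hI ⊢
  rw [setIntegral_prod _ hI, intervalIntegral.integral_of_le hεz.le,
    integral_Ioc_eq_integral_Ioo (y := z.2)]
  have hsub : Set.Ioo ε z.2 ⊆ Set.Ioc ε 1 := fun s hs => ⟨hs.1, by linarith [hs.2]⟩
  rw [setIntegral_eq_of_subset_of_forall_sdiff_eq_zero measurableSet_Ioc hsub]
  · refine setIntegral_congr_fun measurableSet_Ioo fun s hs => ?_
    simp only
    rw [intervalIntegral.integral_of_le zero_le_one]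
    refine setIntegral_congr_fun measurableSet_Ioc fun r hr => ?_
    rw [Set.indicator_of_mem]
    have hs0 : 0 < s := hε.trans hs.1
    refine ⟨?_, ?_, ?_⟩
    · simp only; nlinarith [hr.1]
    · simp only; linarith [hs.2]
    · simp only; nlinarith [hr.2]
  · intro s hs
    refine setIntegral_eq_zero_of_forall_eq_zero fun r _ => ?_
    rw [Set.indicator_of_notMem, mul_zero]
    intro hT
    have := hT.2.1
    simp only at this
    exact hs.2 ⟨hs.1.1, by linarith⟩

theorem T_subset_sq : T ⊆ Set.Icc (0 : ℝ) 1 ×ˢ Set.Icc (0 : ℝ) 1 := fun z hz =>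
  ⟨⟨hz.1.le, by linarith [hz.2.1, hz.2.2]⟩, ⟨hz.2.1.le, by linarith [hz.1, hz.2.2]⟩⟩

theorem exists_KtData (hκ' : Continuous κ') (hq : IsPoly k q) :
    ∃ M A, KtData κ' (T.indicator q) M A := by
  obtain ⟨M, hM⟩ := isCompact_sq.exists_bound_of_continuousOn hq.cont.continuousOn
  obtain ⟨A, hA⟩ := (isCompact_Icc (a := (0 : ℝ)) (b := 1)).exists_bound_of_continuousOn
    hκ'.continuousOn
  refine ⟨M, A, hq.meas.indicator measurableSet_T, fun z => ?_, fun z hz =>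
    Set.indicator_of_notMem hz _, hκ', hA⟩
  by_cases hz : z ∈ T
  · rw [Set.indicator_of_mem hz]; exact hM z (T_subset_sq hz)
  · rw [Set.indicator_of_notMem hz, abs_zero]
    exact (norm_nonneg _).trans (hM (0, 0) (by simp))

/-- The horizontal derivative of the cone average is the limit of truncated singular integrals with
kernel `κ'`. -/
theorem tendsto_Kt (hκ : ∀ r, HasDerivAt κ (κ' r) r) (hκ' : Continuous κ') (h0 : κ 0 = 0)
    (h1 : κ 1 = 0) (hq : IsPoly (k - 1) q) (hk : 1 ≤ k) {z : ℝ × ℝ} (hz : z ∈ T) :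
    Filter.Tendsto (fun n : ℕ => Kt κ' (T.indicator q) (1 / ((n : ℝ) + 1)) z) Filter.atTop
      (nhds (-D e1 (UU κ q) z)) := by
  have hκc : Continuous κ := continuous_iff_continuousAt.2 fun r => (hκ r).continuousAt
  have hmc := mm_continuous hκc hq z
  obtain ⟨M, A, hd⟩ := exists_KtData hκ' hq
  have hε : Filter.Tendsto (fun n : ℕ => 1 / ((n : ℝ) + 1)) Filter.atTop (nhds 0) :=
    tendsto_one_div_add_atTop_nhds_zero_nat
  have hprim : Continuous fun ε : ℝ => ∫ σ in (0 : ℝ)..ε, mm κ q z σ :=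
    intervalIntegral.continuous_primitive (fun a b => hmc.intervalIntegrable a b) 0
  have hlim : Filter.Tendsto (fun n : ℕ => (∫ σ in (0 : ℝ)..(1 / ((n : ℝ) + 1)), mm κ q z σ) -
      D e1 (UU κ q) z) Filter.atTop (nhds (-D e1 (UU κ q) z)) := by
    simpa using ((hprim.tendsto 0).comp hε).sub_const (D e1 (UU κ q) z)
  refine hlim.congr' ?_
  filter_upwards [hε.eventually_lt_const hz.2.1] with n hn
  have hpos : (0 : ℝ) < 1 / ((n : ℝ) + 1) := by positivity
  rw [Kt_eq hd hz hpos hn, D_e1_UU hκc hq hk,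
    ← intervalIntegral.integral_add_adjacent_intervals (hmc.intervalIntegrable 0 (1 / ((n : ℝ) + 1)))
      (hmc.intervalIntegrable _ z.2)]
  rw [sub_add_eq_sub_sub, sub_self, zero_sub, ← intervalIntegral.integral_neg]
  refine intervalIntegral.integral_congr fun σ hσ => ?_
  rw [Set.uIcc_of_le hn.le] at hσ
  rw [mm_eq hκ hκ' h0 h1 hq z (hpos.trans_le hσ.1), neg_neg]

/-- The horizontal derivative of the cone average is bounded on `L²`, by Fatou's lemma and the bound
for the truncated singular integrals. -/
theorem L2T_D_e1_UU (hκ : ∀ r, HasDerivAt κ (κ' r) r) (hκ' : ContDiff ℝ 1 κ') (h0 : κ 0 = 0)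
    (h1 : κ 1 = 0) : ∃ C : ℝ≥0, ∀ k : ℕ, 1 ≤ k → ∀ q, IsPoly (k - 1) q →
      L2T (D e1 (UU κ q)) ≤ C * L2T q := by
  have hmean : ∫ r in (0 : ℝ)..1, κ' r = 0 := by
    rw [intervalIntegral.integral_eq_sub_of_hasDerivAt (fun r _ => hκ r)
      (hκ'.continuous.intervalIntegrable _ _), h0, h1, sub_zero]
  obtain ⟨B, hB⟩ := lintegral_mult_le hκ' hmean
  refine ⟨B ^ 2, fun k hk q hq => ?_⟩
  obtain ⟨M, A, hd⟩ := exists_KtData hκ'.continuous hq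
  have hQ : ∫⁻ z, ‖T.indicator q z‖ₑ ^ 2 = L2T q := by
    rw [L2T, N2, ← lintegral_indicator measurableSet_T]
    refine lintegral_congr fun z => ?_
    by_cases hz : z ∈ T <;> simp [hz]
  calc L2T (D e1 (UU κ q))
      = ∫⁻ z in T, Filter.liminf (fun n : ℕ =>
          ‖Kt κ' (T.indicator q) (1 / ((n : ℝ) + 1)) z‖ₑ ^ 2) Filter.atTop := by
        refine setLIntegral_congr_fun measurableSet_T fun z hz => ?_
        have := (tendsto_Kt hκ hκ'.continuous h0 h1 hq hk hz)
        have h2 := ((ENNReal.continuous_pow 2).tendsto _).comp ((continuous_enorm.tendsto _).comp this)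
        rw [enorm_neg] at h2
        exact h2.liminf_eq.symm
    _ ≤ Filter.liminf (fun n : ℕ =>
          ∫⁻ z in T, ‖Kt κ' (T.indicator q) (1 / ((n : ℝ) + 1)) z‖ₑ ^ 2) Filter.atTop :=
        lintegral_liminf_le fun n =>
          ((Kt_measurable hd.cont hd.meas _).enorm.pow_const 2)
    _ ≤ Filter.liminf (fun _ : ℕ => (B : ℝ≥0∞) ^ 2 * L2T q) Filter.atTop := by
        refine Filter.liminf_le_liminf (Filter.Eventually.of_forall fun n => ?_)
        rw [← hQ]
        exact (setLIntegral_le_lintegral _ _).trans (hd.bound_L2 hB (by positivity))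
    _ = _ := by rw [Filter.liminf_const]; push_cast; rfl

/-- The field `(u1, u2)` has polynomial components of degree at most `k` and divergence `q`, and the
squared `L²` norm of each of its first derivatives is at most `C` times that of `q`. -/
structure Sol (k : ℕ) (q : ℝ × ℝ → ℝ) (C : ℝ≥0) (u1 u2 : ℝ × ℝ → ℝ) : Prop where
  poly1 : IsPoly k u1
  poly2 : IsPoly k u2
  div : ∀ z, D e1 u1 z + D e2 u2 z = q z
  b11 : L2T (D e1 u1) ≤ C * L2T q
  b12 : L2T (D e2 u1) ≤ C * L2T q
  b21 : L2T (D e1 u2) ≤ C * L2T q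
  b22 : L2T (D e2 u2) ≤ C * L2T q

theorem L2T_neg (f : ℝ × ℝ → ℝ) : L2T (fun z => - f z) = L2T f := by simp [L2T]

theorem L2T_const_mul (c : ℝ) (f : ℝ × ℝ → ℝ) :
    L2T (fun z => c * f z) = (‖c‖₊ : ℝ≥0∞) ^ 2 * L2T f := by
  rw [L2T, L2T, ← N2_const_mul]; simp [enorm_mul]; rfl

theorem L2T_add {f g : ℝ × ℝ → ℝ} (hf : Measurable f) :
    L2T (fun z => f z + g z) ≤ 2 * (L2T f + L2T g) := by
  refine le_trans (N2_mono fun z _ => ?_) (N2_add hf.enorm)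
  exact enorm_add_le _ _

/-- For every polynomial `q`, without any vertex or mean value condition, there is a stable right
inverse of the divergence vanishing on the edge `y = 0`. -/
theorem exists_sol_one_edge : ∃ C : ℝ≥0, ∀ k : ℕ, 1 ≤ k → ∀ q, IsPoly (k - 1) q →
    ∃ u1 u2, Sol k q C u1 u2 ∧ (∀ x, u1 (x, 0) = 0) ∧ (∀ x, u2 (x, 0) = 0) := by
  -- `θ` has mass one, and `θ`, `r θ`, `r² θ` vanish at `0` and `1`, as the singular integral requires
  let θ : ℝ → ℝ := fun r => 6 * r * (1 - r)
  have hκ0 (r : ℝ) : HasDerivAt θ (6 - 12 * r) r := by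
    have := ((hasDerivAt_id r).const_mul 6).mul ((hasDerivAt_id r).const_sub 1)
    exact this.congr_deriv (by simp; ring)
  have hκ1 (r : ℝ) : HasDerivAt (fun r => r * θ r) (12 * r - 18 * r ^ 2) r := by
    have := (hasDerivAt_id r).mul (hκ0 r)
    exact this.congr_deriv (by simp [θ]; ring)
  have hκ2 (r : ℝ) : HasDerivAt (fun r => r * (r * θ r)) (18 * r ^ 2 - 24 * r ^ 3) r := by
    have := (hasDerivAt_id r).mul (hκ1 r)
    exact this.congr_deriv (by simp [θ]; ring)
  obtain ⟨C0, h0⟩ := L2T_D_e1_UU hκ0 (by fun_prop) (by simp [θ]) (by simp [θ])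
  obtain ⟨C1, h1⟩ := L2T_D_e1_UU hκ1 (by fun_prop) (by simp [θ]) (by simp [θ])
  obtain ⟨C2, h2⟩ := L2T_D_e1_UU hκ2 (by fun_prop) (by simp [θ]) (by simp [θ])
  have c0 : Continuous θ := by fun_prop
  have c1 : Continuous fun r => r * θ r := by fun_prop
  have i0 : ∫ r in (0 : ℝ)..1, θ r = 1 := by
    have h (r : ℝ) : HasDerivAt (fun r => 3 * r ^ 2 - 2 * r ^ 3) (θ r) r := by
      have := ((hasDerivAt_pow 2 r).const_mul 3).sub ((hasDerivAt_pow 3 r).const_mul 2)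
      exact this.congr_deriv (by simp [θ]; ring)
    rw [intervalIntegral.integral_eq_sub_of_hasDerivAt (fun r _ => h r)
      (c0.intervalIntegrable _ _)]; norm_num
  set m : ℝ := ∫ r in (0 : ℝ)..1, r * θ r with hm
  set C : ℝ≥0 := C0 + 2 * (‖m‖₊ ^ 2 + C2) + 2 * (1 + C1) with hC
  have hle (a b : ℝ≥0) (X : ℝ≥0∞) (hab : a ≤ b) : (a : ℝ≥0∞) * X ≤ b * X := by gcongr
  refine ⟨C, fun k hk q hq => ?_⟩
  have p0 := UU_isPoly c0 hq hk
  have p1 := UU_isPoly c1 hq hk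
  refine ⟨fun z => -UU (fun r => r * θ r) q z, UU θ q, ⟨p1.neg, p0, fun z => ?_, ?_, ?_, ?_, ?_⟩,
    fun x => by simp [UU_zero], fun x => UU_zero x⟩
  · rw [D_neg, D_e2_UU c0 hq hk, i0]; ring
  · rw [show D e1 (fun z => -UU (fun r => r * θ r) q z) = fun z => -D e1 (UU (fun r => r * θ r) q) z
      from funext fun z => D_neg, L2T_neg]
    refine (h1 k hk q hq).trans (hle _ _ _ ?_)
    rw [hC]; exact le_add_left ((le_add_left le_rfl : C1 ≤ 1 + C1).trans
      (le_mul_of_one_le_left (by positivity) (by norm_num)))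
  · rw [show D e2 (fun z => -UU (fun r => r * θ r) q z) = fun z => -D e2 (UU (fun r => r * θ r) q) z
      from funext fun z => D_neg, L2T_neg, funext (D_e2_UU c1 hq hk)]
    refine (L2T_add (hq.meas.const_mul _)).trans ?_
    rw [L2T_const_mul]
    calc _ ≤ 2 * ((‖m‖₊ : ℝ≥0∞) ^ 2 * L2T q + C2 * L2T q) := by gcongr; exact h2 k hk q hq
      _ = ((2 * (‖m‖₊ ^ 2 + C2) : ℝ≥0) : ℝ≥0∞) * L2T q := by push_cast; ring
      _ ≤ _ := hle _ _ _ (by rw [hC]; exact le_add_right (le_add_left le_rfl))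
  · refine (h0 k hk q hq).trans (hle _ _ _ ?_)
    rw [hC]; exact le_add_right (le_add_right le_rfl)
  · rw [funext (D_e2_UU c0 hq hk)]
    refine (L2T_add (hq.meas.const_mul _)).trans ?_
    rw [L2T_const_mul, i0]
    calc _ ≤ 2 * ((‖(1 : ℝ)‖₊ : ℝ≥0∞) ^ 2 * L2T q + C1 * L2T q) := by gcongr; exact h1 k hk q hq
      _ = ((2 * (1 + C1) : ℝ≥0) : ℝ≥0∞) * L2T q := by simp; ring
      _ ≤ _ := hle _ _ _ (by rw [hC]; exact le_add_left le_rfl)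

open Polynomial (X C)

/-! ### Edge averages of a polynomial -/

/-- The average `∫ α(r) a(x + r y) dr` over `1/4 ≤ r ≤ 3/4` of a polynomial `a` on the edge
`y = 0`. -/
def Bf (α a : Polynomial ℝ) (z : ℝ × ℝ) : ℝ :=
  ∫ r in Set.Ioc (1 / 4 : ℝ) (3 / 4), α.eval r * a.eval (z.1 + r * z.2)

theorem Bf_fam (α a : Polynomial ℝ) {n : ℕ} (h : a.natDegree ≤ n) :
    PolyFam (Ω := ℝ) n (fun r z => α.eval r * a.eval (z.1 + r * z.2)) := by
  have h1 : PolyFam (Ω := ℝ) 1 (fun r z => z.1 + r * z.2) := by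
    simpa using PolyFam.affine (Ω := ℝ) (a := fun _ => 0) (b := fun _ => 1)
      (c := fun r => r) (by fun_prop) (by fun_prop) (by fun_prop)
  exact PolyFam.coef_mul α.continuous
    (PolyFam.comp (IsPoly.of_polynomial a h) h1 (PolyFam.coef (c := fun _ => 0) (by fun_prop)))

theorem Bf_isPoly (α a : Polynomial ℝ) {n : ℕ} (h : a.natDegree ≤ n) : IsPoly n (Bf α a) :=
  (Bf_fam α a h).integral integrable_Ioc

theorem D_Bf (α a : Polynomial ℝ) (v z : ℝ × ℝ) :
    D v (Bf α a) z = Bf ((C v.1 + C v.2 * X) * α) (Polynomial.derivative a) z := by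
  unfold Bf
  rw [(Bf_fam α a le_rfl).D_integral integrable_Ioc]
  refine integral_congr_ae (Filter.Eventually.of_forall fun r => ?_)
  have h1 : HasFDerivAt (fun z : ℝ × ℝ => z.1 + r * z.2)
      (ContinuousLinearMap.fst ℝ ℝ ℝ + r • ContinuousLinearMap.snd ℝ ℝ ℝ) z :=
    hasFDerivAt_fst.add (hasFDerivAt_snd.const_mul r)
  have h2 := ((a.hasDerivAt (z.1 + r * z.2)).comp_hasFDerivAt z h1).const_mul (α.eval r)
  simp only [D]
  rw [(show HasFDerivAt (fun z : ℝ × ℝ => α.eval r * a.eval (z.1 + r * z.2)) _ z from h2).fderiv]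
  simp
  ring

theorem Bf_trace (α a : Polynomial ℝ) (x : ℝ) :
    Bf α a (x, 0) = (∫ r in Set.Ioc (1 / 4 : ℝ) (3 / 4), α.eval r) * a.eval x := by
  simp [Bf, integral_mul_const]

theorem integral_derivative (β : Polynomial ℝ) :
    ∫ r in Set.Ioc (1 / 4 : ℝ) (3 / 4), (Polynomial.derivative β).eval r =
      β.eval (3 / 4) - β.eval (1 / 4) := by
  rw [← intervalIntegral.integral_of_le (by norm_num)]
  exact intervalIntegral.integral_eq_sub_of_hasDerivAt (fun r _ => β.hasDerivAt r)
    ((Polynomial.continuous _).intervalIntegrable _ _)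

/-- Differentiation under the average can be traded for a factor `1 / z.2` and a derivative of the
weight. -/
theorem Bf_by_parts (α a : Polynomial ℝ) (z : ℝ × ℝ) (h0 : α.eval (1 / 4) = 0)
    (h1 : α.eval (3 / 4) = 0) :
    z.2 * Bf α (Polynomial.derivative a) z = -Bf (Polynomial.derivative α) a z := by
  have key (r : ℝ) : HasDerivAt (fun r => α.eval r * a.eval (z.1 + r * z.2))
      ((Polynomial.derivative α).eval r * a.eval (z.1 + r * z.2) +
        z.2 * (α.eval r * (Polynomial.derivative a).eval (z.1 + r * z.2))) r := by
    have ha : HasDerivAt (fun r : ℝ => z.1 + r * z.2) z.2 r := by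
      simpa using ((hasDerivAt_id r).mul_const z.2).const_add z.1
    exact ((α.hasDerivAt r).mul ((a.hasDerivAt _).comp r ha)).congr_deriv
      (by simp only [Function.comp]; ring)
  have c1 := α.continuous
  have c2 := a.continuous
  have c3 := (Polynomial.derivative α).continuous
  have c4 := (Polynomial.derivative a).continuous
  have := intervalIntegral.integral_eq_sub_of_hasDerivAt (a := 1 / 4) (b := 3 / 4)
    (fun s _ => key s) (Continuous.intervalIntegrable (by fun_prop) _ _)
  rw [intervalIntegral.integral_add (Continuous.intervalIntegrable (by fun_prop) _ _)
    (Continuous.intervalIntegrable (by fun_prop) _ _), intervalIntegral.integral_const_mul,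
    intervalIntegral.integral_of_le (by norm_num), intervalIntegral.integral_of_le (by norm_num),
    h0, h1] at this
  simp only [Bf]
  linarith

theorem Bf_add (α β a : Polynomial ℝ) (z : ℝ × ℝ) : Bf (α + β) a z = Bf α a z + Bf β a z := by
  have c1 := α.continuous
  have c2 := β.continuous
  have c3 := a.continuous
  simp only [Bf, Polynomial.eval_add, add_mul]
  exact integral_add (integrable_Ioc _ (by fun_prop)) (integrable_Ioc _ (by fun_prop))

/-- The points compared with `z` when traces on the edge `y = 0` are estimated: they lie in
the closed triangle, no closer to the two other edges than `z`, and at distance at least a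
fixed multiple of `z.2` from these edges. -/
def cone (z : ℝ × ℝ) : Set (ℝ × ℝ) :=
  {p | z.1 ≤ p.1 ∧ z.2 / 4 ≤ p.1 ∧ z.1 + z.2 ≥ p.1 + p.2 ∧ z.2 / 4 ≤ 1 - p.1 - p.2 ∧
    0 ≤ p.2 ∧ p.2 ≤ z.2}

/-- The segment from the edge point `(x + r y, 0)` to the interior point `(x + 3y/8, y/4)`. -/
def path (z : ℝ × ℝ) (r τ : ℝ) : ℝ × ℝ :=
  (1 * z.1 + ((1 - τ) * r + 3 / 8 * τ) * z.2 + 0, (τ / 4) * z.2 + 0)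

theorem path_mem_cone {z : ℝ × ℝ} (hz : z ∈ T) {r τ : ℝ} (hr : r ∈ Set.Icc (1 / 4 : ℝ) (3 / 4))
    (hτ : τ ∈ Set.Icc (0 : ℝ) 1) : path z r τ ∈ cone z := by
  obtain ⟨a, b, c⟩ := hz
  obtain ⟨r0, r1⟩ := hr
  obtain ⟨t0, t1⟩ := hτ
  set m := (1 - τ) * r + 3 / 8 * τ with hm
  have m0 : 1 / 4 ≤ m := by rw [hm]; nlinarith
  have m1 : m + τ / 4 ≤ 3 / 4 := by rw [hm]; nlinarith
  have h0 : 1 / 4 * z.2 ≤ m * z.2 := by gcongr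
  have h1 : (m + τ / 4) * z.2 ≤ 3 / 4 * z.2 := by gcongr
  have h2 : 0 ≤ τ / 4 * z.2 := by positivity
  refine ⟨?_, ?_, ?_, ?_, ?_, ?_⟩ <;> simp only [path, ← hm] <;> nlinarith

theorem path_mem_T {z : ℝ × ℝ} (hz : z ∈ T) {r τ : ℝ} (hr : r ∈ Set.Icc (1 / 4 : ℝ) (3 / 4))
    (hτ : τ ∈ Set.Ioc (0 : ℝ) 1) : path z r τ ∈ T := by
  obtain ⟨h1, h2, h3, h4, h5, h6⟩ := path_mem_cone hz hr ⟨hτ.1.le, hτ.2⟩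
  have := hz.1; have := hz.2.1; have := hτ.1
  refine ⟨by linarith, ?_, by linarith⟩
  simp only [path]; positivity

/-- The interior comparison point. -/
def PP (z : ℝ × ℝ) : ℝ × ℝ := path z (1 / 4) 1

theorem path_one (z : ℝ × ℝ) (r : ℝ) : path z r 1 = PP z := by
  simp [PP, path]

/-- The contribution of the interior of the triangle to the estimate of traces. -/
def AV (M : ℝ × ℝ → ℝ) (z : ℝ × ℝ) : ℝ≥0∞ :=
  ∫⁻ p in Set.Ioc (1 / 4 : ℝ) (3 / 4) ×ˢ Set.Ioc (0 : ℝ) 1, ‖M (path z p.1 p.2)‖ₑ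

theorem path_measurable : Measurable fun w : (ℝ × ℝ) × (ℝ × ℝ) => path w.2 w.1.1 w.1.2 := by
  unfold path; fun_prop

theorem AV_eq {M : ℝ × ℝ → ℝ} (hM : Measurable M) (z : ℝ × ℝ) :
    AV M z = ∫⁻ r in Set.Ioc (1 / 4 : ℝ) (3 / 4), ∫⁻ τ in Set.Ioc (0 : ℝ) 1, ‖M (path z r τ)‖ₑ := by
  rw [AV, Measure.volume_eq_prod, ← Measure.prod_restrict, lintegral_prod]
  have : Measurable fun p : ℝ × ℝ => path z p.1 p.2 := by unfold path; fun_prop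
  exact (hM.comp this).enorm.aemeasurable

/-- Comparison of an edge average with interior values, by integration along segments. -/
theorem edge_avg_sub {α a : Polynomial ℝ} {K : ℝ≥0}
    (hα : ∀ r ∈ Set.Icc (1 / 4 : ℝ) (3 / 4), ‖α.eval r‖ₑ ≤ K) {F : ℝ × ℝ → ℝ} {z : ℝ × ℝ}
    (hz : z ∈ T) (hF : ∀ p ∈ cone z, ContDiffAt ℝ 1 F p)
    (htr : ∀ t, (t, (0 : ℝ)) ∈ cone z → a.eval t = F (t, 0)) {c : ℝ} (hc : 0 ≤ c)
    {M : ℝ × ℝ → ℝ} (hM : Measurable M)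
    (h1 : ∀ p ∈ cone z, c * (z.2 * (|D e1 F p| + |D e2 F p|)) ≤ M p) :
    ENNReal.ofReal c * ‖∫ r in Set.Ioc (1 / 4 : ℝ) (3 / 4),
      α.eval r * (a.eval (z.1 + r * z.2) - F (PP z))‖ₑ ≤ K * AV M z := by
  have hz2 := hz.2.1
  calc ENNReal.ofReal c * ‖∫ r in Set.Ioc (1 / 4 : ℝ) (3 / 4),
      α.eval r * (a.eval (z.1 + r * z.2) - F (PP z))‖ₑ
      ≤ ENNReal.ofReal c * ∫⁻ r in Set.Ioc (1 / 4 : ℝ) (3 / 4),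
      ‖α.eval r * (a.eval (z.1 + r * z.2) - F (PP z))‖ₑ := by
        gcongr; exact enorm_integral_le_lintegral_enorm _
    _ = ∫⁻ r in Set.Ioc (1 / 4 : ℝ) (3 / 4), ENNReal.ofReal c *
      ‖α.eval r * (a.eval (z.1 + r * z.2) - F (PP z))‖ₑ :=
        (lintegral_const_mul' _ _ (by simp)).symm
    _ ≤ ∫⁻ r in Set.Ioc (1 / 4 : ℝ) (3 / 4), K *
          ∫⁻ τ in Set.Ioc (0 : ℝ) 1, ‖M (path z r τ)‖ₑ := by
        refine setLIntegral_mono' measurableSet_Ioc fun r hr => ?_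
        have hr' : r ∈ Set.Icc (1 / 4 : ℝ) (3 / 4) := ⟨hr.1.le, hr.2⟩
        rw [enorm_mul, mul_left_comm]
        refine mul_le_mul' (hα r hr') ?_
        have hp0 : path z r 0 = (z.1 + r * z.2, 0) := by simp [path]
        set w : ℝ × ℝ := ((3 / 8 - r) * z.2, 1 / 4 * z.2) with hw
        have hpath (s : ℝ) : path z r 0 + s • w = path z r s := by
          ext <;> simp [path, hw] <;> ring
        have hmem (s : ℝ) (hs : s ∈ Set.Icc (0 : ℝ) 1) := path_mem_cone hz hr' hs
        have hft := ftc_segment (F := F) (p := path z r 0) (w := w)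
          (fun s hs => by rw [hpath]; exact hF _ (hmem s hs))
        have e1' := hpath 1
        rw [one_smul, path_one] at e1'
        rw [e1'] at hft
        simp only [hpath] at hft
        have h00 := hmem 0 (by simp)
        have ha : a.eval (z.1 + r * z.2) = F (path z r 0) := by
          rw [hp0] at h00 ⊢; exact htr _ h00
        rw [ha, ← enorm_neg, neg_sub, hft]
        calc ENNReal.ofReal c * ‖∫ s in (0 : ℝ)..1, fderiv ℝ F (path z r s) w‖ₑ
            ≤ ENNReal.ofReal c * ∫⁻ s in Set.Ioc (0 : ℝ) 1, ‖fderiv ℝ F (path z r s) w‖ₑ := by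
              gcongr; exact enorm_intervalIntegral_le _
          _ = ∫⁻ s in Set.Ioc (0 : ℝ) 1, ENNReal.ofReal c * ‖fderiv ℝ F (path z r s) w‖ₑ :=
              (lintegral_const_mul' _ _ (by simp)).symm
          _ ≤ _ := by
              refine setLIntegral_mono' measurableSet_Ioc fun s hs => ?_
              rw [← ofReal_norm, ← ofReal_norm, ← ENNReal.ofReal_mul hc]
              refine ENNReal.ofReal_le_ofReal (le_trans ?_ (le_abs_self _))
              refine le_trans ?_ (h1 _ (hmem s ⟨hs.1.le, hs.2⟩))
              gcongr
              rw [fderiv_apply_eq, Real.norm_eq_abs]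
              refine (abs_add_le _ _).trans ?_
              rw [abs_mul w.1, abs_mul w.2, mul_add]
              have hw1 : |w.1| ≤ z.2 := by
                rw [abs_le]; constructor <;> simp only [hw] <;> nlinarith [hr'.1, hr'.2]
              have hw2 : |w.2| ≤ z.2 := by
                rw [abs_le]; constructor <;> simp only [hw] <;> nlinarith
              gcongr
    _ = _ := by rw [lintegral_const_mul' _ _ (by simp), AV_eq hM]

theorem Bf_sub_const (α a : Polynomial ℝ) (z : ℝ × ℝ) (f : ℝ) :
    Bf α a z = (∫ r in Set.Ioc (1 / 4 : ℝ) (3 / 4), α.eval r * (a.eval (z.1 + r * z.2) - f)) +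
      f * ∫ r in Set.Ioc (1 / 4 : ℝ) (3 / 4), α.eval r := by
  have c1 := α.continuous
  have c3 := a.continuous
  rw [← integral_const_mul, ← integral_add (integrable_Ioc _ (by fun_prop))
    (integrable_Ioc _ (by fun_prop))]
  exact integral_congr_ae (Filter.Eventually.of_forall fun r => by simp only; ring)

/-- For a weight of mean zero, an edge average of `F` is estimated by first derivatives of `F` alone. -/
theorem Bf_bound_mean_zero {α a : Polynomial ℝ} {K : ℝ≥0}
    (hα : ∀ r ∈ Set.Icc (1 / 4 : ℝ) (3 / 4), ‖α.eval r‖ₑ ≤ K)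
    (h0 : ∫ r in Set.Ioc (1 / 4 : ℝ) (3 / 4), α.eval r = 0) {F : ℝ × ℝ → ℝ} {z : ℝ × ℝ}
    (hz : z ∈ T) (hF : ∀ p ∈ cone z, ContDiffAt ℝ 1 F p)
    (htr : ∀ t, (t, (0 : ℝ)) ∈ cone z → a.eval t = F (t, 0)) {c : ℝ} (hc : 0 ≤ c)
    {M : ℝ × ℝ → ℝ} (hM : Measurable M)
    (h1 : ∀ p ∈ cone z, c * (z.2 * (|D e1 F p| + |D e2 F p|)) ≤ M p) :
    ENNReal.ofReal c * ‖Bf α a z‖ₑ ≤ K * (‖M (PP z)‖ₑ + AV M z) := by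
  rw [Bf_sub_const α a z (F (PP z)), h0, mul_zero, add_zero]
  refine (edge_avg_sub hα hz hF htr hc hM h1).trans ?_
  gcongr
  exact le_add_self

/-- An edge average of `F` is controlled by the value of `F` at the interior comparison point and by its
first derivatives along the connecting segments. -/
theorem Bf_bound {α a : Polynomial ℝ} {K : ℝ≥0}
    (hα : ∀ r ∈ Set.Icc (1 / 4 : ℝ) (3 / 4), ‖α.eval r‖ₑ ≤ K) {F : ℝ × ℝ → ℝ} {z : ℝ × ℝ}
    (hz : z ∈ T) (hF : ∀ p ∈ cone z, ContDiffAt ℝ 1 F p)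
    (htr : ∀ t, (t, (0 : ℝ)) ∈ cone z → a.eval t = F (t, 0)) {c : ℝ} (hc : 0 ≤ c)
    {M : ℝ × ℝ → ℝ} (hM : Measurable M)
    (h1 : ∀ p ∈ cone z, c * (z.2 * (|D e1 F p| + |D e2 F p|)) ≤ M p)
    (h2 : ∀ p ∈ cone z, c * |F p| ≤ M p) :
    ENNReal.ofReal c * ‖Bf α a z‖ₑ ≤ K * (‖M (PP z)‖ₑ + AV M z) := by
  rw [Bf_sub_const α a z (F (PP z))]
  have hI : ‖∫ r in Set.Ioc (1 / 4 : ℝ) (3 / 4), α.eval r‖ₑ ≤ K := by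
    refine (enorm_integral_le_lintegral_enorm _).trans ?_
    calc _ ≤ ∫⁻ r in Set.Ioc (1 / 4 : ℝ) (3 / 4), (K : ℝ≥0∞) :=
          setLIntegral_mono' measurableSet_Ioc fun r hr => hα r ⟨hr.1.le, hr.2⟩
      _ ≤ K * 1 := by
          rw [setLIntegral_const, Real.volume_Ioc]
          gcongr
          rw [← ENNReal.ofReal_one]
          exact ENNReal.ofReal_le_ofReal (by norm_num)
      _ = K := mul_one _
  have hP : ENNReal.ofReal c * ‖F (PP z)‖ₑ ≤ ‖M (PP z)‖ₑ := by
    rw [← ofReal_norm, ← ofReal_norm, ← ENNReal.ofReal_mul hc]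
    exact ENNReal.ofReal_le_ofReal ((h2 _ (path_mem_cone hz (by norm_num) (by norm_num))).trans
      (le_abs_self _))
  calc _ ≤ ENNReal.ofReal c * (‖∫ r in Set.Ioc (1 / 4 : ℝ) (3 / 4),
      α.eval r * (a.eval (z.1 + r * z.2) - F (PP z))‖ₑ + ‖F (PP z)‖ₑ * K) := by
        gcongr
        refine (enorm_add_le _ _).trans ?_
        rw [enorm_mul]
        gcongr
    _ ≤ K * AV M z + ‖M (PP z)‖ₑ * K := by
        rw [mul_add, ← mul_assoc]
        exact add_le_add (edge_avg_sub hα hz hF htr hc hM h1) (mul_le_mul' hP le_rfl)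
    _ = _ := by ring

/-- The interior contributions are bounded on `L²`. -/
theorem N2_PP_AV {M : ℝ × ℝ → ℝ} (hM : Measurable M) :
    N2 (fun z => ‖M (PP z)‖ₑ + AV M z) ≤ 16 * L2T M := by
  have hp (r τ : ℝ) (hr : r ∈ Set.Icc (1 / 4 : ℝ) (3 / 4)) (hτ : τ ∈ Set.Ioc (0 : ℝ) 1) :
      N2 (fun z => ‖M (path z r τ)‖ₑ) ≤ ENNReal.ofReal (4 / τ) * L2T M := by
    have := N2_comp_tri (m := fun z => ‖M z‖ₑ) hM.enorm one_ne_zero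
      (by have := hτ.1; positivity : τ / 4 ≠ 0) ((1 - τ) * r + 3 / 8 * τ) 0 0
      (fun z hz => path_mem_T hz hr hτ)
    refine this.trans (le_of_eq ?_)
    have h4 : |(τ / 4)⁻¹| = 4 / τ := by
      rw [inv_div, abs_of_pos]; have := hτ.1; positivity
    rw [h4]
    simp [L2T]
  have hPm : Measurable fun z => ‖M (PP z)‖ₑ :=
    (hM.comp (by unfold PP path; fun_prop : Measurable PP)).enorm
  refine (N2_add hPm).trans ?_
  have h1 : N2 (fun z => ‖M (PP z)‖ₑ) ≤ 4 * L2T M := by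
    simpa [PP] using hp (1 / 4) 1 (by norm_num) (by norm_num)
  have h2 : N2 (AV M) ≤ 4 * L2T M := by
    have hmS : MeasurableSet (Set.Ioc (1 / 4 : ℝ) (3 / 4) ×ˢ Set.Ioc (0 : ℝ) 1) :=
      measurableSet_Ioc.prod measurableSet_Ioc
    have := N2_lintegral_le (Ω := ℝ × ℝ)
      (μ := volume.restrict (Set.Ioc (1 / 4 : ℝ) (3 / 4) ×ˢ Set.Ioc (0 : ℝ) 1))
      (F := fun p z => ‖M (path z p.1 p.2)‖ₑ)
      (hM.comp path_measurable).enorm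
      (e := fun p => 2 * ENNReal.ofReal (p.2 ^ (-(1 / 2) : ℝ))) (by fun_prop) (N := L2T M) ?_ ?_
    · refine this.trans (le_of_eq ?_)
      rw [Measure.volume_eq_prod, ← Measure.prod_restrict,
        lintegral_prod _ (by fun_prop)]
      simp only
      rw [lintegral_const_mul' 2 _ (by simp), lintegral_rpow_neg_half, setLIntegral_const, Real.volume_Ioc]
      congr 1
      have : ENNReal.ofReal (3 / 4 - 1 / 4) = 2⁻¹ := by
        rw [show (3 / 4 - 1 / 4 : ℝ) = 2⁻¹ by norm_num, ENNReal.ofReal_inv_of_pos (by norm_num)]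
        norm_num
      rw [this, mul_assoc, ENNReal.mul_inv_cancel (by simp) (by simp)]
      norm_num
    · filter_upwards [ae_restrict_mem hmS] with p hp
      have : 0 < p.2 ^ (-(1 / 2) : ℝ) := Real.rpow_pos_of_pos hp.2.1 _
      exact ⟨mul_ne_zero (by simp) (ENNReal.ofReal_pos.2 this).ne', ENNReal.mul_ne_top (by simp) (by simp)⟩
    · filter_upwards [ae_restrict_mem hmS] with p hp'
      refine (hp p.1 p.2 ⟨hp'.1.1.le, hp'.1.2⟩ hp'.2).trans (le_of_eq ?_)
      have h0 := hp'.2.1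
      congr 1
      rw [mul_pow, ← ENNReal.ofReal_pow (by positivity), ← Real.rpow_natCast, ← Real.rpow_mul h0.le]
      norm_num
      rw [Real.rpow_neg_one, div_eq_mul_inv, ENNReal.ofReal_mul (by norm_num)]
      norm_num
  calc _ ≤ 2 * (4 * L2T M + 4 * L2T M) := by gcongr
    _ = _ := by ring

/-! ### The lifting operator -/

/-- The bump `(r - 1/4)(3/4 - r)`. -/
def bump : Polynomial ℝ := (X - C (1 / 4)) * (C (3 / 4) - X)

/-- A weight with mass one and vanishing first moment on `[1/4, 3/4]`. -/
def th0 : Polynomial ℝ := bump * (C 48 - C 1920 * (X - C (1 / 2)))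

/-- A weight with mass one on `[1/4, 3/4]`, vanishing to second order at the endpoints. -/
def th1 : Polynomial ℝ := C 960 * bump ^ 2

theorem int_eq (α G : Polynomial ℝ) (h : ∀ r, α.eval r = (Polynomial.derivative G).eval r) :
    ∫ r in Set.Ioc (1 / 4 : ℝ) (3 / 4), α.eval r = G.eval (3 / 4) - G.eval (1 / 4) := by
  rw [← integral_derivative]
  simp only [h]

theorem int_th0 : ∫ r in Set.Ioc (1 / 4 : ℝ) (3 / 4), th0.eval r = 1 := by
  rw [int_eq th0 (C 48 * (C (1 / 16) * (X - C (1 / 2)) - C (1 / 3) * (X - C (1 / 2)) ^ 3 -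
    C (5 / 4) * (X - C (1 / 2)) ^ 2 + C 10 * (X - C (1 / 2)) ^ 4))]
  · simp; norm_num
  · intro r; simp [th0, bump, Polynomial.derivative_pow]; ring

theorem int_X_th0 : ∫ r in Set.Ioc (1 / 4 : ℝ) (3 / 4), (X * th0).eval r = 0 := by
  rw [int_eq (X * th0) (C 24 * (C (1 / 16) * (X - C (1 / 2)) - C (1 / 3) * (X - C (1 / 2)) ^ 3 -
    C (5 / 4) * (X - C (1 / 2)) ^ 2 + C 10 * (X - C (1 / 2)) ^ 4) +
    C 48 * (C (1 / 32) * (X - C (1 / 2)) ^ 2 - C (1 / 4) * (X - C (1 / 2)) ^ 4 -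
    C (5 / 6) * (X - C (1 / 2)) ^ 3 + C 8 * (X - C (1 / 2)) ^ 5))]
  · simp; norm_num
  · intro r; simp [th0, bump, Polynomial.derivative_pow]; ring

theorem int_th1 : ∫ r in Set.Ioc (1 / 4 : ℝ) (3 / 4), th1.eval r = 1 := by
  rw [int_eq th1 (C 960 * (C (1 / 256) * (X - C (1 / 2)) - C (1 / 24) * (X - C (1 / 2)) ^ 3 +
    C (1 / 5) * (X - C (1 / 2)) ^ 5))]
  · simp; norm_num
  · intro r; simp [th1, bump, Polynomial.derivative_pow]; ring

/-- The polynomial lifting of a value `a` and a normal derivative `b` on the edge `y = 0`. -/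
def Lf (a b : Polynomial ℝ) (z : ℝ × ℝ) : ℝ := Bf th0 a z + z.2 * Bf th1 b z

theorem Lf_isPoly {a b : Polynomial ℝ} {m : ℕ} (ha : a.natDegree ≤ m) (hb : b.natDegree + 1 ≤ m) :
    IsPoly m (Lf a b) :=
  (Bf_isPoly th0 a ha).add ((IsPoly.snd.mul (Bf_isPoly th1 b le_rfl)).mono (by omega))

theorem Bf_differentiableAt (α a : Polynomial ℝ) (z : ℝ × ℝ) : DifferentiableAt ℝ (Bf α a) z :=
  (Bf_isPoly α a le_rfl).differentiableAt z

/-- The weights appearing in the first derivatives of `Lf`. -/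
def wt0 (v : ℝ × ℝ) : Polynomial ℝ := (C v.1 + C v.2 * X) * th0
/-- The weights appearing in the first derivatives of `Lf`. -/
def wt1 (v : ℝ × ℝ) : Polynomial ℝ := -((C v.1 + C v.2 * X) * Polynomial.derivative th1)

theorem Bf_congr {α β : Polynomial ℝ} (h : ∀ r, α.eval r = β.eval r) (a : Polynomial ℝ)
    (z : ℝ × ℝ) : Bf α a z = Bf β a z := by simp only [Bf, h]

theorem D_Lf_aux (a b : Polynomial ℝ) (v z : ℝ × ℝ) :
    D v (Lf a b) z = Bf (wt0 v) (Polynomial.derivative a) z +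
      (v.2 * Bf th1 b z + z.2 * Bf ((C v.1 + C v.2 * X) * th1) (Polynomial.derivative b) z) := by
  unfold Lf
  rw [D_add (Bf_differentiableAt _ _ _)
    (differentiableAt_snd.fun_mul (Bf_differentiableAt _ _ _)), D_mul differentiableAt_snd
    (Bf_differentiableAt _ _ _), D_Bf, D_Bf, D_snd, wt0]

/-- The first derivatives of the lifting are edge averages, without loss of a power of `y`. -/
theorem D_Lf (a b : Polynomial ℝ) (v z : ℝ × ℝ) :
    D v (Lf a b) z = Bf (wt0 v) (Polynomial.derivative a) z + Bf (wt1 v) b z := by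
  rw [D_Lf_aux, Bf_by_parts _ _ _ (by simp [th1, bump]) (by simp [th1, bump])]
  congr 1
  have h1 : v.2 * Bf th1 b z = Bf (C v.2 * th1) b z := by
    simp only [Bf, ← integral_const_mul]
    simp [mul_assoc]
  have h2 : Bf (C v.2 * th1) b z = Bf (Polynomial.derivative ((C v.1 + C v.2 * X) * th1)) b z +
      Bf (wt1 v) b z := by
    rw [← Bf_add]
    exact Bf_congr (fun r => by simp [wt1]) _ _
  rw [h1, h2]; ring

/-- The weights appearing in the second derivatives of `Lf`, multiplied by `y`. -/
def wt2 (w : ℝ × ℝ) (α : Polynomial ℝ) : Polynomial ℝ :=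
  Polynomial.derivative ((C w.1 + C w.2 * X) * α)

/-- The second derivatives of the lifting are `1 / y` times edge averages, whose weights have mean
zero by `int_wt2_0` and `int_wt2_1`. -/
theorem D_D_Lf (a b : Polynomial ℝ) (v w z : ℝ × ℝ) :
    z.2 * D w (D v (Lf a b)) z =
      -(Bf (wt2 w (wt0 v)) (Polynomial.derivative a) z + Bf (wt2 w (wt1 v)) b z) := by
  have : D v (Lf a b) = fun z => Bf (wt0 v) (Polynomial.derivative a) z + Bf (wt1 v) b z :=
    funext fun z => D_Lf a b v z
  rw [this, D_add (Bf_differentiableAt _ _ _) (Bf_differentiableAt _ _ _), D_Bf, D_Bf, mul_add,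
    Bf_by_parts _ _ _ (by simp [wt0, th0, bump]) (by simp [wt0, th0, bump]),
    Bf_by_parts _ _ _ (by simp [wt1, th1, bump, Polynomial.derivative_pow])
      (by simp [wt1, th1, bump, Polynomial.derivative_pow]), wt2, wt2]
  ring

theorem int_wt2_0 (v w : ℝ × ℝ) :
    ∫ r in Set.Ioc (1 / 4 : ℝ) (3 / 4), (wt2 w (wt0 v)).eval r = 0 := by
  rw [wt2, integral_derivative]; simp [wt0, th0, bump]

theorem int_wt2_1 (v w : ℝ × ℝ) :
    ∫ r in Set.Ioc (1 / 4 : ℝ) (3 / 4), (wt2 w (wt1 v)).eval r = 0 := by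
  rw [wt2, integral_derivative]; simp [wt1, th1, bump, Polynomial.derivative_pow]

theorem Lf_trace (a b : Polynomial ℝ) (x : ℝ) : Lf a b (x, 0) = a.eval x := by
  rw [Lf, Bf_trace, int_th0]; simp

theorem D_Lf_trace (a b : Polynomial ℝ) (x : ℝ) : D e2 (Lf a b) (x, 0) = b.eval x := by
  have h : Bf (wt0 e2) (Polynomial.derivative a) (x, 0) =
      Bf (X * th0) (Polynomial.derivative a) (x, 0) :=
    Bf_congr (fun r => by simp [wt0]) _ _
  rw [D_Lf_aux, h, Bf_trace, Bf_trace, int_X_th0, int_th1]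
  simp

theorem exists_bound (α : Polynomial ℝ) :
    ∃ K : ℝ≥0, ∀ r ∈ Set.Icc (1 / 4 : ℝ) (3 / 4), ‖α.eval r‖ₑ ≤ K := by
  obtain ⟨K, hK⟩ := isCompact_Icc.exists_bound_of_continuousOn
    (s := Set.Icc (1 / 4 : ℝ) (3 / 4)) α.continuous.continuousOn
  refine ⟨K.toNNReal, fun r hr => ?_⟩
  rw [← ofReal_norm]
  exact ENNReal.ofReal_le_ofReal (hK r hr)

/-! ### Weights and quotients by weights -/

theorem D_div {v z : ℝ × ℝ} {F G : ℝ × ℝ → ℝ} (hF : DifferentiableAt ℝ F z)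
    (hG : DifferentiableAt ℝ G z) (h0 : G z ≠ 0) :
    D v (fun z => F z / G z) z = (D v F z - D v G z * (F z / G z)) / G z := by
  have h1 := hF.hasFDerivAt.mul ((hasFDerivAt_inv h0).comp z hG.hasFDerivAt)
  have h2 : HasFDerivAt (fun z => F z / G z) _ z := h1
  simp only [D]
  rw [h2.fderiv]
  simp
  field_simp
  ring

/-- The two coordinate directions. -/
def dirs : Set (ℝ × ℝ) := {e1, e2}

theorem e1_mem : e1 ∈ dirs := by simp [dirs]
theorem e2_mem : e2 ∈ dirs := by simp [dirs]

/-- The derivatives of `φ` up to second order, each weighted by the power of `W` that makes it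
scale like a second derivative. -/
def MM (W φ : ℝ × ℝ → ℝ) (p : ℝ × ℝ) : ℝ :=
  (|D e1 (D e1 φ) p| + |D e1 (D e2 φ) p| + |D e2 (D e1 φ) p| + |D e2 (D e2 φ) p|) +
    W p * (|D e1 φ p| + |D e2 φ p|) + W p ^ 2 * |φ p|

/-- `ω` is a weight, positive on the comparison sets `cone z`, whose logarithmic derivatives there are
controlled by `W`, where `W` is at most a multiple of `1 / z.2`. The value and the derivatives of `ω`
at `z` itself are also compared with the values of `ω` and `W` at the points of `cone z`. -/
structure Wt (ω W : ℝ × ℝ → ℝ) (c0 : ℝ) : Prop where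
  meas : Measurable W
  pos : ∀ z ∈ T, ∀ p ∈ cone z, 0 < ω p
  nonneg : ∀ z ∈ T, ∀ p ∈ cone z, 0 ≤ W p
  le : ∀ z ∈ T, ∀ p ∈ cone z, z.2 * W p ≤ c0
  zle : ∀ z ∈ T, ∀ p ∈ cone z, |ω z| ≤ ω p
  dz : ∀ z ∈ T, ∀ p ∈ cone z, ∀ v ∈ dirs, |D v ω z| ≤ ω p * W p
  dp : ∀ z ∈ T, ∀ p ∈ cone z, ∀ v ∈ dirs, |D v ω p| ≤ ω p * W p
  ddz : ∀ z ∈ T, ∀ p ∈ cone z, ∀ v ∈ dirs, ∀ w ∈ dirs, |D w (D v ω) z| ≤ ω p * W p ^ 2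
  ddp : ∀ z ∈ T, ∀ p ∈ cone z, ∀ v ∈ dirs, ∀ w ∈ dirs, |D w (D v ω) p| ≤ ω p * W p ^ 2

/-- The derivative of the quotient `φ / ω` in the direction `v`. -/
def Qd (ω φ : ℝ × ℝ → ℝ) (v p : ℝ × ℝ) : ℝ := (D v φ p - D v ω p * (φ p / ω p)) / ω p

section quot
variable {ω W φ : ℝ × ℝ → ℝ} {n d : ℕ} (hω : IsPoly d ω) (hφ : IsPoly n φ) {p : ℝ × ℝ}
include hω hφ

theorem quot_contDiffAt (h0 : ω p ≠ 0) : ContDiffAt ℝ 1 (fun p => φ p / ω p) p :=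
  hφ.contDiff.contDiffAt.div hω.contDiff.contDiffAt h0

theorem Qd_contDiffAt (h0 : ω p ≠ 0) (v : ℝ × ℝ) : ContDiffAt ℝ 1 (Qd ω φ v) p :=
  ((hφ.D v).contDiff.contDiffAt.sub ((hω.D v).contDiff.contDiffAt.mul
    (quot_contDiffAt hω hφ h0))).div hω.contDiff.contDiffAt h0

theorem D_quot (h0 : ω p ≠ 0) (v : ℝ × ℝ) : D v (fun p => φ p / ω p) p = Qd ω φ v p :=
  D_div (hφ.differentiableAt p) (hω.differentiableAt p) h0

theorem D_Qd (h0 : ω p ≠ 0) (v w : ℝ × ℝ) :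
    D w (Qd ω φ v) p = (D w (D v φ) p - D w (D v ω) p * (φ p / ω p) - D v ω p * Qd ω φ w p -
      D w ω p * Qd ω φ v p) / ω p := by
  have hq := (quot_contDiffAt hω hφ h0).differentiableAt one_ne_zero
  have h1 := (hω.D v).differentiableAt p
  have h2 := (hφ.D v).differentiableAt p
  have : Qd ω φ v = fun p => (D v φ p - D v ω p * (φ p / ω p)) / ω p := rfl
  rw [this, D_div (h2.fun_sub (h1.fun_mul hq)) (hω.differentiableAt p) h0, D_sub h2 (h1.fun_mul hq),
    D_mul h1 hq, D_quot hω hφ h0]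
  simp only [Qd]
  ring

end quot

theorem MM_nonneg {W φ : ℝ × ℝ → ℝ} {p : ℝ × ℝ} (h : 0 ≤ W p) : 0 ≤ MM W φ p := by
  unfold MM; positivity

theorem le_MM {W φ : ℝ × ℝ → ℝ} {p v w : ℝ × ℝ} (h : 0 ≤ W p) (hv : v ∈ dirs) (hw : w ∈ dirs) :
    |D w (D v φ) p| + W p * |D v φ p| + W p ^ 2 * |φ p| ≤ MM W φ p := by
  have a1 := abs_nonneg (D e1 (D e1 φ) p)
  have a2 := abs_nonneg (D e1 (D e2 φ) p)
  have a3 := abs_nonneg (D e2 (D e1 φ) p)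
  have a4 := abs_nonneg (D e2 (D e2 φ) p)
  have b1 := mul_nonneg h (abs_nonneg (D e1 φ p))
  have b2 := mul_nonneg h (abs_nonneg (D e2 φ p))
  unfold MM
  rcases hv with rfl | rfl <;> rcases hw with rfl | rfl <;> linarith

section est
variable {ω W φ : ℝ × ℝ → ℝ} {c0 : ℝ} (hW : Wt ω W c0) {z p v w : ℝ × ℝ} (hz : z ∈ T)
  (hp : p ∈ cone z) (hv : v ∈ dirs) (hw : w ∈ dirs)
include hW hz hp

/-- The value of `φ / ω` on a comparison set. -/
theorem quot_le : ω p * W p ^ 2 * |φ p / ω p| ≤ MM W φ p := by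
  have h1 := le_MM (φ := φ) (hW.nonneg z hz p hp) e1_mem e1_mem
  have h2 := hW.pos z hz p hp
  have b2 := mul_nonneg (hW.nonneg z hz p hp) (abs_nonneg (D e1 φ p))
  have b3 := abs_nonneg (D e1 (D e1 φ) p)
  rw [abs_div, abs_of_pos h2]
  have : ω p * W p ^ 2 * (|φ p| / ω p) = W p ^ 2 * |φ p| := by field_simp
  linarith

include hv in
/-- The first derivatives of `φ / ω` on a comparison set. -/
theorem Qd_le : ω p * W p * |Qd ω φ v p| ≤ MM W φ p := by
  have h1 := le_MM (φ := φ) (hW.nonneg z hz p hp) hv e1_mem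
  have h2 := hW.pos z hz p hp
  have h3 := hW.nonneg z hz p hp
  have h4 := hW.dp z hz p hp v hv
  have b3 := abs_nonneg (D e1 (D v φ) p)
  rw [Qd, abs_div, abs_of_pos h2]
  calc ω p * W p * (|D v φ p - D v ω p * (φ p / ω p)| / ω p)
      = W p * |D v φ p - D v ω p * (φ p / ω p)| := by field_simp
    _ ≤ W p * (|D v φ p| + |D v ω p| * |φ p / ω p|) := by
        gcongr; rw [← abs_mul]; exact abs_sub _ _
    _ ≤ W p * (|D v φ p| + ω p * W p * |φ p / ω p|) := by gcongr
    _ = W p * |D v φ p| + W p ^ 2 * |φ p| := by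
        rw [abs_div, abs_of_pos h2]; field_simp
    _ ≤ MM W φ p := by linarith

include hv hw in
/-- The second derivatives of `φ / ω` on a comparison set. -/
theorem D_Qd_le {n d : ℕ} (hω : IsPoly d ω) (hφ : IsPoly n φ) :
    ω p * |D w (Qd ω φ v) p| ≤ 4 * MM W φ p := by
  have h1 := le_MM (φ := φ) (hW.nonneg z hz p hp) hv hw
  have h2 := hW.pos z hz p hp
  have h3 := hW.nonneg z hz p hp
  have b2 := mul_nonneg h3 (abs_nonneg (D v φ p))
  have b3 : 0 ≤ W p ^ 2 * |φ p| := by positivity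
  have k1 := quot_le (φ := φ) hW hz hp
  have k2 := Qd_le (φ := φ) hW hz hp hv
  have k3 := Qd_le (φ := φ) hW hz hp hw
  rw [D_Qd hω hφ h2.ne', abs_div, abs_of_pos h2, mul_div_cancel₀ _ h2.ne']
  have m1 : |D w (D v ω) p * (φ p / ω p)| ≤ MM W φ p := by
    rw [abs_mul]
    exact (mul_le_mul_of_nonneg_right (hW.ddp z hz p hp v hv w hw) (abs_nonneg _)).trans k1
  have m2 : |D v ω p * Qd ω φ w p| ≤ MM W φ p := by
    rw [abs_mul]
    exact (mul_le_mul_of_nonneg_right (hW.dp z hz p hp v hv) (abs_nonneg _)).trans k3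
  have m3 : |D w ω p * Qd ω φ v p| ≤ MM W φ p := by
    rw [abs_mul]
    exact (mul_le_mul_of_nonneg_right (hW.dp z hz p hp w hw) (abs_nonneg _)).trans k2
  have n1 := abs_sub (D w (D v φ) p - D w (D v ω) p * (φ p / ω p) - D v ω p * Qd ω φ w p) (D w ω p * Qd ω φ v p)
  have n2 := abs_sub (D w (D v φ) p - D w (D v ω) p * (φ p / ω p)) (D v ω p * Qd ω φ w p)
  have n3 := abs_sub (D w (D v φ) p) (D w (D v ω) p * (φ p / ω p))
  linarith

end est

/-! ### The weighted lifting estimate -/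

theorem enorm_mul_ofReal (c x : ℝ) : ‖c * x‖ₑ = ENNReal.ofReal |c| * ‖x‖ₑ := by
  rw [enorm_mul, ← ofReal_norm c, Real.norm_eq_abs]

/-- The right-hand side of the pointwise estimates for `Lf`. -/
def Ebd (M : ℝ × ℝ → ℝ) (z : ℝ × ℝ) : ℝ≥0∞ := ‖M (PP z)‖ₑ + AV M z

section lift
variable {ω W φ : ℝ × ℝ → ℝ} {c0 : ℝ} (h1c : 1 ≤ c0) (hW : Wt ω W c0) {z v w : ℝ × ℝ} (hz : z ∈ T)
  {n d : ℕ} (hω : IsPoly d ω) (hφ : IsPoly n φ) {a b : Polynomial ℝ}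

include hW hφ in
theorem MM_measurable : Measurable fun p => 8 * c0 ^ 2 * MM W φ p := by
  have := hW.meas
  have m0 := hφ.meas
  have m1 := (hφ.D e1).meas
  have m2 := (hφ.D e2).meas
  have m3 := ((hφ.D e1).D e1).meas
  have m4 := ((hφ.D e2).D e1).meas
  have m5 := ((hφ.D e1).D e2).meas
  have m6 := ((hφ.D e2).D e2).meas
  unfold MM
  fun_prop

variable {K : ℝ≥0} {α : Polynomial ℝ} (hα : ∀ r ∈ Set.Icc (1 / 4 : ℝ) (3 / 4), ‖α.eval r‖ₑ ≤ K)
  {c : ℝ}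

include h1c hW hz hω hφ hα

/-- A term of the second derivatives of `ω * Lf a b` containing an average of the value of `φ / ω`. -/
theorem lift_term0 (ha : ∀ t, (t, (0 : ℝ)) ∈ cone z → a.eval t = φ (t, 0) / ω (t, 0))
    (hc : ∀ p ∈ cone z, |c| ≤ ω p * W p ^ 2) :
    ‖c * Bf α a z‖ₑ ≤ K * Ebd (fun p => 8 * c0 ^ 2 * MM W φ p) z := by
  rw [enorm_mul_ofReal]
  refine Bf_bound hα hz (F := fun p => φ p / ω p)
    (fun p hp => quot_contDiffAt hω hφ (hW.pos z hz p hp).ne') ha (abs_nonneg _)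
    (MM_measurable hW hφ) (fun p hp => ?_) (fun p hp => ?_)
  · have h0 := (hW.pos z hz p hp)
    have hM := MM_nonneg (φ := φ) (hW.nonneg z hz p hp)
    rw [D_quot hω hφ h0.ne', D_quot hω hφ h0.ne']
    have q1 := Qd_le (φ := φ) hW hz hp e1_mem
    have q2 := Qd_le (φ := φ) hW hz hp e2_mem
    have q3 := hW.le z hz p hp
    have q4 := hW.nonneg z hz p hp
    have q5 := hz.2.1
    calc |c| * (z.2 * (|Qd ω φ e1 p| + |Qd ω φ e2 p|))
        ≤ (ω p * W p ^ 2) * (z.2 * (|Qd ω φ e1 p| + |Qd ω φ e2 p|)) := by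
          gcongr; exact hc p hp
      _ = (z.2 * W p) * (ω p * W p * |Qd ω φ e1 p| + ω p * W p * |Qd ω φ e2 p|) := by ring
      _ ≤ c0 * (MM W φ p + MM W φ p) := by gcongr
      _ ≤ 8 * c0 ^ 2 * MM W φ p := by nlinarith [mul_nonneg (sub_nonneg.2 h1c) hM]
  · have hM := MM_nonneg (φ := φ) (hW.nonneg z hz p hp)
    calc |c| * |φ p / ω p| ≤ ω p * W p ^ 2 * |φ p / ω p| := by gcongr; exact hc p hp
      _ ≤ MM W φ p := quot_le hW hz hp
      _ ≤ 8 * c0 ^ 2 * MM W φ p := by nlinarith [mul_nonneg (sub_nonneg.2 h1c) hM]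

include v in
/-- A term of the second derivatives of `ω * Lf a b` containing an average of the gradient of `φ / ω`. -/
theorem lift_term1 (hv : v ∈ dirs)
    (ha : ∀ t, (t, (0 : ℝ)) ∈ cone z → a.eval t = Qd ω φ v (t, 0))
    (hc : ∀ p ∈ cone z, |c| ≤ c0 * (ω p * W p)) :
    ‖c * Bf α a z‖ₑ ≤ K * Ebd (fun p => 8 * c0 ^ 2 * MM W φ p) z := by
  rw [enorm_mul_ofReal]
  refine Bf_bound hα hz (F := Qd ω φ v)
    (fun p hp => Qd_contDiffAt hω hφ (hW.pos z hz p hp).ne' v) ha (abs_nonneg _)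
    (MM_measurable hW hφ) (fun p hp => ?_) (fun p hp => ?_)
  · have h0 := (hW.pos z hz p hp)
    have hM := MM_nonneg (φ := φ) (hW.nonneg z hz p hp)
    have q1 := D_Qd_le hW hz hp hv e1_mem hω hφ
    have q2 := D_Qd_le hW hz hp hv e2_mem hω hφ
    have q3 := hW.le z hz p hp
    have q4 := hW.nonneg z hz p hp
    have q5 := hz.2.1
    calc |c| * (z.2 * (|D e1 (Qd ω φ v) p| + |D e2 (Qd ω φ v) p|))
        ≤ (c0 * (ω p * W p)) * (z.2 * (|D e1 (Qd ω φ v) p| + |D e2 (Qd ω φ v) p|)) := by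
          gcongr; exact hc p hp
      _ = c0 * ((z.2 * W p) *
          (ω p * |D e1 (Qd ω φ v) p| + ω p * |D e2 (Qd ω φ v) p|)) := by ring
      _ ≤ c0 * (c0 * (4 * MM W φ p + 4 * MM W φ p)) := by gcongr
      _ = 8 * c0 ^ 2 * MM W φ p := by ring
  · have hM := MM_nonneg (φ := φ) (hW.nonneg z hz p hp)
    calc |c| * |Qd ω φ v p| ≤ c0 * (ω p * W p) * |Qd ω φ v p| := by gcongr; exact hc p hp
      _ = c0 * (ω p * W p * |Qd ω φ v p|) := by ring
      _ ≤ c0 * MM W φ p := by gcongr; exact Qd_le hW hz hp hv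
      _ ≤ 8 * c0 ^ 2 * MM W φ p := by nlinarith [mul_nonneg (sub_nonneg.2 h1c) hM]

include v in
/-- A term of the second derivatives of `ω * Lf a b` with the singular factor `1 / y`: as the weight has
mean zero, only second derivatives of `φ / ω` enter. -/
theorem lift_term2 (hv : v ∈ dirs)
    (hI : ∫ r in Set.Ioc (1 / 4 : ℝ) (3 / 4), α.eval r = 0)
    (ha : ∀ t, (t, (0 : ℝ)) ∈ cone z → a.eval t = Qd ω φ v (t, 0))
    (hc : ∀ p ∈ cone z, |c| * z.2 ≤ ω p) :
    ‖c * Bf α a z‖ₑ ≤ K * Ebd (fun p => 8 * c0 ^ 2 * MM W φ p) z := by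
  rw [enorm_mul_ofReal]
  refine Bf_bound_mean_zero hα hI hz (F := Qd ω φ v)
    (fun p hp => Qd_contDiffAt hω hφ (hW.pos z hz p hp).ne' v) ha (abs_nonneg _)
    (MM_measurable hW hφ) (fun p hp => ?_)
  have h0 := (hW.pos z hz p hp)
  have hM := MM_nonneg (φ := φ) (hW.nonneg z hz p hp)
  have q1 := D_Qd_le hW hz hp hv e1_mem hω hφ
  have q2 := D_Qd_le hW hz hp hv e2_mem hω hφ
  calc |c| * (z.2 * (|D e1 (Qd ω φ v) p| + |D e2 (Qd ω φ v) p|))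
      = (|c| * z.2) * (|D e1 (Qd ω φ v) p| + |D e2 (Qd ω φ v) p|) := by ring
    _ ≤ ω p * (|D e1 (Qd ω φ v) p| + |D e2 (Qd ω φ v) p|) := by gcongr; exact hc p hp
    _ ≤ 8 * MM W φ p := by linarith
    _ ≤ 8 * c0 ^ 2 * MM W φ p := by nlinarith [mul_nonneg (sub_nonneg.2 h1c) hM]

end lift

/-- **Weighted lifting of traces.** If `φ` has on the edge `y = 0` the value and the normal
derivative of `ω` times a function with polynomial traces `a`, `b`, then the second derivatives of
the polynomial `ω * Lf a b` are controlled by `φ`, with a constant that depends on `c0` only. -/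
theorem lift_bound {c0 : ℝ} (h1c : 1 ≤ c0) {v w : ℝ × ℝ} (hv : v ∈ dirs) (hw : w ∈ dirs) :
    ∃ C : ℝ≥0, ∀ (ω W φ : ℝ × ℝ → ℝ) (n d : ℕ) (a b : Polynomial ℝ), IsPoly d ω → IsPoly n φ →
      Wt ω W c0 → (∀ x, φ (x, 0) = ω (x, 0) * a.eval x) →
      (∀ x, D e2 φ (x, 0) = D e2 ω (x, 0) * a.eval x + ω (x, 0) * b.eval x) →
      L2T (D w (D v fun z => ω z * Lf a b z)) ≤ C * L2T (MM W φ) := by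
  obtain ⟨K1, k1⟩ := exists_bound th0
  obtain ⟨K2, k2⟩ := exists_bound th1
  obtain ⟨K3, k3⟩ := exists_bound (wt0 v)
  obtain ⟨K4, k4⟩ := exists_bound (wt1 v)
  obtain ⟨K5, k5⟩ := exists_bound (wt0 w)
  obtain ⟨K6, k6⟩ := exists_bound (wt1 w)
  obtain ⟨K7, k7⟩ := exists_bound (wt2 w (wt0 v))
  obtain ⟨K8, k8⟩ := exists_bound (wt2 w (wt1 v))
  set K := K1 + K2 + K5 + K6 + K3 + K4 + K7 + K8 with hK
  refine ⟨K ^ 2 * 16 * (‖8 * c0 ^ 2‖₊ ) ^ 2, ?_⟩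
  intro ω W φ n d a b hω hφ hW htr htr2
  have hM := MM_measurable hW hφ
  have hpt (z : ℝ × ℝ) (hz : z ∈ T) : ‖D w (D v fun z => ω z * Lf a b z) z‖ₑ ≤
      K * Ebd (fun p => 8 * c0 ^ 2 * MM W φ p) z := by
    have hy := hz.2.1
    have hL : IsPoly (a.natDegree + b.natDegree + 1) (Lf a b) :=
      Lf_isPoly (by omega) (by omega)
    have t0 (t : ℝ) (ht : (t, (0 : ℝ)) ∈ cone z) : a.eval t = φ (t, 0) / ω (t, 0) := by
      have := (hW.pos z hz _ ht).ne'
      rw [htr]; field_simp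
    have t2 (t : ℝ) (ht : (t, (0 : ℝ)) ∈ cone z) : b.eval t = Qd ω φ e2 (t, 0) := by
      have := (hW.pos z hz _ ht).ne'
      rw [Qd, ← t0 t ht, htr2]; field_simp; ring
    have t1 (t : ℝ) (ht : (t, (0 : ℝ)) ∈ cone z) :
        (Polynomial.derivative a).eval t = Qd ω φ e1 (t, 0) := by
      have h0 := (hW.pos z hz _ ht).ne'
      have d1 := hφ.hasDerivAt_comp (a := fun t => t) (b := fun _ => 0) (hasDerivAt_id t)
        (hasDerivAt_const t 0)
      have d2 := hω.hasDerivAt_comp (a := fun t => t) (b := fun _ => 0) (hasDerivAt_id t)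
        (hasDerivAt_const t 0)
      have d3 := d2.mul (a.hasDerivAt t)
      have e : (fun t => φ (t, 0)) = (fun t => ω (t, 0)) * fun t => a.eval t := funext htr
      rw [← e] at d3
      have := d1.unique d3
      rw [Qd, ← t0 t ht]
      simp only [one_mul, zero_mul, add_zero] at this
      rw [this]; field_simp; ring
    have hexp : D w (D v fun z => ω z * Lf a b z) z =
        D w (D v ω) z * Bf th0 a z + (z.2 * D w (D v ω) z) * Bf th1 b z +
        D v ω z * Bf (wt0 w) (Polynomial.derivative a) z + D v ω z * Bf (wt1 w) b z +
        D w ω z * Bf (wt0 v) (Polynomial.derivative a) z + D w ω z * Bf (wt1 v) b z +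
        -(ω z / z.2) * Bf (wt2 w (wt0 v)) (Polynomial.derivative a) z +
        -(ω z / z.2) * Bf (wt2 w (wt1 v)) b z := by
      have g1 : (D v fun z => ω z * Lf a b z) = fun z => D v ω z * Lf a b z + ω z * D v (Lf a b) z :=
        funext fun z => D_mul (hω.differentiableAt z) (hL.differentiableAt z)
      have u1 := hω.differentiableAt z
      have u2 := (hω.D v).differentiableAt z
      have u3 := hL.differentiableAt z
      have u4 := (hL.D v).differentiableAt z
      have g2 := D_D_Lf a b v w z
      rw [g1, D_add (u2.fun_mul u3) (u1.fun_mul u4), D_mul u2 u3, D_mul u1 u4, D_Lf, D_Lf,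
        show D w (D v (Lf a b)) z = -(Bf (wt2 w (wt0 v)) (Polynomial.derivative a) z +
          Bf (wt2 w (wt1 v)) b z) / z.2 by rw [← g2]; field_simp, Lf]
      field_simp
      ring
    have c3 (c : ℝ) (u : ℝ × ℝ) (hu : u ∈ dirs) (p : ℝ × ℝ) (hp : p ∈ cone z) :
        |D u ω z| ≤ c0 * (ω p * W p) := by
      have h1 := hW.dz z hz p hp u hu
      have h2 := mul_nonneg (hW.pos z hz p hp).le (hW.nonneg z hz p hp)
      nlinarith
    have c4 (p : ℝ × ℝ) (hp : p ∈ cone z) : |-(ω z / z.2)| * z.2 ≤ ω p := by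
      rw [abs_neg, abs_div, abs_of_pos hy, div_mul_cancel₀ _ hy.ne']
      exact hW.zle z hz p hp
    have s1 := lift_term0 h1c hW hz hω hφ k1 t0
      (fun p hp => hW.ddz z hz p hp v hv w hw)
    have s2 := lift_term1 (c := z.2 * D w (D v ω) z) h1c hW hz hω hφ k2 e2_mem t2 (fun p hp => by
      have h1 := hW.ddz z hz p hp v hv w hw
      have h2 := mul_nonneg (hW.pos z hz p hp).le (hW.nonneg z hz p hp)
      rw [abs_mul, abs_of_pos hy]
      calc _ ≤ z.2 * (ω p * W p ^ 2) := by gcongr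
        _ = (z.2 * W p) * (ω p * W p) := by ring
        _ ≤ _ := by gcongr; exact hW.le z hz p hp)
    have s3 := lift_term1 h1c hW hz hω hφ k5 e1_mem t1 (c3 0 v hv)
    have s4 := lift_term1 h1c hW hz hω hφ k6 e2_mem t2 (c3 0 v hv)
    have s5 := lift_term1 h1c hW hz hω hφ k3 e1_mem t1 (c3 0 w hw)
    have s6 := lift_term1 h1c hW hz hω hφ k4 e2_mem t2 (c3 0 w hw)
    have s7 := lift_term2 h1c hW hz hω hφ k7 e1_mem (int_wt2_0 v w) t1 c4
    have s8 := lift_term2 h1c hW hz hω hφ k8 e2_mem (int_wt2_1 v w) t2 c4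
    rw [hexp, hK]
    push_cast
    simp only [add_mul]
    exact (enorm_add_le _ _).trans (add_le_add ((enorm_add_le _ _).trans (add_le_add
      ((enorm_add_le _ _).trans (add_le_add ((enorm_add_le _ _).trans (add_le_add
      ((enorm_add_le _ _).trans (add_le_add ((enorm_add_le _ _).trans (add_le_add
      ((enorm_add_le _ _).trans (add_le_add s1 s2)) s3)) s4)) s5)) s6)) s7)) s8)
  calc L2T (D w (D v fun z => ω z * Lf a b z))
      ≤ N2 (fun z => K * Ebd (fun p => 8 * c0 ^ 2 * MM W φ p) z) := N2_mono hpt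
    _ = K ^ 2 * N2 (Ebd (fun p => 8 * c0 ^ 2 * MM W φ p)) := N2_const_mul _ _
    _ ≤ K ^ 2 * (16 * L2T (fun p => 8 * c0 ^ 2 * MM W φ p)) := by gcongr; exact N2_PP_AV hM
    _ = _ := by rw [L2T_const_mul]; push_cast; ring

/-! ### Potentials of divergence-free polynomial fields -/

theorem L2T_mono {f g : ℝ × ℝ → ℝ} (h : ∀ z ∈ T, |f z| ≤ |g z|) : L2T f ≤ L2T g :=
  N2_mono fun z hz => by
    rw [← ofReal_norm, ← ofReal_norm]; exact ENNReal.ofReal_le_ofReal (h z hz)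

theorem L2T_add_le {f g : ℝ × ℝ → ℝ} (hf : Measurable f) {A B : ℝ≥0} {Q : ℝ≥0∞}
    (hA : L2T f ≤ A * Q) (hB : L2T g ≤ B * Q) :
    L2T (fun z => f z + g z) ≤ ((2 * (A + B) : ℝ≥0) : ℝ≥0∞) * Q := by
  refine (L2T_add hf).trans ?_
  push_cast
  rw [mul_assoc, add_mul]
  gcongr

theorem L2T_abs (f : ℝ × ℝ → ℝ) : L2T (fun z => |f z|) = L2T f := by simp [L2T]

theorem L2T_abs_add_le {f g h : ℝ × ℝ → ℝ} (hf : Measurable f) {A B : ℝ≥0} {Q : ℝ≥0∞}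
    (hA : L2T f ≤ A * Q) (hB : L2T g ≤ B * Q) (hh : ∀ z ∈ T, |h z| ≤ |f z| + |g z|) :
    L2T h ≤ ((2 * (A + B) : ℝ≥0) : ℝ≥0∞) * Q := by
  refine le_trans (L2T_mono fun z hz => ?_) (L2T_add_le (measurable_norm.comp hf)
    ((L2T_abs f).trans_le hA) ((L2T_abs g).trans_le hB))
  exact (hh z hz).trans (le_abs_self _)

/-- A divergence-free polynomial field `(a, b)` is the curl of a polynomial `φ`. -/
theorem exists_potential {k : ℕ} {a b : ℝ × ℝ → ℝ} (ha : IsPoly k a) (hb : IsPoly k b)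
    (hdiv : ∀ z, D e1 a z + D e2 b z = 0) :
    ∃ φ, IsPoly (k + 1) φ ∧ (∀ z, D e2 φ z = a z) ∧ (∀ z, D e1 φ z = -b z) ∧ φ (0, 0) = 0 := by
  have hfst : PolyFam (Ω := ℝ) 1 (fun s z => s * z.1) := by
    simpa using PolyFam.affine (Ω := ℝ) (a := fun _ => 0) (b := fun s => s)
      (c := fun _ => 0) (by fun_prop) (by fun_prop) (by fun_prop)
  have hsnd : PolyFam (Ω := ℝ) 1 (fun s z => s * z.2) := by
    simpa using PolyFam.affine (Ω := ℝ) (a := fun _ => 0) (b := fun _ => 0)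
      (c := fun s => s) (by fun_prop) (by fun_prop) (by fun_prop)
  have fam {f : ℝ × ℝ → ℝ} (hf : IsPoly k f) : PolyFam (Ω := ℝ) k
      (fun s z => f (s * z.1, s * z.2)) := PolyFam.comp hf hfst hsnd
  let I (f : ℝ × ℝ → ℝ) (z : ℝ × ℝ) : ℝ := ∫ s in Set.Ioc (0 : ℝ) 1, f (s * z.1, s * z.2)
  have hI {f : ℝ × ℝ → ℝ} (hf : IsPoly k f) : IsPoly k (I f) := (fam hf).integral integrable_Ioc
  have hDI {f : ℝ × ℝ → ℝ} (hf : IsPoly k f) (v z : ℝ × ℝ) : D v (I f) z =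
      ∫ s in (0 : ℝ)..1, s * (v.1 * D e1 f (s * z.1, s * z.2) + v.2 * D e2 f (s * z.1, s * z.2)) := by
    rw [(fam hf).D_integral integrable_Ioc, intervalIntegral.integral_of_le zero_le_one]
    refine integral_congr_ae (Filter.Eventually.of_forall fun s => ?_)
    simp only
    rw [D_comp (hf.differentiableAt _) (by fun_prop) (by fun_prop),
      D_const_mul (by fun_prop), D_const_mul (by fun_prop), D_fst, D_snd]
    ring
  have c1 {f : ℝ × ℝ → ℝ} {m : ℕ} (hf : IsPoly m f) (z : ℝ × ℝ) :
      Continuous fun s : ℝ => f (s * z.1, s * z.2) := hf.cont.comp (by fun_prop)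
  have ftc {f : ℝ × ℝ → ℝ} (hf : IsPoly k f) (z : ℝ × ℝ) : f z =
      I f z + ∫ s in (0 : ℝ)..1, s * (z.1 * D e1 f (s * z.1, s * z.2) +
        z.2 * D e2 f (s * z.1, s * z.2)) := by
    have k1 := c1 hf z
    have k2 := c1 (hf.D e1) z
    have k3 := c1 (hf.D e2) z
    have k4 : Continuous fun s : ℝ => s * (z.1 * D e1 f (s * z.1, s * z.2) +
        z.2 * D e2 f (s * z.1, s * z.2)) := continuous_id.mul ((continuous_const (y := z.1).mul k2).add (continuous_const (y := z.2).mul k3))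
    simp only [I]
    rw [← intervalIntegral.integral_of_le zero_le_one, ← intervalIntegral.integral_add
      (k1.intervalIntegrable _ _) (k4.intervalIntegrable _ _),
      intervalIntegral.integral_eq_sub_of_hasDerivAt
      (f := fun s => s * f (s * z.1, s * z.2)) (fun s _ => ?_)
      ((k1.fun_add k4).intervalIntegrable _ _)]
    · simp
    · have h1 := hf.hasDerivAt_comp (a := fun s => s * z.1) (b := fun s => s * z.2) (t := s)
        ((hasDerivAt_id s).mul_const _) ((hasDerivAt_id s).mul_const _)
      exact ((hasDerivAt_id s).mul h1).congr_deriv (by simp)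
  have dA := fun z => (hI ha).differentiableAt z
  have dB := fun z => (hI hb).differentiableAt z
  have hexp (v z : ℝ × ℝ) : D v (fun z => z.2 * I a z - z.1 * I b z) z =
      (v.2 * I a z + z.2 * D v (I a) z) - (v.1 * I b z + z.1 * D v (I b) z) := by
    rw [D_sub (differentiableAt_snd.fun_mul (dA z)) (differentiableAt_fst.fun_mul (dB z)),
      D_mul differentiableAt_snd (dA z), D_mul differentiableAt_fst (dB z), D_fst, D_snd]
  refine ⟨fun z => z.2 * I a z - z.1 * I b z, ?_, fun z => ?_, fun z => ?_, by simp⟩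
  · exact ((IsPoly.snd.mul (hI ha)).mono (by omega)).sub ((IsPoly.fst.mul (hI hb)).mono (by omega))
  all_goals
    have k1 := c1 (ha.D e1) z
    have k2 := c1 (ha.D e2) z
    have k3 := c1 (hb.D e1) z
    have k4 := c1 (hb.D e2) z
    have hfun (c0 c1 : ℝ) {f g : ℝ → ℝ} (hf : Continuous f) (hg : Continuous g) :
      IntervalIntegrable (fun s => s * (c0 * f s + c1 * g s)) volume 0 1 :=
      Continuous.intervalIntegrable (by fun_prop) _ _
    rw [hexp, hDI ha, hDI hb]
  · have e : z.2 * (∫ s in (0 : ℝ)..1, s * (0 * D e1 a (s * z.1, s * z.2) +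
        1 * D e2 a (s * z.1, s * z.2))) - z.1 * (∫ s in (0 : ℝ)..1, s *
        (0 * D e1 b (s * z.1, s * z.2) + 1 * D e2 b (s * z.1, s * z.2))) =
        ∫ s in (0 : ℝ)..1, s * (z.1 * D e1 a (s * z.1, s * z.2) +
        z.2 * D e2 a (s * z.1, s * z.2)) := by
      rw [← intervalIntegral.integral_const_mul, ← intervalIntegral.integral_const_mul,
        ← intervalIntegral.integral_sub ((hfun 0 1 k1 k2).const_mul _)
          ((hfun 0 1 k3 k4).const_mul _)]
      refine intervalIntegral.integral_congr fun s _ => ?_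
      have := hdiv (s * z.1, s * z.2)
      linear_combination (-s * z.1) * this
    have := ftc ha z
    linarith
  · have e : z.1 * (∫ s in (0 : ℝ)..1, s * (1 * D e1 b (s * z.1, s * z.2) +
        0 * D e2 b (s * z.1, s * z.2))) - z.2 * (∫ s in (0 : ℝ)..1, s *
        (1 * D e1 a (s * z.1, s * z.2) + 0 * D e2 a (s * z.1, s * z.2))) =
        ∫ s in (0 : ℝ)..1, s * (z.1 * D e1 b (s * z.1, s * z.2) +
        z.2 * D e2 b (s * z.1, s * z.2)) := by
      rw [← intervalIntegral.integral_const_mul, ← intervalIntegral.integral_const_mul,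
        ← intervalIntegral.integral_sub ((hfun 1 0 k3 k4).const_mul _)
          ((hfun 1 0 k1 k2).const_mul _)]
      refine intervalIntegral.integral_congr fun s _ => ?_
      have := hdiv (s * z.1, s * z.2)
      linear_combination (-s * z.2) * this
    have := ftc hb z
    linarith

theorem D_comm {n : ℕ} {F : ℝ × ℝ → ℝ} (hF : IsPoly n F) (v w z : ℝ × ℝ) :
    D v (D w F) z = D w (D v F) z := by
  have h := (hF.contDiff (m := 2)).contDiffAt (x := z)
  have hs : IsSymmSndFDerivAt ℝ F z := h.isSymmSndFDerivAt (by simp)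
  have hd : DifferentiableAt ℝ (fderiv ℝ F) z :=
    (h.fderiv_right (m := 1) (by norm_num)).differentiableAt one_ne_zero
  have key (v w : ℝ × ℝ) : D v (D w F) z = fderiv ℝ (fderiv ℝ F) z v w := by
    have := hd.hasFDerivAt.clm_apply (hasFDerivAt_const w z)
    change fderiv ℝ (fun y => fderiv ℝ F y w) z v = _
    rw [this.fderiv]
    simp
  rw [key, key]
  exact hs v w

/-! ### Correction by the curl of a lifting -/

/-- The three contributions to `MM W φ` can be estimated separately. -/
theorem MM_bound {W φ : ℝ × ℝ → ℝ} {n : ℕ} (hφ : IsPoly n φ) (hW : Measurable W) {B0 B1 B2 : ℝ≥0}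
    {Q : ℝ≥0∞} (h0 : ∀ v ∈ dirs, ∀ w ∈ dirs, L2T (D w (D v φ)) ≤ B0 * Q)
    (h1 : L2T (fun z => W z * (|D e1 φ z| + |D e2 φ z|)) ≤ B1 * Q)
    (h2 : L2T (fun z => W z ^ 2 * |φ z|) ≤ B2 * Q) :
    L2T (MM W φ) ≤
      ((2 * (2 * (2 * (2 * (2 * (B0 + B0) + B0) + B0) + B1) + B2) : ℝ≥0) : ℝ≥0∞) * Q := by
  have m1 := (hφ.D e1).meas
  have m2 := (hφ.D e2).meas
  have m3 := ((hφ.D e1).D e1).meas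
  have m4 := ((hφ.D e2).D e1).meas
  have m5 := ((hφ.D e1).D e2).meas
  have m6 := ((hφ.D e2).D e2).meas
  have k1 := (L2T_abs _).trans_le (h0 e1 e1_mem e1 e1_mem)
  have k2 := (L2T_abs _).trans_le (h0 e2 e2_mem e1 e1_mem)
  have k3 := (L2T_abs _).trans_le (h0 e1 e1_mem e2 e2_mem)
  have k4 := (L2T_abs _).trans_le (h0 e2 e2_mem e2 e2_mem)
  exact L2T_add_le (by fun_prop) (L2T_add_le (by fun_prop) (L2T_add_le (by fun_prop)
    (L2T_add_le (by fun_prop) (L2T_add_le (by fun_prop) k1 k2) k3) k4) h1) h2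

theorem L2T_sub_le {f g : ℝ × ℝ → ℝ} (hf : Measurable f) {A B : ℝ≥0} {Q : ℝ≥0∞}
    (hA : L2T f ≤ A * Q) (hB : L2T g ≤ B * Q) :
    L2T (fun z => f z - g z) ≤ ((2 * (A + B) : ℝ≥0) : ℝ≥0∞) * Q :=
  L2T_abs_add_le hf hA hB fun _ _ => abs_sub _ _

theorem Sol.bound {k : ℕ} {q u1 u2 : ℝ × ℝ → ℝ} {C : ℝ≥0} (h : Sol k q C u1 u2) {v : ℝ × ℝ}
    (hv : v ∈ dirs) : L2T (D v u1) ≤ C * L2T q ∧ L2T (D v u2) ≤ C * L2T q := by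
  rcases hv with rfl | rfl
  exacts [⟨h.b11, h.b21⟩, ⟨h.b12, h.b22⟩]

/-- The difference of two right inverses is the curl of a polynomial `φ`. -/
theorem Sol.potential {k : ℕ} {q u1 u2 w1 w2 : ℝ × ℝ → ℝ} {C C' : ℝ≥0} (hu : Sol k q C u1 u2)
    (hw : Sol k q C' w1 w2) :
    ∃ φ, IsPoly (k + 1) φ ∧ (∀ z, D e2 φ z = u1 z - w1 z) ∧ (∀ z, D e1 φ z = w2 z - u2 z) ∧
      φ (0, 0) = 0 ∧
      ∀ v ∈ dirs, ∀ w ∈ dirs, L2T (D w (D v φ)) ≤ ((2 * (C + C') : ℝ≥0) : ℝ≥0∞) * L2T q := by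
  obtain ⟨φ, h1, h2, h3, h4⟩ := exists_potential (hu.poly1.sub hw.poly1) (hu.poly2.sub hw.poly2)
    (fun z => by
      have a1 := hu.div z
      have a2 := hw.div z
      rw [D_sub (hu.poly1.differentiableAt z) (hw.poly1.differentiableAt z),
        D_sub (hu.poly2.differentiableAt z) (hw.poly2.differentiableAt z)]
      linarith)
  refine ⟨φ, h1, h2, fun z => by rw [h3]; ring, h4, fun v hv w hw' => ?_⟩
  have hw1 := (hw.bound hw')
  have hu1 := (hu.bound hw')
  rcases hv with rfl | rfl
  · have e : D w (D e1 φ) = fun z => D w w2 z - D w u2 z := by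
      funext z
      rw [show D e1 φ = fun z => w2 z - u2 z from funext fun z => by rw [h3]; ring,
        D_sub (hw.poly2.differentiableAt z) (hu.poly2.differentiableAt z)]
    rw [e, add_comm C C']
    exact L2T_sub_le (hw.poly2.D w).meas hw1.2 hu1.2
  · have e : D w (D e2 φ) = fun z => D w u1 z - D w w1 z := by
      funext z
      rw [show D e2 φ = fun z => u1 z - w1 z from funext h2,
        D_sub (hu.poly1.differentiableAt z) (hw.poly1.differentiableAt z)]
    rw [e]
    exact L2T_sub_le (hu.poly1.D w).meas hu1.1 hw1.1

/-- Subtracting the curl of the weighted lifting `ω * Lf a b` preserves the divergence, and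
`lift_bound` preserves the bounds. -/
theorem sol_correct {c0 : ℝ} (h1c : 1 ≤ c0) :
    ∃ Cl : ℝ≥0, ∀ {k : ℕ} {q u1 u2 : ℝ × ℝ → ℝ} {C Cm : ℝ≥0}, Sol k q C u1 u2 →
      ∀ {ω W φ : ℝ × ℝ → ℝ} {n d : ℕ} {a b : Polynomial ℝ}, IsPoly d ω → IsPoly n φ →
      Wt ω W c0 → (∀ x, φ (x, 0) = ω (x, 0) * a.eval x) →
      (∀ x, D e2 φ (x, 0) = D e2 ω (x, 0) * a.eval x + ω (x, 0) * b.eval x) →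
      IsPoly (k + 1) (fun z => ω z * Lf a b z) → L2T (MM W φ) ≤ Cm * L2T q →
      Sol k q (2 * (C + Cl * Cm)) (fun z => u1 z - D e2 (fun z => ω z * Lf a b z) z)
        (fun z => u2 z - -D e1 (fun z => ω z * Lf a b z) z) := by
  obtain ⟨C1, h1⟩ := lift_bound h1c e1_mem e1_mem
  obtain ⟨C2, h2⟩ := lift_bound h1c e1_mem e2_mem
  obtain ⟨C3, h3⟩ := lift_bound h1c e2_mem e1_mem
  obtain ⟨C4, h4⟩ := lift_bound h1c e2_mem e2_mem
  refine ⟨C1 + C2 + C3 + C4, ?_⟩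
  intro k q u1 u2 C Cm hu ω W φ n d a b hω hφ hW htr htr2 hΦ hm
  replace h1 := h1 ω W φ n d a b hω hφ hW htr htr2
  replace h2 := h2 ω W φ n d a b hω hφ hW htr htr2
  replace h3 := h3 ω W φ n d a b hω hφ hW htr htr2
  replace h4 := h4 ω W φ n d a b hω hφ hW htr htr2
  set Φ : ℝ × ℝ → ℝ := fun z => ω z * Lf a b z
  have hle (i : ℝ≥0) (hi : i ≤ C1 + C2 + C3 + C4) {f : ℝ × ℝ → ℝ} (hf : L2T f ≤ i * L2T (MM W φ)) :
      L2T f ≤ (((C1 + C2 + C3 + C4) * Cm : ℝ≥0) : ℝ≥0∞) * L2T q := by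
    refine hf.trans ?_
    rw [ENNReal.coe_mul, mul_assoc]
    gcongr
  have hi1 : C1 ≤ C1 + C2 + C3 + C4 := by rw [add_assoc, add_assoc]; exact le_self_add
  have hi2 : C2 ≤ C1 + C2 + C3 + C4 := by
    rw [add_assoc, add_assoc, add_left_comm]; exact le_self_add
  have hi3 : C3 ≤ C1 + C2 + C3 + C4 := by rw [add_right_comm]; exact le_add_self
  have hi4 : C4 ≤ C1 + C2 + C3 + C4 := le_add_self
  have d1 := fun z => (hΦ.D e1).differentiableAt z
  have d2 := fun z => (hΦ.D e2).differentiableAt z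
  have f1 (v : ℝ × ℝ) : D v (fun z => u1 z - D e2 Φ z) = fun z => D v u1 z - D v (D e2 Φ) z :=
    funext fun z => D_sub (hu.poly1.differentiableAt z) (d2 z)
  have f2 (v : ℝ × ℝ) : D v (fun z => u2 z - -D e1 Φ z) = fun z => D v u2 z - -D v (D e1 Φ) z :=
    funext fun z => by
      rw [D_sub (hu.poly2.differentiableAt z) (d1 z).fun_neg, D_neg]
  refine ⟨hu.poly1.sub (hΦ.D e2), hu.poly2.sub (hΦ.D e1).neg, fun z => ?_, ?_, ?_, ?_, ?_⟩
  · rw [f1, f2]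
    have := hu.div z
    have := D_comm hΦ e1 e2 z
    simp only
    linarith
  · rw [f1]; exact L2T_sub_le (hu.poly1.D _).meas hu.b11 (hle _ hi3 h3)
  · rw [f1]; exact L2T_sub_le (hu.poly1.D _).meas hu.b12 (hle _ hi4 h4)
  · rw [f2]; exact L2T_sub_le (hu.poly2.D _).meas hu.b21 ((L2T_neg _).trans_le (hle _ hi1 h1))
  · rw [f2]; exact L2T_sub_le (hu.poly2.D _).meas hu.b22 ((L2T_neg _).trans_le (hle _ hi2 h2))

/-- The lifting has the same gradient as `φ` on the edge `y = 0`. -/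
theorem lift_trace {ω φ : ℝ × ℝ → ℝ} {n d : ℕ} {a b : Polynomial ℝ} (hω : IsPoly d ω)
    (hφ : IsPoly n φ) (htr : ∀ x, φ (x, 0) = ω (x, 0) * a.eval x)
    (htr2 : ∀ x, D e2 φ (x, 0) = D e2 ω (x, 0) * a.eval x + ω (x, 0) * b.eval x) (x : ℝ) :
    D e1 (fun z => ω z * Lf a b z) (x, 0) = D e1 φ (x, 0) ∧
      D e2 (fun z => ω z * Lf a b z) (x, 0) = D e2 φ (x, 0) := by
  have hL : IsPoly (a.natDegree + b.natDegree + 1) (Lf a b) := Lf_isPoly (by omega) (by omega)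
  constructor
  · have d1 := hφ.hasDerivAt_comp (a := fun t => t) (b := fun _ => 0) (hasDerivAt_id x)
      (hasDerivAt_const x 0)
    have d2 := (hω.mul hL).hasDerivAt_comp (a := fun t => t) (b := fun _ => 0) (hasDerivAt_id x)
      (hasDerivAt_const x 0)
    have e : (fun t => φ (t, 0)) = fun t => ω (t, 0) * Lf a b (t, 0) :=
      funext fun t => by rw [htr, Lf_trace]
    rw [e] at d1
    simpa using d2.unique d1
  · rw [D_mul (hω.differentiableAt _) (hL.differentiableAt _), Lf_trace, D_Lf_trace, htr2]

/-! ### The weights `x²` and `x² (1 - x - y)²` -/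

theorem D_sq {n : ℕ} {g : ℝ × ℝ → ℝ} (hg : IsPoly n g) (v z : ℝ × ℝ) :
    D v (fun z => g z ^ 2) z = 2 * (g z * D v g z) := by
  have := hg.differentiableAt z
  simp only [pow_two]
  rw [D_mul this this]; ring

theorem D_D_sq {n : ℕ} {g : ℝ × ℝ → ℝ} (hg : IsPoly n g) (v w z : ℝ × ℝ) :
    D w (D v fun z => g z ^ 2) z = 2 * (D w g z * D v g z + g z * D w (D v g) z) := by
  have h1 := hg.differentiableAt z
  have h2 := (hg.D v).differentiableAt z
  rw [show (D v fun z => g z ^ 2) = fun z => 2 * (g z * D v g z) from funext (D_sq hg v),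
    D_const_mul (h1.fun_mul h2), D_mul h1 h2]

/-- The weight `x²` for the edge `x = 0`. -/
theorem wt_x : Wt (fun z => z.1 ^ 2) (fun z => 10 * (1 / (z.1 + z.2))) 40 := by
  have hD (v z : ℝ × ℝ) : D v (fun z : ℝ × ℝ => z.1 ^ 2) z = 2 * (z.1 * v.1) := by
    rw [D_sq IsPoly.fst, D_fst]
  have hDD (v w z : ℝ × ℝ) : D w (D v fun z : ℝ × ℝ => z.1 ^ 2) z = 2 * (w.1 * v.1) := by
    rw [D_D_sq IsPoly.fst, D_fst, D_fst, show D v (fun z => z.1) = fun _ => v.1 from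
      funext fun z => D_fst v z, D_const]
    ring
  have hdir (v : ℝ × ℝ) (hv : v ∈ dirs) : 0 ≤ v.1 ∧ v.1 ≤ 1 := by
    rcases hv with rfl | rfl <;> simp
  have key (z : ℝ × ℝ) (hz : z ∈ T) (p : ℝ × ℝ) (hp : p ∈ cone z) :
      0 < p.1 ∧ 0 < p.1 + p.2 ∧ 2 ≤ p.1 * (10 * (1 / (p.1 + p.2))) := by
    obtain ⟨h1, h2, h3, h4, h5, h6⟩ := hp
    have := hz.1
    have h7 : 0 < p.1 + p.2 := by linarith
    refine ⟨by linarith, h7, ?_⟩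
    rw [mul_one_div, mul_div_assoc', le_div_iff₀ h7]
    linarith
  have first (z : ℝ × ℝ) (hz : z ∈ T) (p : ℝ × ℝ) (hp : p ∈ cone z) (x : ℝ) (h0 : 0 ≤ x)
      (h1 : x ≤ p.1) (v : ℝ × ℝ) (hv : v ∈ dirs) :
      |2 * (x * v.1)| ≤ p.1 ^ 2 * (10 * (1 / (p.1 + p.2))) := by
    obtain ⟨a, b⟩ := hdir v hv
    obtain ⟨c, d, e⟩ := key z hz p hp
    rw [abs_of_nonneg (by positivity)]
    calc 2 * (x * v.1) ≤ 2 * (p.1 * 1) := by gcongr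
      _ = p.1 * 2 := by ring
      _ ≤ p.1 * (p.1 * (10 * (1 / (p.1 + p.2)))) := by gcongr
      _ = _ := by ring
  have second (z : ℝ × ℝ) (hz : z ∈ T) (p : ℝ × ℝ) (hp : p ∈ cone z) (v : ℝ × ℝ) (hv : v ∈ dirs)
      (w : ℝ × ℝ) (hw : w ∈ dirs) :
      |2 * (w.1 * v.1)| ≤ p.1 ^ 2 * (10 * (1 / (p.1 + p.2))) ^ 2 := by
    obtain ⟨a, b⟩ := hdir v hv
    obtain ⟨a', b'⟩ := hdir w hw
    obtain ⟨c, d, e⟩ := key z hz p hp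
    rw [abs_of_nonneg (by positivity)]
    calc 2 * (w.1 * v.1) ≤ 2 * (1 * 1) := by gcongr
      _ ≤ 2 ^ 2 := by norm_num
      _ ≤ (p.1 * (10 * (1 / (p.1 + p.2)))) ^ 2 := by gcongr
      _ = _ := by ring
  refine ⟨by fun_prop, fun z hz p hp => ?_, fun z hz p hp => ?_, fun z hz p hp => ?_,
    fun z hz p hp => ?_, fun z hz p hp v hv => ?_, fun z hz p hp v hv => ?_,
    fun z hz p hp v hv w hw => ?_, fun z hz p hp v hv w hw => ?_⟩
  · have := (key z hz p hp).1; positivity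
  · have := (key z hz p hp).2.1; positivity
  · have h := (key z hz p hp).2.1
    rw [mul_one_div, mul_div_assoc', div_le_iff₀ h]
    obtain ⟨h1, h2, h3, h4, h5, h6⟩ := hp
    linarith
  · have := hz.1.le
    have := hp.1
    rw [abs_of_nonneg (by positivity)]; gcongr
  · rw [hD]; exact first z hz p hp z.1 hz.1.le hp.1 v hv
  · rw [hD]; exact first z hz p hp p.1 (key z hz p hp).1.le le_rfl v hv
  · rw [hDD]; exact second z hz p hp v hv w hw
  · rw [hDD]; exact second z hz p hp v hv w hw

/-- The product of the affine functions vanishing on the edges `x = 0` and `x + y = 1`. -/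
def gg (z : ℝ × ℝ) : ℝ := z.1 * (1 - z.1 - z.2)

theorem isPoly_zeta : IsPoly 1 (fun z : ℝ × ℝ => 1 - z.1 - z.2) :=
  ((IsPoly.const 1 1).sub IsPoly.fst).sub IsPoly.snd

theorem D_zeta (v z : ℝ × ℝ) : D v (fun z : ℝ × ℝ => 1 - z.1 - z.2) z = -v.1 - v.2 := by
  rw [D_sub (by fun_prop) (by fun_prop), D_sub (by fun_prop) (by fun_prop), D_const, D_fst, D_snd]
  ring

theorem gg_isPoly : IsPoly 2 gg := IsPoly.fst.mul isPoly_zeta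

theorem D_gg (v z : ℝ × ℝ) : D v gg z = v.1 * (1 - z.1 - z.2) + z.1 * (-v.1 - v.2) := by
  rw [show gg = fun z : ℝ × ℝ => z.1 * (1 - z.1 - z.2) from rfl,
    D_mul (by fun_prop) (isPoly_zeta.differentiableAt z), D_fst, D_zeta]

theorem D_D_gg (v w z : ℝ × ℝ) :
    D w (D v gg) z = v.1 * (-w.1 - w.2) + w.1 * (-v.1 - v.2) := by
  rw [show D v gg = fun z => v.1 * (1 - z.1 - z.2) + z.1 * (-v.1 - v.2) from funext (D_gg v),
    D_add (by fun_prop) (by fun_prop), D_const_mul (by fun_prop), D_zeta,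
    D_mul (by fun_prop) (by fun_prop), D_fst, D_const]
  ring

/-- The weight `x² (1 - x - y)²` for the edges `x = 0` and `x + y = 1`. -/
theorem wt_xz : Wt (fun z => gg z ^ 2)
    (fun z => 10 * (1 / (z.1 + z.2)) + 10 * (1 / (1 - z.1))) 80 := by
  have key (z : ℝ × ℝ) (hz : z ∈ T) (p : ℝ × ℝ) (hp : p ∈ cone z) :
      0 < p.1 ∧ 0 < 1 - p.1 - p.2 ∧ 0 < p.1 + p.2 ∧ 0 < 1 - p.1 ∧
      2 ≤ p.1 * (10 * (1 / (p.1 + p.2))) ∧ 2 ≤ (1 - p.1 - p.2) * (10 * (1 / (1 - p.1))) := by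
    obtain ⟨h1, h2, h3, h4, h5, h6⟩ := hp
    have := hz.1
    have := hz.2.2
    have h7 : 0 < p.1 + p.2 := by linarith
    have h8 : 0 < 1 - p.1 := by linarith
    refine ⟨by linarith, by linarith, h7, h8, ?_, ?_⟩
    · rw [mul_one_div, mul_div_assoc', le_div_iff₀ h7]; linarith
    · rw [mul_one_div, mul_div_assoc', le_div_iff₀ h8]; linarith
  have both (z : ℝ × ℝ) (hz : z ∈ T) (p : ℝ × ℝ) (hp : p ∈ cone z) :
      2 * (p.1 + (1 - p.1 - p.2)) ≤ gg p * (10 * (1 / (p.1 + p.2)) + 10 * (1 / (1 - p.1))) := by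
    obtain ⟨a, b, c, d, e, f⟩ := key z hz p hp
    calc 2 * (p.1 + (1 - p.1 - p.2)) = (1 - p.1 - p.2) * 2 + p.1 * 2 := by ring
      _ ≤ (1 - p.1 - p.2) * (p.1 * (10 * (1 / (p.1 + p.2)))) +
          p.1 * ((1 - p.1 - p.2) * (10 * (1 / (1 - p.1)))) := by gcongr
      _ = _ := by unfold gg; ring
  -- both derivative bounds, for a point `s` no farther from the two edges than `p`
  have first (z : ℝ × ℝ) (hz : z ∈ T) (p : ℝ × ℝ) (hp : p ∈ cone z) (s : ℝ × ℝ) (h0 : 0 ≤ s.1)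
      (h1 : s.1 ≤ p.1) (h2 : 0 ≤ 1 - s.1 - s.2) (h3 : 1 - s.1 - s.2 ≤ 1 - p.1 - p.2)
      (v : ℝ × ℝ) (hv : v ∈ dirs) : |gg s| ≤ gg p ∧ |D v gg s| ≤ p.1 + (1 - p.1 - p.2) := by
    obtain ⟨a, b, -⟩ := key z hz p hp
    constructor
    · unfold gg
      rw [abs_of_nonneg (by positivity)]; gcongr
    · rw [D_gg, abs_le]
      rcases hv with rfl | rfl <;> constructor <;> simp only <;> linarith
  have hdd (v : ℝ × ℝ) (hv : v ∈ dirs) (w : ℝ × ℝ) (hw : w ∈ dirs) (z : ℝ × ℝ) :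
      |D w (D v gg) z| ≤ 2 := by
    rw [D_D_gg]
    rcases hv with rfl | rfl <;> rcases hw with rfl | rfl <;> norm_num
  have bd1 (z : ℝ × ℝ) (hz : z ∈ T) (p : ℝ × ℝ) (hp : p ∈ cone z) (s : ℝ × ℝ) (h0 : 0 ≤ s.1)
      (h1 : s.1 ≤ p.1) (h2 : 0 ≤ 1 - s.1 - s.2) (h3 : 1 - s.1 - s.2 ≤ 1 - p.1 - p.2)
      (v : ℝ × ℝ) (hv : v ∈ dirs) : |D v (fun z => gg z ^ 2) s| ≤
      gg p ^ 2 * (10 * (1 / (p.1 + p.2)) + 10 * (1 / (1 - p.1))) := by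
    obtain ⟨a, b, -⟩ := key z hz p hp
    obtain ⟨c, d⟩ := first z hz p hp s h0 h1 h2 h3 v hv
    have e := both z hz p hp
    have f : 0 ≤ gg p := (abs_nonneg _).trans c
    rw [D_sq gg_isPoly, abs_mul, abs_mul, abs_two]
    calc 2 * (|gg s| * |D v gg s|) ≤ 2 * (gg p * (p.1 + (1 - p.1 - p.2))) := by gcongr
      _ = gg p * (2 * (p.1 + (1 - p.1 - p.2))) := by ring
      _ ≤ gg p * (gg p * (10 * (1 / (p.1 + p.2)) + 10 * (1 / (1 - p.1)))) := by gcongr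
      _ = _ := by ring
  have bd2 (z : ℝ × ℝ) (hz : z ∈ T) (p : ℝ × ℝ) (hp : p ∈ cone z) (s : ℝ × ℝ) (h0 : 0 ≤ s.1)
      (h1 : s.1 ≤ p.1) (h2 : 0 ≤ 1 - s.1 - s.2) (h3 : 1 - s.1 - s.2 ≤ 1 - p.1 - p.2)
      (v : ℝ × ℝ) (hv : v ∈ dirs) (w : ℝ × ℝ) (hw : w ∈ dirs) :
      |D w (D v (fun z => gg z ^ 2)) s| ≤
      gg p ^ 2 * (10 * (1 / (p.1 + p.2)) + 10 * (1 / (1 - p.1))) ^ 2 := by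
    obtain ⟨a, b, -⟩ := key z hz p hp
    obtain ⟨c, d⟩ := first z hz p hp s h0 h1 h2 h3 v hv
    obtain ⟨-, d'⟩ := first z hz p hp s h0 h1 h2 h3 w hw
    have e := both z hz p hp
    have f : 0 ≤ gg p := (abs_nonneg _).trans c
    have g := hdd v hv w hw s
    rw [D_D_sq gg_isPoly, abs_mul, abs_two]
    calc 2 * |D w gg s * D v gg s + gg s * D w (D v gg) s|
        ≤ 2 * (|D w gg s| * |D v gg s| + |gg s| * |D w (D v gg) s|) := by
          gcongr
          rw [← abs_mul, ← abs_mul]; exact abs_add_le _ _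
      _ ≤ 2 * ((p.1 + (1 - p.1 - p.2)) * (p.1 + (1 - p.1 - p.2)) + gg p * 2) := by gcongr
      _ ≤ (2 * (p.1 + (1 - p.1 - p.2))) ^ 2 := by
          unfold gg; nlinarith [sq_nonneg p.1, sq_nonneg (1 - p.1 - p.2)]
      _ ≤ (gg p * (10 * (1 / (p.1 + p.2)) + 10 * (1 / (1 - p.1)))) ^ 2 := by gcongr
      _ = _ := by ring
  have hzeta {z p : ℝ × ℝ} (hp : p ∈ cone z) : 1 - z.1 - z.2 ≤ 1 - p.1 - p.2 := by
    linarith [hp.2.2.1]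
  have hz0 {z : ℝ × ℝ} (hz : z ∈ T) : 0 ≤ 1 - z.1 - z.2 := by linarith [hz.2.2]
  refine ⟨by fun_prop, fun z hz p hp => ?_, fun z hz p hp => ?_, fun z hz p hp => ?_,
    fun z hz p hp => ?_, fun z hz p hp v hv => ?_, fun z hz p hp v hv => ?_,
    fun z hz p hp v hv w hw => ?_, fun z hz p hp v hv w hw => ?_⟩
  · have a := (key z hz p hp).1; have b := (key z hz p hp).2.1
    unfold gg; positivity
  · obtain ⟨a, b, c, d, e, f⟩ := key z hz p hp
    positivity
  · obtain ⟨a, b, c, d, e, f⟩ := key z hz p hp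
    have h1 : z.2 * (10 * (1 / (p.1 + p.2))) ≤ 40 := by
      rw [mul_one_div, mul_div_assoc', div_le_iff₀ c]
      obtain ⟨h1, h2, h3, h4, h5, h6⟩ := hp
      linarith
    have h2 : z.2 * (10 * (1 / (1 - p.1))) ≤ 40 := by
      rw [mul_one_div, mul_div_assoc', div_le_iff₀ d]
      obtain ⟨h1, h2, h3, h4, h5, h6⟩ := hp
      linarith
    linarith
  · have h := (first z hz p hp z hz.1.le hp.1 (hz0 hz) (hzeta hp) e1 e1_mem).1
    simp only [abs_pow]
    gcongr
  · exact bd1 z hz p hp z hz.1.le hp.1 (hz0 hz) (hzeta hp) v hv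
  · exact bd1 z hz p hp p (key z hz p hp).1.le le_rfl (key z hz p hp).2.1.le le_rfl v hv
  · exact bd2 z hz p hp z hz.1.le hp.1 (hz0 hz) (hzeta hp) v hv w hw
  · exact bd2 z hz p hp p (key z hz p hp).1.le le_rfl (key z hz p hp).2.1.le le_rfl v hv w hw

/-! ### Affine symmetries of the triangle, and double roots -/

theorem L2T_comp_swap {f : ℝ × ℝ → ℝ} (hf : Measurable f) :
    L2T (fun z => f (z.2, z.1)) ≤ L2T f :=
  N2_comp_swap hf.enorm

/-- The affine map `(x, y) ↦ (x, 1 - x - y)`, which exchanges the edges `y = 0` and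
`x + y = 1`, does not increase `L²(T)` norms. -/
theorem L2T_comp_flip {f : ℝ × ℝ → ℝ} (hf : Measurable f) :
    L2T (fun z => f (z.1, 1 - z.1 - z.2)) ≤ L2T f := by
  have hs : Measurable fun z : ℝ × ℝ => f (z.2, z.1) := by fun_prop
  have h1 : L2T (fun z => f (z.2, 1 - z.1 - z.2)) ≤ L2T (fun z => f (z.2, z.1)) := by
    have := N2_comp_tri (m := fun z => ‖f (z.2, z.1)‖ₑ) hs.enorm (a := -1) (d := 1) (by norm_num)
      (by norm_num) (-1) 1 0 (fun z hz => by
        obtain ⟨h1, h2, h3⟩ := hz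
        refine ⟨?_, ?_, ?_⟩ <;> simp only <;> linarith)
    norm_num at this
    refine le_trans (le_of_eq ?_) this
    rw [L2T]; congr 1; funext z; ring_nf
  refine le_trans (le_of_eq ?_) ((L2T_comp_swap (f := fun z => f (z.2, 1 - z.1 - z.2))
    (by fun_prop)).trans (h1.trans (L2T_comp_swap hf)))
  congr 1; funext z; congr 2; ring

theorem coef_mono {A B : ℝ≥0} (h : A ≤ B) (Q : ℝ≥0∞) : (A : ℝ≥0∞) * Q ≤ B * Q := by gcongr

theorem Sol.measurable {k : ℕ} {q u1 u2 : ℝ × ℝ → ℝ} {C : ℝ≥0} (h : Sol k q C u1 u2) :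
    Measurable q := by
  rw [← funext h.div]; exact (h.poly1.D e1).meas.add (h.poly2.D e2).meas

/-- The Piola transform of a right inverse under `(x, y) ↦ (y, x)`. -/
theorem Sol.of_swap {k : ℕ} {q u1 u2 : ℝ × ℝ → ℝ} {C : ℝ≥0} (hq : Measurable q)
    (h : Sol k (fun z => q (z.2, z.1)) C u1 u2) :
    Sol k q C (fun z => u2 (z.2, z.1)) (fun z => u1 (z.2, z.1)) := by
  have hD (u : ℝ × ℝ → ℝ) (hu : IsPoly k u) :
      D e1 (fun z => u (z.2, z.1)) = (fun z => D e2 u (z.2, z.1)) ∧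
      D e2 (fun z => u (z.2, z.1)) = (fun z => D e1 u (z.2, z.1)) := by
    constructor <;> funext z <;>
      rw [D_comp (hu.differentiableAt _) differentiableAt_snd differentiableAt_fst] <;> simp
  have hb (f : ℝ × ℝ → ℝ) (hf : Measurable f) (hf2 : L2T f ≤ C * L2T (fun z => q (z.2, z.1))) :
      L2T (fun z => f (z.2, z.1)) ≤ C * L2T q :=
    (L2T_comp_swap hf).trans (hf2.trans (by gcongr; exact L2T_comp_swap hq))
  obtain ⟨d11, d12⟩ := hD _ h.poly1
  obtain ⟨d21, d22⟩ := hD _ h.poly2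
  refine ⟨h.poly2.comp IsPoly.snd IsPoly.fst, h.poly1.comp IsPoly.snd IsPoly.fst, fun z => ?_,
    ?_, ?_, ?_, ?_⟩
  · rw [d21, d12, add_comm]; exact h.div _
  · rw [d21]; exact hb _ (h.poly2.D e2).meas h.b22
  · rw [d22]; exact hb _ (h.poly2.D e1).meas h.b21
  · rw [d11]; exact hb _ (h.poly1.D e2).meas h.b12
  · rw [d12]; exact hb _ (h.poly1.D e1).meas h.b11

/-- The Piola transform of a right inverse under `(x, y) ↦ (x, 1 - x - y)`. -/
theorem Sol.of_flip {k : ℕ} {q u1 u2 : ℝ × ℝ → ℝ} {C : ℝ≥0} (hq : Measurable q)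
    (h : Sol k (fun z => q (z.1, 1 - z.1 - z.2)) C u1 u2) :
    Sol k q (16 * C) (fun z => u1 (z.1, 1 - z.1 - z.2))
      (fun z => -u1 (z.1, 1 - z.1 - z.2) - u2 (z.1, 1 - z.1 - z.2)) := by
  have hp (u : ℝ × ℝ → ℝ) (hu : IsPoly k u) : IsPoly k fun z => u (z.1, 1 - z.1 - z.2) :=
    hu.comp IsPoly.fst isPoly_zeta
  have hD (u : ℝ × ℝ → ℝ) (hu : IsPoly k u) (z : ℝ × ℝ) :
      D e1 (fun z => u (z.1, 1 - z.1 - z.2)) z =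
        D e1 u (z.1, 1 - z.1 - z.2) - D e2 u (z.1, 1 - z.1 - z.2) ∧
      D e2 (fun z => u (z.1, 1 - z.1 - z.2)) z = - D e2 u (z.1, 1 - z.1 - z.2) := by
    constructor <;>
      rw [D_comp (hu.differentiableAt _) differentiableAt_fst (isPoly_zeta.differentiableAt z),
        D_zeta] <;> simp
    ring
  have hb (f : ℝ × ℝ → ℝ) (hf : Measurable f)
      (hf2 : L2T f ≤ C * L2T (fun z => q (z.1, 1 - z.1 - z.2))) :
      L2T (fun z => f (z.1, 1 - z.1 - z.2)) ≤ C * L2T q :=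
    (L2T_comp_flip hf).trans (hf2.trans (by gcongr; exact L2T_comp_flip hq))
  have b11 := hb _ (h.poly1.D e1).meas h.b11
  have b12 := hb _ (h.poly1.D e2).meas h.b12
  have b21 := hb _ (h.poly2.D e1).meas h.b21
  have b22 := hb _ (h.poly2.D e2).meas h.b22
  have m11 := (h.poly1.D e1).meas
  have m12 := (h.poly1.D e2).meas
  have m21 := (h.poly2.D e1).meas
  have m22 := (h.poly2.D e2).meas
  have hD2 (v z : ℝ × ℝ) : D v (fun z => -u1 (z.1, 1 - z.1 - z.2) - u2 (z.1, 1 - z.1 - z.2)) z =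
      - D v (fun z => u1 (z.1, 1 - z.1 - z.2)) z - D v (fun z => u2 (z.1, 1 - z.1 - z.2)) z := by
    rw [D_sub ((hp _ h.poly1).neg.differentiableAt z) ((hp _ h.poly2).differentiableAt z), D_neg]
  have hC : 2 * (C + C) ≤ 16 * C := by
    rw [← two_mul, ← mul_assoc]; gcongr; norm_num
  have hC2 : C ≤ 16 * C := le_mul_of_one_le_left' (by norm_num)
  have hC3 : 2 * (2 * (C + C) + 2 * (C + C)) = 16 * C := by ring
  refine ⟨hp _ h.poly1, (hp _ h.poly1).neg.sub (hp _ h.poly2), fun z => ?_, ?_, ?_, ?_, ?_⟩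
  · rw [hD2, (hD _ h.poly1 z).1, (hD _ h.poly1 z).2, (hD _ h.poly2 z).2]
    have := h.div (z.1, 1 - z.1 - z.2)
    simp only [sub_sub_cancel] at this
    rw [← this]; ring
  · rw [funext fun z => (hD _ h.poly1 z).1]
    exact (L2T_sub_le (by fun_prop) b11 b12).trans (coef_mono hC _)
  · rw [funext fun z => (hD _ h.poly1 z).2, L2T_neg]
    exact b12.trans (coef_mono hC2 _)
  · rw [show D e1 (fun z => -u1 (z.1, 1 - z.1 - z.2) - u2 (z.1, 1 - z.1 - z.2)) = fun z =>
        -((D e1 u1 (z.1, 1 - z.1 - z.2) - D e2 u1 (z.1, 1 - z.1 - z.2)) +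
        (D e1 u2 (z.1, 1 - z.1 - z.2) - D e2 u2 (z.1, 1 - z.1 - z.2))) from funext fun z => by
          rw [hD2, (hD _ h.poly1 z).1, (hD _ h.poly2 z).1]; ring, L2T_neg, ← hC3]
    exact L2T_add_le (by fun_prop) (L2T_sub_le (by fun_prop) b11 b12)
      (L2T_sub_le (by fun_prop) b21 b22)
  · rw [funext fun z => (hD2 e2 z).trans
      (by rw [(hD _ h.poly1 z).2, (hD _ h.poly2 z).2, neg_neg, sub_neg_eq_add])]
    exact (L2T_add_le (by fun_prop) b12 b22).trans (coef_mono hC _)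

section roots
variable {f : Polynomial ℝ} {n : ℕ}

theorem sq_dvd_of_double_root {a : ℝ} (h0 : f.eval a = 0) (h1 : f.derivative.eval a = 0) :
    (X - C a) ^ 2 ∣ f := by
  obtain ⟨g, rfl⟩ := Polynomial.dvd_iff_isRoot.2 h0
  obtain ⟨g', rfl⟩ : (X - C a) ∣ g := Polynomial.dvd_iff_isRoot.2 (by
    simpa [Polynomial.derivative_mul] using h1)
  exact ⟨g', by ring⟩

theorem natDegree_of_monic_mul {p h : Polynomial ℝ} (hp : p.Monic) (hn : (p * h).natDegree ≤ n) :
    h.natDegree ≤ n - p.natDegree := by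
  rcases eq_or_ne h 0 with rfl | h0
  · simp
  · rw [hp.natDegree_mul' h0] at hn; omega

theorem exists_double_zero (hn : f.natDegree ≤ n) (h0 : f.eval 0 = 0)
    (h1 : f.derivative.eval 0 = 0) :
    ∃ h : Polynomial ℝ, h.natDegree ≤ n - 2 ∧ f = X ^ 2 * h := by
  obtain ⟨h, rfl⟩ := sq_dvd_of_double_root h0 h1
  rw [Polynomial.C_0, sub_zero] at hn ⊢
  exact ⟨h, by simpa using natDegree_of_monic_mul (Polynomial.monic_X_pow 2) hn, rfl⟩

theorem exists_two_double_zeros (hn : f.natDegree ≤ n) (h0 : f.eval 0 = 0)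
    (h1 : f.derivative.eval 0 = 0) (h2 : f.eval 1 = 0) (h3 : f.derivative.eval 1 = 0) :
    ∃ h : Polynomial ℝ, h.natDegree ≤ n - 4 ∧ f = X ^ 2 * (1 - X) ^ 2 * h := by
  have hc : IsCoprime ((X - C 0 : Polynomial ℝ) ^ 2) ((X - C 1) ^ 2) :=
    (Polynomial.isCoprime_X_sub_C_of_isUnit_sub (by simp)).pow
  obtain ⟨h, rfl⟩ := hc.mul_dvd (sq_dvd_of_double_root h0 h1) (sq_dvd_of_double_root h2 h3)
  have hm : ((X - C 0 : Polynomial ℝ) ^ 2 * (X - C 1) ^ 2).Monic :=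
    ((Polynomial.monic_X_sub_C 0).pow 2).mul ((Polynomial.monic_X_sub_C 1).pow 2)
  have hd : ((X - C 0 : Polynomial ℝ) ^ 2 * (X - C 1) ^ 2).natDegree = 4 := by
    rw [((Polynomial.monic_X_sub_C 0).pow 2).natDegree_mul ((Polynomial.monic_X_sub_C 1).pow 2)]
    rw [Polynomial.natDegree_pow, Polynomial.natDegree_pow, Polynomial.natDegree_X_sub_C,
      Polynomial.natDegree_X_sub_C]
  refine ⟨h, hd ▸ natDegree_of_monic_mul hm hn, ?_⟩
  simp only [Polynomial.C_0, Polynomial.C_1]; ring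

end roots

/-! ### A right inverse vanishing on two edges -/

theorem L2T_const_mul_le (c : ℝ) {f : ℝ × ℝ → ℝ} {A : ℝ≥0} {Q : ℝ≥0∞} (h : L2T f ≤ A * Q) :
    L2T (fun z => c * f z) ≤ ((‖c‖₊ ^ 2 * A : ℝ≥0) : ℝ≥0∞) * Q := by
  rw [L2T_const_mul]; push_cast; rw [mul_assoc]; gcongr

theorem four_mul_le {f : ℝ × ℝ → ℝ} {x : ℝ≥0∞} {A : ℝ≥0} {Q : ℝ≥0∞} (h : x ≤ 4 * L2T f)
    (h2 : L2T f ≤ A * Q) : x ≤ ((4 * A : ℝ≥0) : ℝ≥0∞) * Q := by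
  push_cast; rw [mul_assoc]; exact h.trans (by gcongr)

section traces
variable {n : ℕ} {F : ℝ × ℝ → ℝ} (hF : IsPoly n F)
include hF

theorem trace_deriv {p : Polynomial ℝ} (h : ∀ t, F (t, 0) = p.eval t) (t : ℝ) :
    p.derivative.eval t = D e1 F (t, 0) := by
  have h1 := hF.hasDerivAt_comp (hasDerivAt_id t) (hasDerivAt_const t 0)
  rw [show (fun t => F (id t, 0)) = fun t => p.eval t from funext h] at h1
  simpa using (p.hasDerivAt t).unique h1

theorem D_e1_of_zero_y (h : ∀ x, F (x, 0) = 0) (x : ℝ) : D e1 F (x, 0) = 0 := by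
  simpa using (trace_deriv hF (p := 0) (by simpa using h) x).symm

theorem D_e2_of_zero_x (h : ∀ y, F (0, y) = 0) (y : ℝ) : D e2 F (0, y) = 0 := by
  have h1 := hF.hasDerivAt_comp (hasDerivAt_const y 0) (hasDerivAt_id y)
  rw [show (fun t => F (0, id t)) = fun _ => 0 from funext h] at h1
  simpa using h1.unique (hasDerivAt_const y 0)

theorem D_e1_of_zero_z (h : ∀ y, F (1 - y, y) = 0) (y : ℝ) :
    D e1 F (1 - y, y) = D e2 F (1 - y, y) := by
  have h1 := hF.hasDerivAt_comp ((hasDerivAt_id y).const_sub 1) (hasDerivAt_id y)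
  rw [show (fun t => F (1 - id t, id t)) = fun _ => 0 from funext h] at h1
  have := h1.unique (hasDerivAt_const y 0)
  simp at this
  linarith

end traces

/-- The difference of a field vanishing on one edge and a field vanishing on another, weighted by
the inverse of a function `r` dominating `a` and `b`, which play the role of the distances to these
edges. -/
theorem edge_bound {a b r u1 u2 w1 w2 : ℝ × ℝ → ℝ} {A B : ℝ≥0} {Q : ℝ≥0∞}
    (hma : Measurable a) (hmb : Measurable b) (hu1 : Measurable u1)
    (hu2 : Measurable u2) (hw1 : Measurable w1)
    (ha : ∀ z ∈ T, 0 < a z ∧ a z ≤ r z) (hb : ∀ z ∈ T, 0 < b z ∧ b z ≤ r z)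
    (h1 : L2T (fun z => u1 z / a z) ≤ A * Q) (h2 : L2T (fun z => u2 z / a z) ≤ A * Q)
    (h3 : L2T (fun z => w1 z / b z) ≤ B * Q) (h4 : L2T (fun z => w2 z / b z) ≤ B * Q) :
    L2T (fun z => (|w2 z - u2 z| + |u1 z - w1 z|) / r z) ≤
      ((2 * (2 * (A + A) + 2 * (B + B)) : ℝ≥0) : ℝ≥0∞) * Q := by
  refine L2T_abs_add_le (f := fun z => |u1 z / a z| + |u2 z / a z|)
    (g := fun z => |w1 z / b z| + |w2 z / b z|) ?_
    (L2T_add_le ?_ ((L2T_abs _).trans_le h1) ((L2T_abs _).trans_le h2))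
    (L2T_add_le ?_ ((L2T_abs _).trans_le h3) ((L2T_abs _).trans_le h4)) fun z hz => ?_
  · exact (measurable_norm.comp (hu1.div hma)).add (measurable_norm.comp (hu2.div hma))
  · exact measurable_norm.comp (hu1.div hma)
  · exact measurable_norm.comp (hw1.div hmb)
  obtain ⟨ha0, har⟩ := ha z hz
  obtain ⟨hb0, hbr⟩ := hb z hz
  have hr : 0 < r z := ha0.trans_le har
  rw [abs_div, abs_of_pos hr, abs_of_nonneg (by positivity : 0 ≤ |w2 z - u2 z| + |u1 z - w1 z|),
    abs_of_nonneg (by positivity : 0 ≤ |u1 z / a z| + |u2 z / a z|),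
    abs_of_nonneg (by positivity : 0 ≤ |w1 z / b z| + |w2 z / b z|),
    abs_div, abs_div, abs_div, abs_div, abs_of_pos ha0, abs_of_pos hb0]
  calc (|w2 z - u2 z| + |u1 z - w1 z|) / r z
      ≤ ((|w2 z| + |u2 z|) + (|u1 z| + |w1 z|)) / r z := by
        gcongr <;> exact abs_sub _ _
    _ = (|u1 z| / r z + |u2 z| / r z) + (|w1 z| / r z + |w2 z| / r z) := by ring
    _ ≤ _ := by gcongr

section potential
variable {C C' : ℝ≥0} {k n : ℕ} {q u1 u2 w1 w2 φ : ℝ × ℝ → ℝ}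

/-- The gradient of the correction potential, weighted by the inverse of `x + y`, which is
comparable with the distance to the vertex `(0, 0)`. -/
theorem grad_bound_O (hu : Sol k q C u1 u2) (hw : Sol k q C' w1 w2) (hu1 : ∀ y, u1 (0, y) = 0)
    (hu2 : ∀ y, u2 (0, y) = 0) (hw1 : ∀ x, w1 (x, 0) = 0) (hw2 : ∀ x, w2 (x, 0) = 0)
    (hφ2 : ∀ z, D e2 φ z = u1 z - w1 z) (hφ1 : ∀ z, D e1 φ z = w2 z - u2 z) :
    L2T (fun z => (|D e1 φ z| + |D e2 φ z|) / (z.1 + z.2)) ≤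
      ((2 * (2 * (4 * C + 4 * C) + 2 * (4 * C' + 4 * C')) : ℝ≥0) : ℝ≥0∞) * L2T q := by
  simp only [hφ1, hφ2]
  refine edge_bound (a := fun z => z.1) (b := fun z => z.2) measurable_fst measurable_snd
    hu.poly1.meas hu.poly2.meas hw.poly1.meas (fun z hz => ⟨hz.1, ?_⟩)
    (fun z hz => ⟨hz.2.1, ?_⟩) (four_mul_le (hardy_x hu.poly1 hu1) hu.b11)
    (four_mul_le (hardy_x hu.poly2 hu2) hu.b21) (four_mul_le (hardy_y hw.poly1 hw1) hw.b12)
    (four_mul_le (hardy_y hw.poly2 hw2) hw.b22)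
  · linarith [hz.2.1]
  · linarith [hz.1]

/-- The gradient of the correction potential, weighted by the inverse of `1 - x`, which is
comparable with the distance to the vertex `(1, 0)`. -/
theorem grad_bound_A (hu : Sol k q C u1 u2) (hw : Sol k q C' w1 w2)
    (hu1 : ∀ y, u1 (1 - y, y) = 0) (hu2 : ∀ y, u2 (1 - y, y) = 0)
    (hw1 : ∀ x, w1 (x, 0) = 0) (hw2 : ∀ x, w2 (x, 0) = 0)
    (hφ2 : ∀ z, D e2 φ z = u1 z - w1 z) (hφ1 : ∀ z, D e1 φ z = w2 z - u2 z) :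
    L2T (fun z => (|D e1 φ z| + |D e2 φ z|) / (1 - z.1)) ≤
      ((2 * (2 * (4 * C + 4 * C) + 2 * (4 * C' + 4 * C')) : ℝ≥0) : ℝ≥0∞) * L2T q := by
  simp only [hφ1, hφ2]
  refine edge_bound (a := fun z => 1 - z.1 - z.2) (b := fun z => z.2) (by fun_prop) measurable_snd
    hu.poly1.meas hu.poly2.meas hw.poly1.meas (fun z hz => ⟨?_, ?_⟩)
    (fun z hz => ⟨hz.2.1, ?_⟩) (four_mul_le (hardy_z hu.poly1 hu1) hu.b11)
    (four_mul_le (hardy_z hu.poly2 hu2) hu.b21) (four_mul_le (hardy_y hw.poly1 hw1) hw.b12)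
    (four_mul_le (hardy_y hw.poly2 hw2) hw.b22)
  · linarith [hz.2.2]
  · linarith [hz.2.1]
  · linarith [hz.2.2]

end potential

/-- The correction potential satisfies the hypothesis of the lifting estimate for the edge
`x = 0`. -/
theorem MM_le_x (C C' : ℝ≥0) : ∃ Cm : ℝ≥0, ∀ {k n : ℕ} {q u1 u2 w1 w2 φ : ℝ × ℝ → ℝ},
    Sol k q C u1 u2 → Sol k q C' w1 w2 → (∀ y, u1 (0, y) = 0) → (∀ y, u2 (0, y) = 0) →
    (∀ x, w1 (x, 0) = 0) → (∀ x, w2 (x, 0) = 0) → IsPoly n φ →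
    (∀ z, D e2 φ z = u1 z - w1 z) → (∀ z, D e1 φ z = w2 z - u2 z) → φ (0, 0) = 0 →
    (∀ v ∈ dirs, ∀ w ∈ dirs, L2T (D w (D v φ)) ≤ ((2 * (C + C') : ℝ≥0) : ℝ≥0∞) * L2T q) →
    L2T (MM (fun z => 10 * (1 / (z.1 + z.2))) φ) ≤ Cm * L2T q := by
  refine ⟨_, fun {k n q u1 u2 w1 w2 φ} hu hw hu1 hu2 hw1 hw2 hφ hφ2 hφ1 h0 hb =>
    MM_bound hφ (by fun_prop) hb
      (B1 := ‖(10 : ℝ)‖₊ ^ 2 * (2 * (2 * (4 * C + 4 * C) + 2 * (4 * C' + 4 * C'))))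
      (B2 := ‖(100 : ℝ)‖₊ ^ 2 * (2 * (2 * (4 * C + 4 * C) + 2 * (4 * C' + 4 * C')))) ?_ ?_⟩
  all_goals have h1 := grad_bound_O hu hw hu1 hu2 hw1 hw2 hφ2 hφ1
  · refine le_trans (le_of_eq ?_) (L2T_const_mul_le 10 h1)
    congr 1; funext z; ring
  · refine le_trans (le_of_eq ?_) (L2T_const_mul_le 100
      ((L2T_abs _).trans_le ((hardy_O hφ h0).trans h1)))
    congr 1; funext z; rw [abs_div, abs_of_nonneg (sq_nonneg (z.1 + z.2)), mul_pow,
      _root_.one_div_pow]; ring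

/-- The correction potential satisfies the hypothesis of the lifting estimate for the two edges
`x = 0` and `x + y = 1`. -/
theorem MM_le_xz (C C' : ℝ≥0) : ∃ Cm : ℝ≥0, ∀ {k n : ℕ} {q u1 u2 w1 w2 φ : ℝ × ℝ → ℝ},
    Sol k q C u1 u2 → Sol k q C' w1 w2 → (∀ y, u1 (0, y) = 0) → (∀ y, u2 (0, y) = 0) →
    (∀ y, u1 (1 - y, y) = 0) → (∀ y, u2 (1 - y, y) = 0) →
    (∀ x, w1 (x, 0) = 0) → (∀ x, w2 (x, 0) = 0) → IsPoly n φ →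
    (∀ z, D e2 φ z = u1 z - w1 z) → (∀ z, D e1 φ z = w2 z - u2 z) → φ (0, 0) = 0 →
    φ (1, 0) = 0 →
    (∀ v ∈ dirs, ∀ w ∈ dirs, L2T (D w (D v φ)) ≤ ((2 * (C + C') : ℝ≥0) : ℝ≥0∞) * L2T q) →
    L2T (MM (fun z => 10 * (1 / (z.1 + z.2)) + 10 * (1 / (1 - z.1))) φ) ≤ Cm * L2T q := by
  set K : ℝ≥0 := 2 * (2 * (4 * C + 4 * C) + 2 * (4 * C' + 4 * C')) with hK
  refine ⟨_, fun {k n q u1 u2 w1 w2 φ} hu hw hu1 hu2 hu3 hu4 hw1 hw2 hφ hφ2 hφ1 h0 h1 hb =>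
    MM_bound hφ (by fun_prop) hb
      (B1 := 2 * (‖(10 : ℝ)‖₊ ^ 2 * K + ‖(10 : ℝ)‖₊ ^ 2 * K))
      (B2 := 2 * (‖(200 : ℝ)‖₊ ^ 2 * K + ‖(200 : ℝ)‖₊ ^ 2 * K)) ?_ ?_⟩
  all_goals
    have hO := grad_bound_O hu hw hu1 hu2 hw1 hw2 hφ2 hφ1
    have hA := grad_bound_A hu hw hu3 hu4 hw1 hw2 hφ2 hφ1
    have m0 := hφ.meas
    have m1 := (hφ.D e1).meas
    have m2 := (hφ.D e2).meas
  · refine le_trans (le_of_eq ?_) (L2T_add_le ?_ (L2T_const_mul_le 10 hO)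
      (L2T_const_mul_le 10 hA))
    · congr 1; funext z; ring
    · exact (((measurable_norm.comp m1).add (measurable_norm.comp m2)).div
        (by fun_prop : Measurable fun z : ℝ × ℝ => z.1 + z.2)).const_mul 10
  · refine L2T_abs_add_le ?_ (L2T_const_mul_le 200 ((hardy_O hφ h0).trans hO))
      (L2T_const_mul_le 200 ((hardy_A hφ h1).trans hA)) fun z hz => ?_
    · fun_prop
    · simp only [abs_mul, abs_div, abs_pow, abs_abs, sq_abs]
      rw [abs_of_pos (by norm_num : (0 : ℝ) < 200)]
      calc _ ≤ 2 * ((10 * (1 / (z.1 + z.2))) ^ 2 + (10 * (1 / (1 - z.1))) ^ 2) * |φ z| := by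
            gcongr; exact add_sq_le
        _ = _ := by rw [mul_pow, mul_pow, _root_.one_div_pow, _root_.one_div_pow]; ring

/-- If `q` vanishes at the origin, there is a stable right inverse of the divergence vanishing on
the two edges meeting there. -/
theorem exists_sol_two_edges : ∃ C : ℝ≥0, ∀ k : ℕ, 2 ≤ k → ∀ q, IsPoly (k - 1) q → q (0, 0) = 0 →
    ∃ u1 u2, Sol k q C u1 u2 ∧ (∀ x, u1 (x, 0) = 0) ∧ (∀ x, u2 (x, 0) = 0) ∧
      (∀ y, u1 (0, y) = 0) ∧ ∀ y, u2 (0, y) = 0 := by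
  obtain ⟨C, hC⟩ := exists_sol_one_edge
  obtain ⟨Cl, hCl⟩ := sol_correct (c0 := 40) (by norm_num)
  obtain ⟨Cm, hCm⟩ := MM_le_x C C
  refine ⟨2 * (C + Cl * Cm), fun k hk q hq hq0 => ?_⟩
  obtain ⟨w1, w2, hw, hw1, hw2⟩ := hC k (by omega) q hq
  obtain ⟨u1, u2, hu, hu1, hu2⟩ : ∃ u1 u2, Sol k q C u1 u2 ∧ (∀ y, u1 (0, y) = 0) ∧
      ∀ y, u2 (0, y) = 0 := by
    obtain ⟨u2, u1, hu, hu2, hu1⟩ := hC k (by omega) _ (hq.comp IsPoly.snd IsPoly.fst)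
    exact ⟨_, _, hu.of_swap hq.meas, hu1, hu2⟩
  obtain ⟨φ, hφ, hφ2, hφ1, hφ0, hφb⟩ := hu.potential hw
  have hMM := hCm hu hw hu1 hu2 hw1 hw2 hφ hφ2 hφ1 hφ0 hφb
  obtain ⟨f, hfn, hf⟩ := hφ.exists_trace
  obtain ⟨g, hgn, hg⟩ := (hφ.D e2).exists_trace
  have hf' := trace_deriv hφ hf
  have hg' := trace_deriv (hφ.D e2) hg
  obtain ⟨a, han, rfl⟩ := exists_double_zero hfn (by rw [← hf, hφ0])
    (by rw [hf', hφ1, hw2]; simp [hu2])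
  have hg0 : g.eval 0 = 0 := by rw [← hg, hφ2, hw1]; simp [hu1]
  -- at the origin `∂_y u2 = 0`, so that `∂_x ∂_y φ = ∂_x u1 = div u = q = 0` there
  have hg1 : g.derivative.eval 0 = 0 := by
    rw [hg', show D e2 φ = fun z => u1 z - w1 z from funext hφ2,
      D_sub (hu.poly1.differentiableAt _) (hw.poly1.differentiableAt _),
      D_e1_of_zero_y hw.poly1 hw1]
    have := hu.div (0, 0)
    rw [D_e2_of_zero_x hu.poly2 hu2, hq0] at this
    linarith
  obtain ⟨b, hbn, rfl⟩ := exists_double_zero hgn hg0 hg1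
  have hω : IsPoly 2 (fun z : ℝ × ℝ => z.1 ^ 2) := by simpa using IsPoly.fst.pow 2
  have hDω (v z : ℝ × ℝ) : D v (fun z : ℝ × ℝ => z.1 ^ 2) z = 2 * z.1 * v.1 := by
    rw [D_sq IsPoly.fst, D_fst]; ring
  have htr : ∀ x, φ (x, 0) = ((x, (0 : ℝ)) : ℝ × ℝ).1 ^ 2 * a.eval x := fun x => by
    rw [hf]; simp
  have htr2 : ∀ x, D e2 φ (x, 0) = D e2 (fun z : ℝ × ℝ => z.1 ^ 2) (x, 0) * a.eval x +
      ((x, (0 : ℝ)) : ℝ × ℝ).1 ^ 2 * b.eval x := fun x => by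
    rw [hg, hDω]; simp
  have hL : IsPoly (k - 1) (Lf a b) := Lf_isPoly (by omega) (by omega)
  have hΦ : IsPoly (k + 1) (fun z => z.1 ^ 2 * Lf a b z) := (hω.mul hL).mono (by omega)
  have hDΦ (v : ℝ × ℝ) (y : ℝ) : D v (fun z : ℝ × ℝ => z.1 ^ 2 * Lf a b z) (0, y) = 0 := by
    rw [D_mul (hω.differentiableAt _) (hL.differentiableAt _), hDω]; simp
  refine ⟨_, _, hCl hu hω hφ wt_x htr htr2 hΦ hMM, fun x => ?_, fun x => ?_, fun y => ?_,
    fun y => ?_⟩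
  · rw [(lift_trace hω hφ htr htr2 x).2, hφ2, hw1]; ring
  · rw [(lift_trace hω hφ htr htr2 x).1, hφ1, hw2]; ring
  · rw [hDΦ]; simp [hu1]
  · rw [hDΦ]; simp [hu2]

/-- The variant of `exists_sol_two_edges` for the edges meeting at `(0, 1)`. -/
theorem exists_sol_two_edges_flip : ∃ C : ℝ≥0, ∀ k : ℕ, 2 ≤ k → ∀ q, IsPoly (k - 1) q →
    q (0, 1) = 0 → ∃ u1 u2, Sol k q C u1 u2 ∧ (∀ y, u1 (0, y) = 0) ∧ (∀ y, u2 (0, y) = 0) ∧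
      (∀ y, u1 (1 - y, y) = 0) ∧ ∀ y, u2 (1 - y, y) = 0 := by
  obtain ⟨C, hC⟩ := exists_sol_two_edges
  refine ⟨16 * C, fun k hk q hq hq0 => ?_⟩
  obtain ⟨u1, u2, hu, h1, h2, h3, h4⟩ := hC k hk _ (hq.comp IsPoly.fst isPoly_zeta)
    (by simpa using hq0)
  refine ⟨_, _, hu.of_flip hq.meas, fun y => ?_, fun y => ?_, fun y => ?_, fun y => ?_⟩ <;>
    simp [h1, h2, h3, h4]

/-! ### A right inverse vanishing on three edges -/

section mean
variable {f : ℝ × ℝ → ℝ}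

theorem isCompact_Tref : IsCompact Tref := by
  have hc : IsClosed Tref :=
    (isClosed_le continuous_const continuous_fst).inter
      ((isClosed_le continuous_const continuous_snd).inter
        (isClosed_le (continuous_fst.add continuous_snd) continuous_const))
  refine (isCompact_Icc (a := ((0 : ℝ), (0 : ℝ))) (b := (1, 1))).of_isClosed_subset hc ?_
  rintro z ⟨h1, h2, h3⟩
  exact ⟨⟨h1, h2⟩, ⟨by simp only; linarith, by simp only; linarith⟩⟩

theorem integrable_indicator_Tref (hf : Continuous f) : Integrable (Tref.indicator f) :=
  (hf.continuousOn.integrableOn_compact isCompact_Tref).integrable_indicator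
    isCompact_Tref.isClosed.measurableSet

theorem integral_slice (g : ℝ → ℝ) (x : ℝ) :
    ∫ y, {y | 0 ≤ x ∧ 0 ≤ y ∧ x + y ≤ 1}.indicator g y =
      (Set.Icc 0 1).indicator (fun x => ∫ y in (0 : ℝ)..1 - x, g y) x := by
  by_cases hx : x ∈ Set.Icc (0 : ℝ) 1
  · rw [Set.indicator_of_mem hx, intervalIntegral.integral_of_le (by linarith [hx.2]),
      ← integral_Icc_eq_integral_Ioc, ← integral_indicator measurableSet_Icc]
    rw [show {y : ℝ | 0 ≤ x ∧ 0 ≤ y ∧ x + y ≤ 1} = Set.Icc 0 (1 - x) from ?_]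
    ext y
    simp only [Set.mem_ofPred_eq, Set.mem_Icc]
    exact ⟨fun h => ⟨h.2.1, by linarith⟩, fun h => ⟨hx.1, h.1, by linarith⟩⟩
  · rw [Set.indicator_of_notMem hx]
    rw [show {y : ℝ | 0 ≤ x ∧ 0 ≤ y ∧ x + y ≤ 1} = ∅ from ?_]
    · simp
    · ext y
      simp only [Set.mem_ofPred_eq, Set.mem_empty_iff_false, iff_false]
      exact fun h => hx ⟨h.1, by linarith⟩

theorem integral_Tref_y (hf : Continuous f) :
    ∫ z in Tref, f z = ∫ x in (0 : ℝ)..1, ∫ y in (0 : ℝ)..1 - x, f (x, y) := by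
  rw [← integral_indicator isCompact_Tref.isClosed.measurableSet, Measure.volume_eq_prod,
    integral_prod _ (integrable_indicator_Tref hf), intervalIntegral.integral_of_le zero_le_one,
    ← integral_Icc_eq_integral_Ioc, ← integral_indicator measurableSet_Icc]
  congr 1; funext x
  exact (integral_slice (fun y => f (x, y)) x).trans (by by_cases h : x ∈ Set.Icc (0 : ℝ) 1 <;> simp [h])

theorem integral_Tref_x (hf : Continuous f) :
    ∫ z in Tref, f z = ∫ y in (0 : ℝ)..1, ∫ x in (0 : ℝ)..1 - y, f (x, y) := by
  rw [← integral_indicator isCompact_Tref.isClosed.measurableSet, Measure.volume_eq_prod,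
    integral_prod_symm _ (integrable_indicator_Tref hf),
    intervalIntegral.integral_of_le zero_le_one,
    ← integral_Icc_eq_integral_Ioc, ← integral_indicator measurableSet_Icc]
  congr 1; funext y
  refine Eq.trans ?_ ((integral_slice (fun x => f (x, y)) y).trans
    (by by_cases h : y ∈ Set.Icc (0 : ℝ) 1 <;> simp [h]))
  congr 1; funext x
  have : (x, y) ∈ Tref ↔ x ∈ {x : ℝ | 0 ≤ y ∧ 0 ≤ x ∧ y + x ≤ 1} := by
    simp only [Tref, Set.mem_ofPred_eq, add_comm x y]; tauto
  by_cases h : (x, y) ∈ Tref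
  · rw [Set.indicator_of_mem h, Set.indicator_of_mem (this.1 h)]
  · rw [Set.indicator_of_notMem h, Set.indicator_of_notMem (this.not.1 h)]

end mean

/-- The divergence theorem for a field vanishing on the edges `x = 0` and `x + y = 1`. -/
theorem flux_eq {n : ℕ} {u1 u2 : ℝ × ℝ → ℝ} (hu1 : IsPoly n u1) (hu2 : IsPoly n u2)
    (h1 : ∀ y, u1 (0, y) = 0) (h2 : ∀ y, u1 (1 - y, y) = 0) (h3 : ∀ y, u2 (1 - y, y) = 0) :
    ∫ z in Tref, (D e1 u1 z + D e2 u2 z) = -∫ x in (0 : ℝ)..1, u2 (x, 0) := by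
  have c1 := (hu1.D e1).cont
  have c2 := (hu2.D e2).cont
  rw [integral_add (c1.continuousOn.integrableOn_compact isCompact_Tref)
    (c2.continuousOn.integrableOn_compact isCompact_Tref), integral_Tref_x c1, integral_Tref_y c2]
  have i1 (y : ℝ) : ∫ x in (0 : ℝ)..1 - y, D e1 u1 (x, y) = 0 := by
    have c : Continuous fun x : ℝ => D e1 u1 (x, y) := c1.comp (by fun_prop)
    rw [intervalIntegral.integral_eq_sub_of_hasDerivAt (f := fun x => u1 (x, y)) (fun x _ => by
      simpa using hu1.hasDerivAt_comp (hasDerivAt_id x) (hasDerivAt_const x y))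
      (c.intervalIntegrable _ _)]
    simp [h1, h2]
  have i2 (x : ℝ) : ∫ y in (0 : ℝ)..1 - x, D e2 u2 (x, y) = - u2 (x, 0) := by
    have c : Continuous fun y : ℝ => D e2 u2 (x, y) := c2.comp (by fun_prop)
    rw [intervalIntegral.integral_eq_sub_of_hasDerivAt (f := fun y => u2 (x, y)) (fun y _ => by
      simpa using hu2.hasDerivAt_comp (hasDerivAt_const y x) (hasDerivAt_id y))
      (c.intervalIntegrable _ _)]
    have := h3 (1 - x)
    rw [sub_sub_cancel] at this
    simp [this]
  simp [i1, i2]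

/-- If `q` has mean zero and vanishes at the vertices, there is a stable right inverse of the
divergence vanishing on all three edges. -/
theorem exists_sol_three_edges : ∃ C : ℝ≥0, ∀ k : ℕ, 4 ≤ k → ∀ q, IsPoly (k - 1) q →
    ∫ z in Tref, q z = 0 → q (0, 0) = 0 → q (1, 0) = 0 → q (0, 1) = 0 →
    ∃ u1 u2, Sol k q C u1 u2 ∧ (∀ x, u1 (x, 0) = 0) ∧ (∀ x, u2 (x, 0) = 0) ∧
      (∀ y, u1 (0, y) = 0) ∧ (∀ y, u2 (0, y) = 0) ∧
      (∀ y, u1 (1 - y, y) = 0) ∧ ∀ y, u2 (1 - y, y) = 0 := by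
  obtain ⟨C, hC⟩ := exists_sol_two_edges_flip
  obtain ⟨C', hC'⟩ := exists_sol_one_edge
  obtain ⟨Cl, hCl⟩ := sol_correct (c0 := 80) (by norm_num)
  obtain ⟨Cm, hCm⟩ := MM_le_xz C C'
  refine ⟨2 * (C + Cl * Cm), fun k hk q hq hqm hq0 hq1 hq2 => ?_⟩
  obtain ⟨w1, w2, hw, hw1, hw2⟩ := hC' k (by omega) q hq
  obtain ⟨u1, u2, hu, hu1, hu2, hu3, hu4⟩ := hC k (by omega) q hq hq2
  obtain ⟨φ, hφ, hφ2, hφ1, hφ0, hφb⟩ := hu.potential hw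
  -- `φ (1, 0) - φ (0, 0)` is the flux of `u` through the edge `y = 0`, that is, the integral of `q`
  have hφA : φ (1, 0) = 0 := by
    have h1 := flux_eq hu.poly1 hu.poly2 hu1 hu3 hu4
    simp only [hu.div, hqm] at h1
    have h2 : ∫ x in (0 : ℝ)..1, D e1 φ (x, 0) = φ (1, 0) - φ (0, 0) :=
      intervalIntegral.integral_eq_sub_of_hasDerivAt (f := fun x => φ (x, 0)) (fun x _ => by
        simpa using hφ.hasDerivAt_comp (hasDerivAt_id x) (hasDerivAt_const x 0))
        (((hφ.D e1).cont.comp (by fun_prop : Continuous fun x : ℝ => (x, (0 : ℝ)))).intervalIntegrable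
          _ _)
    simp only [hφ1, hw2, zero_sub, intervalIntegral.integral_neg, ← h1, hφ0, sub_zero] at h2
    exact h2.symm
  have hMM := hCm hu hw hu1 hu2 hu3 hu4 hw1 hw2 hφ hφ2 hφ1 hφ0 hφA hφb
  have hu31 : u1 (1, 0) = 0 := by simpa using hu3 0
  have hu41 : u2 (1, 0) = 0 := by simpa using hu4 0
  obtain ⟨f, hfn, hf⟩ := hφ.exists_trace
  obtain ⟨g, hgn, hg⟩ := (hφ.D e2).exists_trace
  have hf' := trace_deriv hφ hf
  have hf'' := trace_deriv (hφ.D e1) fun t => (hf' t).symm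
  have hg' := trace_deriv (hφ.D e2) hg
  obtain ⟨a, han, rfl⟩ := exists_two_double_zeros hfn (by rw [← hf, hφ0])
    (by rw [hf', hφ1, hw2]; simp [hu2]) (by rw [← hf, hφA]) (by rw [hf', hφ1, hw2]; simp [hu41])
  have hg0 : g.eval 0 = 0 := by rw [← hg, hφ2, hw1]; simp [hu1]
  have hg1 : g.eval 1 = 0 := by rw [← hg, hφ2, hw1]; simp [hu31]
  have hg'D (x : ℝ) : g.derivative.eval x = D e1 u1 (x, 0) := by
    rw [hg', show D e2 φ = fun z => u1 z - w1 z from funext hφ2,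
      D_sub (hu.poly1.differentiableAt _) (hw.poly1.differentiableAt _),
      D_e1_of_zero_y hw.poly1 hw1, sub_zero]
  have hg'0 : g.derivative.eval 0 = 0 := by
    have := hu.div (0, 0)
    rw [D_e2_of_zero_x hu.poly2 hu2, hq0] at this
    rw [hg'D]; linarith
  -- the vertex condition at `(1, 0)` couples the second derivatives of the two traces
  have hg'1 : g.derivative.eval 1 = 2 * a.eval 1 := by
    have h1 := hf'' 1
    rw [show D e1 φ = fun z => w2 z - u2 z from funext hφ1,
      D_sub (hw.poly2.differentiableAt _) (hu.poly2.differentiableAt _),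
      D_e1_of_zero_y hw.poly2 hw2] at h1
    have h2 := hu.div (1, 0)
    have h3 := D_e1_of_zero_z hu.poly2 hu4 0
    rw [hq1] at h2
    rw [sub_zero] at h3
    rw [hg'D]
    simp [Polynomial.derivative_mul, Polynomial.derivative_pow] at h1
    linarith
  -- `g` is `∂_y φ` on the edge; `2 X² (1 - X) a` cancels the term `(∂_y ω) a` of `∂_y (ω * Lf a b)`
  obtain ⟨b, hbn, hb⟩ := exists_two_double_zeros (f := g + 2 * X ^ 2 * (1 - X) * a) (n := k)
    (by
      refine Polynomial.natDegree_add_le_of_degree_le hgn ?_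
      have h1 : (2 * X ^ 2 * (1 - X) : Polynomial ℝ).natDegree ≤ 3 := by compute_degree
      exact (Polynomial.natDegree_mul_le).trans (by omega))
    (by simp [hg0]) (by simp [hg'0, Polynomial.derivative_mul]) (by simp [hg1])
    (by simp [hg'1, Polynomial.derivative_mul])
  have hω : IsPoly 4 (fun z : ℝ × ℝ => gg z ^ 2) := by simpa using gg_isPoly.pow 2
  have hDω (v z : ℝ × ℝ) : D v (fun z : ℝ × ℝ => gg z ^ 2) z = 2 * (gg z * D v gg z) :=
    D_sq gg_isPoly _ _
  have htr : ∀ x, φ (x, 0) = gg (x, 0) ^ 2 * a.eval x := fun x => by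
    rw [hf]; simp [gg, mul_pow]
  have htr2 : ∀ x, D e2 φ (x, 0) = D e2 (fun z : ℝ × ℝ => gg z ^ 2) (x, 0) * a.eval x +
      gg (x, 0) ^ 2 * b.eval x := fun x => by
    have := congrArg (Polynomial.eval x) hb
    simp at this
    rw [hg, hDω, D_gg]; simp [gg]
    linear_combination this
  have hL : IsPoly (k - 3) (Lf a b) := Lf_isPoly (by omega) (by omega)
  have hΦ : IsPoly (k + 1) (fun z => gg z ^ 2 * Lf a b z) := (hω.mul hL).mono (by omega)
  have hDΦ (v z : ℝ × ℝ) (hz : gg z = 0) : D v (fun z : ℝ × ℝ => gg z ^ 2 * Lf a b z) z = 0 := by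
    rw [D_mul (hω.differentiableAt _) (hL.differentiableAt _), hDω, hz]; simp
  refine ⟨_, _, hCl hu hω hφ wt_xz htr htr2 hΦ hMM, fun x => ?_, fun x => ?_, fun y => ?_,
    fun y => ?_, fun y => ?_, fun y => ?_⟩
  · rw [(lift_trace hω hφ htr htr2 x).2, hφ2, hw1]; ring
  · rw [(lift_trace hω hφ htr htr2 x).1, hφ1, hw2]; ring
  · rw [hDΦ _ _ (by simp [gg])]; simp [hu1]
  · rw [hDΦ _ _ (by simp [gg])]; simp [hu2]
  · rw [hDΦ _ _ (by simp [gg])]; simp [hu3]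
  · rw [hDΦ _ _ (by simp [gg])]; simp [hu4]

/-! ### Poincaré inequality and real-valued norms -/

theorem isOpen_T : IsOpen T :=
  (isOpen_lt continuous_const continuous_fst).inter
    ((isOpen_lt continuous_const continuous_snd).inter
      (isOpen_lt (continuous_fst.add continuous_snd) continuous_const))

theorem T_subset_Tref : T ⊆ Tref := fun _ h => ⟨h.1.le, h.2.1.le, h.2.2.le⟩

theorem edge_of_mem_diff {z : ℝ × ℝ} (h : z ∈ Tref) (h2 : z ∉ T) :
    z.1 = 0 ∨ z.2 = 0 ∨ z.1 = 1 - z.2 := by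
  obtain ⟨h3, h4, h5⟩ := h
  by_contra! h6
  exact h2 ⟨lt_of_le_of_ne h3 (Ne.symm h6.1), lt_of_le_of_ne h4 (Ne.symm h6.2.1),
    lt_of_le_of_ne h5 fun h => h6.2.2 (by linarith)⟩

theorem Tref_ae_eq_T : (Tref : Set (ℝ × ℝ)) =ᵐ[volume] T := by
  refine Filter.EventuallyLE.antisymm ?_ T_subset_Tref.eventuallyLE
  rw [ae_le_set]
  have h1 : volume {z : ℝ × ℝ | z.1 = 0} = 0 := by
    rw [Measure.volume_eq_prod, show {z : ℝ × ℝ | z.1 = 0} = {0} ×ˢ Set.univ by ext; simp,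
      Measure.prod_prod]
    simp
  have h2 : volume {z : ℝ × ℝ | z.2 = 0} = 0 := by
    rw [Measure.volume_eq_prod, show {z : ℝ × ℝ | z.2 = 0} = Set.univ ×ˢ {0} by ext; simp,
      Measure.prod_prod]
    simp
  have h3 : volume {z : ℝ × ℝ | z.1 = 1 - z.2} = 0 := by
    rw [Measure.volume_eq_prod, Measure.measure_prod_null
      (measurableSet_eq_fun measurable_fst (by fun_prop))]
    refine Filter.Eventually.of_forall fun x => ?_
    change volume (Prod.mk x ⁻¹' {z : ℝ × ℝ | z.1 = 1 - z.2}) = 0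
    rw [show Prod.mk x ⁻¹' {z : ℝ × ℝ | z.1 = 1 - z.2} = {1 - x} from ?_]
    · simp
    · ext y
      simp only [Set.mem_preimage, Set.mem_ofPred_eq, Set.mem_singleton_iff]
      constructor <;> intro h <;> linarith
  refine measure_mono_null (fun z hz => ?_) (measure_union_null h1 (measure_union_null h2 h3))
  exact edge_of_mem_diff hz.1 hz.2

theorem IsPoly.integrable_sq {n : ℕ} {f : ℝ × ℝ → ℝ} (hf : IsPoly n f) :
    IntegrableOn (fun z => f z ^ 2) Tref :=
  (hf.cont.pow 2).continuousOn.integrableOn_compact isCompact_Tref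

theorem IsPoly.ofReal_integral_sq {n : ℕ} {f : ℝ × ℝ → ℝ} (hf : IsPoly n f) :
    ENNReal.ofReal (∫ z in Tref, f z ^ 2) = L2T f := by
  rw [ofReal_integral_eq_lintegral_ofReal hf.integrable_sq
    (Filter.Eventually.of_forall fun z => sq_nonneg _), setLIntegral_congr Tref_ae_eq_T, L2T, N2]
  congr 1; funext z
  rw [← sq_abs, ENNReal.ofReal_pow (abs_nonneg _), ← Real.norm_eq_abs, ofReal_norm]

theorem integral_sq_le {n m : ℕ} {f q : ℝ × ℝ → ℝ} (hf : IsPoly n f) (hq : IsPoly m q)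
    {C : ℝ≥0} (h : L2T f ≤ C * L2T q) :
    ∫ z in Tref, f z ^ 2 ≤ C * ∫ z in Tref, q z ^ 2 := by
  rw [← hf.ofReal_integral_sq, ← hq.ofReal_integral_sq, ← ENNReal.ofReal_coe_nnreal,
    ← ENNReal.ofReal_mul C.coe_nonneg] at h
  exact (ENNReal.ofReal_le_ofReal_iff (mul_nonneg C.coe_nonneg
    (integral_nonneg fun z => sq_nonneg _))).1 h

/-- The Poincaré inequality for functions vanishing on the edge `x = 0`; as `x ≤ 1` on the triangle,
it is a consequence of Hardy's inequality. -/
theorem poincare {n : ℕ} {u : ℝ × ℝ → ℝ} (hu : IsPoly n u) (h0 : ∀ y, u (0, y) = 0) :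
    L2T u ≤ 4 * L2T (D e1 u) := by
  refine le_trans (L2T_mono fun z hz => ?_) (hardy_x hu h0)
  rw [abs_div, abs_of_pos hz.1]
  exact le_div_self (abs_nonneg _) hz.1 (by linarith [hz.2.1, hz.2.2])

end Tri
open Tri

/-- Uniform (in the polynomial degree) right inverse of the divergence on the reference
element: there is `β ∈ (0,1)` such that for all `k ≥ 4` and all `q ∈ Q_I(T̂)` there is
`v ∈ V_I(T̂)` with `div v = q` and `‖v‖_{L²(T̂)} + |v|_{H¹(T̂)} ≤ β⁻¹ ‖q‖_{L²(T̂)}`. -/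
theorem uniform_divergence_right_inverse :
    ∃ β : ℝ, 0 < β ∧ β < 1 ∧ ∀ k : ℕ, 4 ≤ k → ∀ q ∈ QI k, ∃ v ∈ VI k,
      pdiv v = q ∧
      Real.sqrt (∫ z in Tref, ((v z).1 ^ 2 + (v z).2 ^ 2)) +
          Real.sqrt (∫ z in Tref,
            (gradNormSq (fun w => (v w).1) z + gradNormSq (fun w => (v w).2) z))
        ≤ β⁻¹ * Real.sqrt (∫ z in Tref, (q z) ^ 2) := by

  obtain ⟨C, hC⟩ := exists_sol_three_edges
  have hpos : 1 < √(8 * C) + √(4 * C) + 2 := by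
    have h1 := Real.sqrt_nonneg (8 * C)
    have h2 := Real.sqrt_nonneg (4 * C)
    linarith
  refine ⟨(√(8 * C) + √(4 * C) + 2)⁻¹, by positivity, inv_lt_one_of_one_lt₀ hpos,
    fun k hk q hq => ?_⟩
  obtain ⟨hqp, hqm, hq0, hq1, hq2⟩ := hq
  obtain ⟨u1, u2, hu, hy1, hy2, hx1, hx2, hz1, hz2⟩ := hC k hk q hqp hqm hq0 hq1 hq2
  refine ⟨fun z => (u1 z, u2 z), ⟨hu.poly1, hu.poly2, fun z hz => ?_⟩, funext hu.div, ?_⟩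
  · have hzT : z ∈ Tref := isCompact_Tref.isClosed.frontier_subset hz
    obtain ⟨x, y⟩ := z
    rcases edge_of_mem_diff hzT fun h =>
      hz.2 (interior_maximal T_subset_Tref isOpen_T h) with h | h | h <;> simp only at h <;>
      subst h
    · simp [hx1, hx2]
    · simp [hy1, hy2]
    · simp [hz1, hz2]
  have hqp : IsPoly (k - 1) q := hqp
  set I := ∫ z in Tref, q z ^ 2 with hI
  have g11 := (hu.poly1.D e1).integrable_sq
  have g12 := (hu.poly1.D e2).integrable_sq
  have g21 := (hu.poly2.D e1).integrable_sq
  have g22 := (hu.poly2.D e2).integrable_sq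
  have b1 := integral_sq_le hu.poly1 hqp (four_mul_le (poincare hu.poly1 hx1) hu.b11)
  have b2 := integral_sq_le hu.poly2 hqp (four_mul_le (poincare hu.poly2 hx2) hu.b21)
  have b11 := integral_sq_le (hu.poly1.D e1) hqp hu.b11
  have b12 := integral_sq_le (hu.poly1.D e2) hqp hu.b12
  have b21 := integral_sq_le (hu.poly2.D e1) hqp hu.b21
  have b22 := integral_sq_le (hu.poly2.D e2) hqp hu.b22
  have hL : ∫ z in Tref, (u1 z ^ 2 + u2 z ^ 2) ≤ 8 * C * I := by
    rw [integral_add hu.poly1.integrable_sq hu.poly2.integrable_sq]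
    push_cast at b1 b2
    linarith
  have hH : ∫ z in Tref, (gradNormSq u1 z + gradNormSq u2 z) ≤ 4 * C * I := by
    change ∫ z in Tref, ((D e1 u1 z ^ 2 + D e2 u1 z ^ 2) + (D e1 u2 z ^ 2 + D e2 u2 z ^ 2)) ≤ _
    rw [integral_add (by exact g11.add g12) (by exact g21.add g22), integral_add g11 g12, integral_add g21 g22]
    linarith
  rw [inv_inv]
  calc _ ≤ √(8 * C * I) + √(4 * C * I) := add_le_add (Real.sqrt_le_sqrt hL) (Real.sqrt_le_sqrt hH)
    _ = (√(8 * C) + √(4 * C)) * √I := by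
      rw [Real.sqrt_mul (x := 8 * C) (by positivity), Real.sqrt_mul (x := 4 * C) (by positivity),
        add_mul]
    _ ≤ _ := mul_le_mul_of_nonneg_right (by linarith) (Real.sqrt_nonneg _)
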